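/- There exists a constant C > 0 such that for every x₀ ∈ {u = v} and every R ≥ 1, with κ := R⁴ and (u_κ, v_κ) the corresponding rescaled solution, ∫_{B₁} |∇u_κ| |∇v_κ| dx ≤ C κ^{−1/4}. -/

import Mathlib

/-!
The proof works with Gaussian averages `gi φ x t` (the heat semigroup) instead of averages over
balls. With `H` (`HH`) the average of `u² + v²` and `D` (`DD`) the average of
`|∇u|² + |∇v|² + u²v²`, the parabolic Almgren frequency `N = 2tD/H` (`NN`) is nondecreasing in `t`,
and the linear growth of the solution forces `N ≤ 1`. This yields `H(b) ≤ e (b/a) H(a)` for `a ≤ b`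
and a Lipschitz bound for `log H` in space.

The main point is that `H(T)` is comparable to `T`, with constants uniform over the interface
`{u = v}`. At interface points `u²` is smaller than `H(s)` by a negative power of `s H(s)`
(`Sol.interface_small`). Hence, around a balanced point, meaning a point where `u` and `v` have the
same average, a truncation of `u 1_{u>v} - v 1_{u≤v}` is an almost mean-free test function, and the
sharp Gaussian Poincaré inequality `poincare` gives `N ≥ 1 - C (s H)^{-δ}` (`Sol.balanced`). Weighted
maxima of `u` and of `v` produce balanced points near each interface point (`Sol.exists_balanced`).
So `H(t)/t` is almost nondecreasing in `t` at interface points (`Sol.ratio_step`), and telescoping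
over the scales `4^j T` gives `Sol.H_le_lin` and `Sol.H_ge_lin`.

Consequently, at a fixed large scale, the smaller component decays exponentially in the distance `d`
to the interface, faster than the larger one can grow, and so the Gaussian average of `|∇u||∇v|` is
at most `C e^{-2d/√t₁}` (`Sol.decay`, `Sol.grad_decay`). This exponential is in turn bounded by an
exponentially weighted average of the interaction `Δ(u + v) = uv(u + v)` (`Sol.ia_lower`). The
interaction over `B_R(x₀)` is `O(R^{n-1})`, because the average of `u + v` at time `R²` is `O(R)`
(`Sol.ia_upper`). Tonelli's theorem gives the bound `O(R^{n-1})` for the integral of `|∇u||∇v|` over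
`B_R(x₀)` (`Sol.grad_upper`), and rescaling turns it into `O(R⁻¹) = O(κ^{-1/4})`.
-/

open MeasureTheory Metric Set
open scoped RealInnerProductSpace ENNReal

/-- Euclidean space `ℝⁿ`. -/
abbrev Euc (n : ℕ) := EuclideanSpace ℝ (Fin n)

/-- The Laplacian `Δu` of a function `u : ℝⁿ → ℝ`. -/
noncomputable def lap {n : ℕ} (u : Euc n → ℝ) (x : Euc n) : ℝ :=
  ∑ i : Fin n,
    fderiv ℝ (fun y => fderiv ℝ u y (EuclideanSpace.single i 1)) x (EuclideanSpace.single i 1)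

/-- The divergence `div Y = Σ_α ∂Y^α/∂x_α` of a vector field `Y`. -/
noncomputable def vdiv {n : ℕ} (Y : Euc n → Euc n) (x : Euc n) : ℝ :=
  ∑ i : Fin n, fderiv ℝ Y x (EuclideanSpace.single i 1) i

/-- `DY(p,q)(x) = Σ_{α,β} (∂Y^α/∂x_β)(x) p_α q_β`. -/
noncomputable def DYbil {n : ℕ} (Y : Euc n → Euc n) (p q x : Euc n) : ℝ :=
  ∑ α : Fin n, ∑ β : Fin n,
    fderiv ℝ Y x (EuclideanSpace.single β 1) α * p α * q β

/-- The rescaled function `u_κ(x) = R⁻¹ u(x₀ + R x)` (with `κ = R⁴`). -/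
noncomputable def resc {n : ℕ} (u : Euc n → ℝ) (x₀ : Euc n) (R : ℝ) (x : Euc n) : ℝ :=
  R⁻¹ * u (x₀ + R • x)

/-! ### Function classes and Gaussian averages -/

section Basics

variable {n : ℕ}

/-- Functions integrable against every centred Gaussian weight. -/
def GI (φ : Euc n → ℝ) : Prop :=
  ∀ a : ℝ, 0 < a → Integrable (fun z => φ z * Real.exp (-a * ‖z‖ ^ 2))

/-- Continuous functions of sub-Gaussian growth. -/
def SG (ψ : Euc n → ℝ) : Prop :=
  Continuous ψ ∧ ∀ a : ℝ, 0 < a → ∃ C : ℝ, ∀ z, |ψ z| ≤ C * Real.exp (a * ‖z‖ ^ 2)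

/-- The heat kernel `(4πt)^{-n/2} exp(-|y|²/(4t))`. -/
noncomputable def gk (t : ℝ) (y : Euc n) : ℝ :=
  (4 * Real.pi * t) ^ (-(n : ℝ) / 2) * Real.exp (-(‖y‖ ^ 2 / (4 * t)))

/-- The Gaussian average of `φ` around `x` at time `t`, i.e. the heat semigroup applied to `φ`. -/
noncomputable def gi (φ : Euc n → ℝ) (x : Euc n) (t : ℝ) : ℝ :=
  ∫ z, φ z * gk t (z - x)

lemma SG.continuous {ψ : Euc n → ℝ} (h : SG ψ) : Continuous ψ := h.1

lemma SG.of_exp {ψ : Euc n → ℝ} (hc : Continuous ψ) (C k : ℝ)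
    (h : ∀ z, |ψ z| ≤ C * Real.exp (k * ‖z‖)) : SG ψ := by
  refine ⟨hc, fun a ha => ⟨C * Real.exp (k ^ 2 / (4 * a)), fun z => ?_⟩⟩
  have hC : 0 ≤ C := by
    have := (abs_nonneg _).trans (h 0)
    simpa using this
  refine (h z).trans ?_
  rw [mul_assoc, ← Real.exp_add]
  gcongr
  have : k ^ 2 / (4 * a) + a * ‖z‖ ^ 2 - k * ‖z‖ = (k - 2 * a * ‖z‖) ^ 2 / (4 * a) := by
    field_simp; ring
  have h2 : 0 ≤ (k - 2 * a * ‖z‖) ^ 2 / (4 * a) := by positivity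
  linarith

lemma SG.const (c : ℝ) : SG (fun _ : Euc n => c) :=
  SG.of_exp continuous_const |c| 0 (by intro z; simp)

lemma SG.norm_sub (x : Euc n) : SG (fun z : Euc n => ‖z - x‖) := by
  refine SG.of_exp (by fun_prop) (Real.exp ‖x‖) 1 (fun z => ?_)
  rw [abs_of_nonneg (norm_nonneg _), ← Real.exp_add]
  have h1 := norm_sub_le z x
  have h2 := Real.add_one_le_exp (‖x‖ + 1 * ‖z‖)
  linarith

lemma SG.exp_norm_sub (k : ℝ) (x : Euc n) : SG (fun z : Euc n => Real.exp (k * ‖z - x‖)) := by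
  refine SG.of_exp (by fun_prop) (Real.exp (|k| * ‖x‖)) |k| (fun z => ?_)
  rw [abs_of_nonneg (Real.exp_pos _).le, ← Real.exp_add]
  gcongr
  calc k * ‖z - x‖ ≤ |k| * ‖z - x‖ := by gcongr; exact le_abs_self k
    _ ≤ |k| * (‖z‖ + ‖x‖) := by gcongr; exact norm_sub_le z x
    _ = _ := by ring

lemma SG.mono {ψ φ : Euc n → ℝ} (h : SG ψ) (hc : Continuous φ) (hle : ∀ z, |φ z| ≤ |ψ z|) :
    SG φ := by
  refine ⟨hc, fun a ha => ?_⟩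
  obtain ⟨C, hC⟩ := h.2 a ha
  exact ⟨C, fun z => (hle z).trans (hC z)⟩

lemma SG.coord (x : Euc n) (j : Fin n) : SG (fun z : Euc n => z j - x j) := by
  refine (SG.norm_sub x).mono (by fun_prop) (fun z => ?_)
  rw [abs_norm]
  have := PiLp.norm_apply_le (z - x) j
  simpa using this

lemma SG.add {ψ φ : Euc n → ℝ} (h : SG ψ) (h' : SG φ) : SG (fun z => ψ z + φ z) := by
  refine ⟨h.1.add h'.1, fun a ha => ?_⟩
  obtain ⟨C, hC⟩ := h.2 a ha
  obtain ⟨C', hC'⟩ := h'.2 a ha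
  refine ⟨C + C', fun z => (abs_add_le _ _).trans ?_⟩
  rw [add_mul]; exact add_le_add (hC z) (hC' z)

lemma SG.mul {ψ φ : Euc n → ℝ} (h : SG ψ) (h' : SG φ) : SG (fun z => ψ z * φ z) := by
  refine ⟨h.1.mul h'.1, fun a ha => ?_⟩
  obtain ⟨C, hC⟩ := h.2 (a / 2) (by positivity)
  obtain ⟨C', hC'⟩ := h'.2 (a / 2) (by positivity)
  refine ⟨C * C', fun z => ?_⟩
  rw [abs_mul]
  calc |ψ z| * |φ z| ≤ (C * Real.exp (a / 2 * ‖z‖ ^ 2)) * (C' * Real.exp (a / 2 * ‖z‖ ^ 2)) := by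
        apply mul_le_mul (hC z) (hC' z) (abs_nonneg _) ((abs_nonneg _).trans (hC z))
    _ = C * C' * (Real.exp (a / 2 * ‖z‖ ^ 2) * Real.exp (a / 2 * ‖z‖ ^ 2)) := by ring
    _ = _ := by rw [← Real.exp_add]; ring_nf

lemma SG.neg {ψ : Euc n → ℝ} (h : SG ψ) : SG (fun z => - ψ z) := by
  refine h.mono h.1.neg (fun z => by rw [abs_neg])

lemma SG.sub {ψ φ : Euc n → ℝ} (h : SG ψ) (h' : SG φ) : SG (fun z => ψ z - φ z) := by
  simpa [sub_eq_add_neg] using h.add h'.neg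

lemma SG.const_mul {ψ : Euc n → ℝ} (h : SG ψ) (c : ℝ) : SG (fun z => c * ψ z) :=
  (SG.const c).mul h

lemma SG.pow {ψ : Euc n → ℝ} (h : SG ψ) (k : ℕ) : SG (fun z => ψ z ^ k) := by
  induction k with
  | zero => simpa using SG.const (n := n) 1
  | succ k ih => simpa [pow_succ] using ih.mul h

lemma SG.abs {ψ : Euc n → ℝ} (h : SG ψ) : SG (fun z => |ψ z|) :=
  h.mono h.1.abs (fun z => by rw [abs_abs])

lemma SG.sum {ι : Type*} {s : Finset ι} {ψ : ι → Euc n → ℝ} (h : ∀ i ∈ s, SG (ψ i)) :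
    SG (fun z => ∑ i ∈ s, ψ i z) := by
  classical
  induction s using Finset.induction_on with
  | empty => simpa using SG.const (n := n) 0
  | insert a s ha ih =>
    simp only [Finset.sum_insert ha]
    exact (h a (by simp)).add (ih (fun i hi => h i (by simp [hi])))

lemma integrable_gauss {a : ℝ} (ha : 0 < a) :
    Integrable (fun z : Euc n => Real.exp (-a * ‖z‖ ^ 2)) := by
  by_contra h
  have h1 := GaussianFourier.integral_rexp_neg_mul_sq_norm (V := Euc n) ha
  rw [integral_undef h] at h1
  have : 0 < (Real.pi / a) ^ ((Module.finrank ℝ (Euc n) : ℝ) / 2) :=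
    Real.rpow_pos_of_pos (div_pos Real.pi_pos ha) _
  linarith

lemma SG.gi {ψ : Euc n → ℝ} (h : SG ψ) : GI ψ := by
  intro a ha
  obtain ⟨C, hC⟩ := h.2 (a / 2) (by positivity)
  refine ((integrable_gauss (n := n) (a := a / 2) (by positivity)).const_mul C).mono'
    (h.1.mul (by fun_prop)).aestronglyMeasurable (Filter.Eventually.of_forall fun z => ?_)
  rw [norm_mul, Real.norm_eq_abs, Real.norm_of_nonneg (Real.exp_pos _).le]
  calc |ψ z| * Real.exp (-a * ‖z‖ ^ 2)
      ≤ C * Real.exp (a / 2 * ‖z‖ ^ 2) * Real.exp (-a * ‖z‖ ^ 2) := by gcongr; exact hC z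
    _ = _ := by rw [mul_assoc, ← Real.exp_add]; ring_nf

lemma GI.mul_SG {φ ψ : Euc n → ℝ} (h : GI φ) (h' : SG ψ) : GI (fun z => φ z * ψ z) := by
  intro a ha
  obtain ⟨C, hC⟩ := h'.2 (a / 2) (by positivity)
  have := (h (a / 2) (by positivity)).mul_bdd (c := C)
    (g := fun z => ψ z * Real.exp (-(a / 2) * ‖z‖ ^ 2))
    (h'.1.mul (by fun_prop)).aestronglyMeasurable (Filter.Eventually.of_forall fun z => by
      rw [norm_mul, Real.norm_eq_abs, Real.norm_of_nonneg (Real.exp_pos _).le]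
      calc |ψ z| * Real.exp (-(a / 2) * ‖z‖ ^ 2)
          ≤ C * Real.exp (a / 2 * ‖z‖ ^ 2) * Real.exp (-(a / 2) * ‖z‖ ^ 2) := by
            gcongr; exact hC z
        _ = C := by rw [mul_assoc, ← Real.exp_add]; ring_nf; simp)
  refine this.congr (Filter.Eventually.of_forall fun z => ?_)
  simp only
  rw [show φ z * Real.exp (-(a / 2) * ‖z‖ ^ 2) * (ψ z * Real.exp (-(a / 2) * ‖z‖ ^ 2))
    = φ z * ψ z * (Real.exp (-(a / 2) * ‖z‖ ^ 2) * Real.exp (-(a / 2) * ‖z‖ ^ 2)) by ring,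
    ← Real.exp_add]
  ring_nf

lemma GI.SG_mul {φ ψ : Euc n → ℝ} (h : GI φ) (h' : SG ψ) : GI (fun z => ψ z * φ z) := by
  simpa [mul_comm] using h.mul_SG h'

lemma GI.add {φ ψ : Euc n → ℝ} (h : GI φ) (h' : GI ψ) : GI (fun z => φ z + ψ z) := by
  intro a ha
  refine ((h a ha).add (h' a ha)).congr (Filter.Eventually.of_forall fun z => ?_)
  simp only [Pi.add_apply, add_mul]

lemma GI.const_mul {φ : Euc n → ℝ} (h : GI φ) (c : ℝ) : GI (fun z => c * φ z) :=
  h.SG_mul (SG.const c)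

lemma GI.neg {φ : Euc n → ℝ} (h : GI φ) : GI (fun z => - φ z) := by
  simpa using h.const_mul (-1)

lemma GI.sub {φ ψ : Euc n → ℝ} (h : GI φ) (h' : GI ψ) : GI (fun z => φ z - ψ z) := by
  simpa [sub_eq_add_neg] using h.add h'.neg

lemma GI.sum {ι : Type*} {s : Finset ι} {ψ : ι → Euc n → ℝ} (h : ∀ i ∈ s, GI (ψ i)) :
    GI (fun z => ∑ i ∈ s, ψ i z) := by
  classical
  induction s using Finset.induction_on with
  | empty => simpa using (SG.const (n := n) 0).gi
  | insert a s ha ih =>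
    simp only [Finset.sum_insert ha]
    exact (h a (by simp)).add (ih (fun i hi => h i (by simp [hi])))

lemma GI.mono {φ ψ : Euc n → ℝ} (h : GI φ) (hc : Continuous ψ) (hle : ∀ z, |ψ z| ≤ φ z) :
    GI ψ := by
  intro a ha
  refine (h a ha).mono' (hc.mul (by fun_prop)).aestronglyMeasurable
    (Filter.Eventually.of_forall fun z => ?_)
  rw [norm_mul, Real.norm_eq_abs, Real.norm_of_nonneg (Real.exp_pos _).le]
  gcongr; exact hle z

/-- Products of functions whose squares are Gaussian integrable are Gaussian integrable. -/
lemma GI.of_sq {φ ψ : Euc n → ℝ} (hc : Continuous φ) (hc' : Continuous ψ)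
    (h : GI (fun z => φ z ^ 2)) (h' : GI (fun z => ψ z ^ 2)) : GI (fun z => φ z * ψ z) := by
  refine (h.add h').mono (hc.mul hc') (fun z => ?_)
  rw [abs_le]
  constructor <;> nlinarith [sq_nonneg (φ z + ψ z), sq_nonneg (φ z - ψ z), sq_nonneg (φ z),
    sq_nonneg (ψ z)]

/-! ### The heat kernel -/

lemma gk_const_pos {t : ℝ} (ht : 0 < t) : 0 < (4 * Real.pi * t) ^ (-(n : ℝ) / 2) :=
  Real.rpow_pos_of_pos (by positivity) _

lemma gk_pos {t : ℝ} (ht : 0 < t) (y : Euc n) : 0 < gk t y :=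
  mul_pos (gk_const_pos ht) (Real.exp_pos _)

lemma gk_continuous (t : ℝ) : Continuous (gk t : Euc n → ℝ) := by
  unfold gk; fun_prop

lemma gk_integral {t : ℝ} (ht : 0 < t) : ∫ y : Euc n, gk t y = 1 := by
  unfold gk
  rw [integral_const_mul]
  have h1 := GaussianFourier.integral_rexp_neg_mul_sq_norm (V := Euc n) (b := 1 / (4 * t))
    (by positivity)
  have h2 : (fun y : Euc n => Real.exp (-(‖y‖ ^ 2 / (4 * t))))
      = fun y => Real.exp (-(1 / (4 * t)) * ‖y‖ ^ 2) := by
    funext y; ring_nf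
  rw [h2, h1, finrank_euclideanSpace, Fintype.card_fin]
  rw [show Real.pi / (1 / (4 * t)) = 4 * Real.pi * t by field_simp,
    ← Real.rpow_add (by positivity)]
  rw [show -(n : ℝ) / 2 + n / 2 = 0 by ring, Real.rpow_zero]

/-- Domination of a shifted heat kernel by a centred Gaussian. -/
lemma gk_shift_le {t : ℝ} (ht : 0 < t) (x z : Euc n) :
    gk t (z - x) ≤ (4 * Real.pi * t) ^ (-(n : ℝ) / 2) * Real.exp (‖x‖ ^ 2 / (4 * t))
      * Real.exp (-(1 / (8 * t)) * ‖z‖ ^ 2) := by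
  unfold gk
  rw [mul_assoc ((4 * Real.pi * t) ^ (-(n : ℝ) / 2)), ← Real.exp_add]
  have := gk_const_pos (n := n) ht
  gcongr
  have h1 : ‖z‖ ≤ ‖z - x‖ + ‖x‖ := by simpa using norm_add_le (z - x) x
  have h2 : ‖z‖ ^ 2 ≤ 2 * ‖z - x‖ ^ 2 + 2 * ‖x‖ ^ 2 := by
    nlinarith [sq_nonneg (‖z - x‖ - ‖x‖), norm_nonneg z, norm_nonneg (z - x), norm_nonneg x]
  have h3 : ‖x‖ ^ 2 / (4 * t) + -(1 / (8 * t)) * ‖z‖ ^ 2 + ‖z - x‖ ^ 2 / (4 * t)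
    = (2 * ‖z - x‖ ^ 2 + 2 * ‖x‖ ^ 2 - ‖z‖ ^ 2) / (8 * t) := by field_simp; ring
  have h4 : 0 ≤ (2 * ‖z - x‖ ^ 2 + 2 * ‖x‖ ^ 2 - ‖z‖ ^ 2) / (8 * t) := by
    apply div_nonneg <;> [linarith; positivity]
  linarith

lemma GI.integrable {φ : Euc n → ℝ} (h : GI φ) {t : ℝ} (ht : 0 < t) (x : Euc n) :
    Integrable (fun z => φ z * gk t (z - x)) := by
  have h1 := h (1 / (8 * t)) (by positivity)
  have h2 := h1.mul_bdd (g := fun z => gk t (z - x) / Real.exp (-(1 / (8 * t)) * ‖z‖ ^ 2))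
    (c := (4 * Real.pi * t) ^ (-(n : ℝ) / 2) * Real.exp (‖x‖ ^ 2 / (4 * t)))
    (Continuous.aestronglyMeasurable (by
      refine Continuous.div ?_ (by fun_prop) (fun z => (Real.exp_pos _).ne')
      exact (gk_continuous t).comp (by fun_prop)))
    (Filter.Eventually.of_forall fun z => by
      rw [Real.norm_of_nonneg (div_nonneg (gk_pos ht _).le (Real.exp_pos _).le),
        div_le_iff₀ (Real.exp_pos _)]
      exact gk_shift_le ht x z)
  refine h2.congr (Filter.Eventually.of_forall fun z => ?_)
  have := (Real.exp_pos (-(1 / (8 * t)) * ‖z‖ ^ 2)).ne'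
  simp only
  field_simp

/-! ### Gaussian averages -/

lemma gi_const {t : ℝ} (ht : 0 < t) (x : Euc n) (c : ℝ) : gi (fun _ => c) x t = c := by
  unfold gi
  rw [integral_const_mul, integral_sub_right_eq_self (fun y => gk t y) x, gk_integral ht, mul_one]

lemma gi_add {φ ψ : Euc n → ℝ} (h : GI φ) (h' : GI ψ) (x : Euc n) {t : ℝ} (ht : 0 < t) :
    gi (fun z => φ z + ψ z) x t = gi φ x t + gi ψ x t := by
  unfold gi
  simp only [add_mul]
  exact integral_add (h.integrable ht x) (h'.integrable ht x)

lemma gi_sub {φ ψ : Euc n → ℝ} (h : GI φ) (h' : GI ψ) (x : Euc n) {t : ℝ} (ht : 0 < t) :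
    gi (fun z => φ z - ψ z) x t = gi φ x t - gi ψ x t := by
  unfold gi
  simp only [sub_mul]
  exact integral_sub (h.integrable ht x) (h'.integrable ht x)

lemma gi_const_mul (c : ℝ) (φ : Euc n → ℝ) (x : Euc n) (t : ℝ) :
    gi (fun z => c * φ z) x t = c * gi φ x t := by
  unfold gi
  simp only [mul_assoc]
  exact integral_const_mul _ _

lemma gi_sum {ι : Type*} {s : Finset ι} {ψ : ι → Euc n → ℝ} (h : ∀ i ∈ s, GI (ψ i))
    (x : Euc n) {t : ℝ} (ht : 0 < t) :
    gi (fun z => ∑ i ∈ s, ψ i z) x t = ∑ i ∈ s, gi (ψ i) x t := by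
  unfold gi
  simp only [Finset.sum_mul]
  exact integral_finsetSum s (fun i hi => (h i hi).integrable ht x)

lemma gi_mono {φ ψ : Euc n → ℝ} (h : GI φ) (h' : GI ψ) (x : Euc n) {t : ℝ} (ht : 0 < t)
    (hle : ∀ z, φ z ≤ ψ z) : gi φ x t ≤ gi ψ x t :=
  integral_mono (h.integrable ht x) (h'.integrable ht x)
    (fun z => mul_le_mul_of_nonneg_right (hle z) (gk_pos ht _).le)

lemma gi_nonneg {φ : Euc n → ℝ} (x : Euc n) {t : ℝ} (ht : 0 < t)
    (hle : ∀ z, 0 ≤ φ z) : 0 ≤ gi φ x t :=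
  integral_nonneg (fun z => mul_nonneg (hle z) (gk_pos ht _).le)

lemma gi_congr {φ ψ : Euc n → ℝ} (x : Euc n) (t : ℝ) (h : ∀ z, φ z = ψ z) :
    gi φ x t = gi ψ x t := by
  rw [funext h]

lemma gi_pos {φ : Euc n → ℝ} (hg : GI φ) (hc : Continuous φ) (x : Euc n) {t : ℝ} (ht : 0 < t)
    (hle : ∀ z, 0 < φ z) : 0 < gi φ x t := by
  unfold gi
  have hcg : Continuous (fun z => φ z * gk t (z - x)) :=
    hc.mul ((gk_continuous t).comp (by fun_prop))
  exact integral_pos_of_integrable_nonneg_nonzero (x := x) hcg (hg.integrable ht x)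
    (fun z => mul_nonneg (hle z).le (gk_pos ht _).le) (mul_pos (hle x) (gk_pos ht _)).ne'

/-- Cauchy–Schwarz for Gaussian averages. -/
lemma gi_cs {φ ψ : Euc n → ℝ} (hc : Continuous φ) (hc' : Continuous ψ)
    (h : GI (fun z => φ z ^ 2)) (h' : GI (fun z => ψ z ^ 2)) (x : Euc n) {t : ℝ} (ht : 0 < t) :
    gi (fun z => φ z * ψ z) x t ^ 2 ≤ gi (fun z => φ z ^ 2) x t * gi (fun z => ψ z ^ 2) x t := by
  have hm := GI.of_sq hc hc' h h'
  have key : ∀ r : ℝ, 0 ≤ gi (fun z => ψ z ^ 2) x t * (r * r)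
      + (2 * gi (fun z => φ z * ψ z) x t) * r + gi (fun z => φ z ^ 2) x t := by
    intro r
    have h0 : 0 ≤ gi (fun z => (φ z + r * ψ z) ^ 2) x t := gi_nonneg x ht (fun z => sq_nonneg _)
    have e : gi (fun z => (φ z + r * ψ z) ^ 2) x t
        = gi (fun z => φ z ^ 2 + ((2 * r) * (φ z * ψ z) + (r * r) * ψ z ^ 2)) x t :=
      gi_congr x t (fun z => by ring)
    rw [e, gi_add h ((hm.const_mul _).add (h'.const_mul _)) x ht,
      gi_add (hm.const_mul _) (h'.const_mul _) x ht, gi_const_mul, gi_const_mul] at h0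
    linarith
  have := discrim_le_zero key
  unfold discrim at this
  nlinarith

lemma gi_sq_le {φ : Euc n → ℝ} (hc : Continuous φ) (h : GI (fun z => φ z ^ 2)) (x : Euc n)
    {t : ℝ} (ht : 0 < t) : gi φ x t ^ 2 ≤ gi (fun z => φ z ^ 2) x t := by
  have := gi_cs hc (continuous_const (y := (1 : ℝ))) h (by simpa using (SG.const (n := n) 1).gi) x ht
  simpa [gi_const ht] using this

lemma gi_abs_le {φ : Euc n → ℝ} (x : Euc n) {t : ℝ} (ht : 0 < t) :
    |gi φ x t| ≤ gi (fun z => |φ z|) x t := by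
  unfold gi
  refine (abs_integral_le_integral_abs).trans (le_of_eq ?_)
  congr 1; funext z
  rw [abs_mul, abs_of_pos (gk_pos ht _)]

lemma gk_const_ratio {s t : ℝ} (hs : 0 < s) (ht : 0 < t) : (4 * Real.pi * s) ^ (-(n : ℝ) / 2)
      = (t / s) ^ ((n : ℝ) / 2) * (4 * Real.pi * t) ^ (-(n : ℝ) / 2) := by
  have hp : 0 < t / s := by positivity
  have hq : 0 < 4 * Real.pi * s := by positivity
  rw [show 4 * Real.pi * t = (t / s) * (4 * Real.pi * s) by field_simp,
    Real.mul_rpow hp.le hq.le, ← mul_assoc ((t / s) ^ ((n : ℝ) / 2)), ← Real.rpow_add hp]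
  rw [show (n : ℝ) / 2 + -(n : ℝ) / 2 = 0 by ring]; simp

/-- Heat kernels at different scales are comparable up to the obvious power of the ratio. -/
lemma gk_le_gk {s t : ℝ} (hs : 0 < s) (hst : s ≤ t) (y : Euc n) :
    gk s y ≤ (t / s) ^ ((n : ℝ) / 2) * gk t y := by
  have ht : 0 < t := hs.trans_le hst
  unfold gk
  rw [← mul_assoc]
  have e := gk_const_ratio (n := n) hs ht
  rw [← e]
  have := gk_const_pos (n := n) hs
  gcongr

lemma gk_mul_exp {s t : ℝ} (hs : 0 < s) (ht : 0 < t) (y : Euc n) :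
    gk s y * Real.exp (‖y‖ ^ 2 / (4 * s) - ‖y‖ ^ 2 / (4 * t)) =
      (t / s) ^ ((n : ℝ) / 2) * gk t y := by
  unfold gk
  have e := gk_const_ratio (n := n) hs ht
  rw [mul_assoc, ← Real.exp_add, e, mul_assoc]
  congr 3; ring

end Basics

/-! ### Partial derivatives, cutoffs and Gaussian integration by parts -/

section Div

variable {n : ℕ}

/-- The `j`-th partial derivative. -/
noncomputable def pd (j : Fin n) (f : Euc n → ℝ) (z : Euc n) : ℝ :=
  fderiv ℝ f z (EuclideanSpace.single j 1)

lemma pd_mul {f g : Euc n → ℝ} {z : Euc n} (j : Fin n) (hf : DifferentiableAt ℝ f z)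
    (hg : DifferentiableAt ℝ g z) :
    pd j (fun z => f z * g z) z = f z * pd j g z + g z * pd j f z := by
  simp [pd, fderiv_fun_mul hf hg]

lemma pd_add {f g : Euc n → ℝ} {z : Euc n} (j : Fin n) (hf : DifferentiableAt ℝ f z)
    (hg : DifferentiableAt ℝ g z) :
    pd j (fun z => f z + g z) z = pd j f z + pd j g z := by
  simp [pd, fderiv_fun_add hf hg]

lemma pd_sub {f g : Euc n → ℝ} {z : Euc n} (j : Fin n) (hf : DifferentiableAt ℝ f z)
    (hg : DifferentiableAt ℝ g z) :
    pd j (fun z => f z - g z) z = pd j f z - pd j g z := by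
  simp [pd, fderiv_fun_sub hf hg]

lemma pd_const_mul {f : Euc n → ℝ} {z : Euc n} (j : Fin n) (c : ℝ) (hf : DifferentiableAt ℝ f z) :
    pd j (fun z => c * f z) z = c * pd j f z := by
  simp [pd, fderiv_const_mul hf]

lemma pd_const (j : Fin n) (c : ℝ) (z : Euc n) : pd j (fun _ => c) z = 0 := by
  simp [pd]

lemma pd_sum {ι : Type*} (s : Finset ι) {f : ι → Euc n → ℝ} {z : Euc n} (j : Fin n)
    (hf : ∀ i ∈ s, DifferentiableAt ℝ (f i) z) :
    pd j (fun z => ∑ i ∈ s, f i z) z = ∑ i ∈ s, pd j (f i) z := by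
  simp [pd, fderiv_fun_sum hf]

lemma pd_comp {f : Euc n → ℝ} {φ : ℝ → ℝ} {z : Euc n} {φ' : ℝ} (j : Fin n)
    (hφ : HasDerivAt φ φ' (f z)) (hf : DifferentiableAt ℝ f z) :
    pd j (fun z => φ (f z)) z = φ' * pd j f z := by
  have := (hφ.comp_hasFDerivAt z hf.hasFDerivAt).fderiv
  simp only [pd]
  rw [show (fun z => φ (f z)) = φ ∘ f from rfl, this]
  simp

lemma pd_sq {f : Euc n → ℝ} {z : Euc n} (j : Fin n) (hf : DifferentiableAt ℝ f z) :
    pd j (fun z => f z ^ 2) z = 2 * f z * pd j f z := by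
  have := pd_mul j hf hf
  simp only [← sq] at this
  rw [this]; ring

lemma pd_coord (i j : Fin n) (x z : Euc n) :
    pd j (fun z => z i - x i) z = if i = j then 1 else 0 := by
  have h : HasFDerivAt (fun z : Euc n => z i - x i) (EuclideanSpace.proj i : Euc n →L[ℝ] ℝ) z := by
    simpa using ((EuclideanSpace.proj (𝕜 := ℝ) i : Euc n →L[ℝ] ℝ).hasFDerivAt (x := z)).sub_const (x i)
  simp only [pd]
  rw [h.fderiv]
  simp

lemma pd_norm_sq (j : Fin n) (x z : Euc n) :
    pd j (fun z => ‖z - x‖ ^ 2) z = 2 * (z j - x j) := by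
  have h := ((hasFDerivAt_id z).sub_const x).norm_sq
  simp only [pd, id] at *
  rw [h.fderiv]
  simp [EuclideanSpace.inner_single_right]

lemma pd_gk (j : Fin n) (t : ℝ) (x z : Euc n) :
    pd j (fun z => gk t (z - x)) z = -((z j - x j) / (2 * t)) * gk t (z - x) := by
  have h1 : HasDerivAt (fun r : ℝ => (4 * Real.pi * t) ^ (-(n : ℝ) / 2) * Real.exp (-(r / (4 * t))))
      ((4 * Real.pi * t) ^ (-(n : ℝ) / 2) * (Real.exp (-(‖z - x‖ ^ 2 / (4 * t))) * -(1 / (4 * t))))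
      (‖z - x‖ ^ 2) :=
    (((hasDerivAt_id _).div_const _).neg.exp).const_mul _
  have h2 : DifferentiableAt ℝ (fun z : Euc n => ‖z - x‖ ^ 2) z :=
    ((hasFDerivAt_id z).sub_const x).norm_sq.differentiableAt
  have := pd_comp (f := fun z : Euc n => ‖z - x‖ ^ 2) j h1 h2
  simp only [gk]
  rw [this, pd_norm_sq]
  rcases eq_or_ne t 0 with rfl | ht
  · simp
  field_simp
  ring

lemma gk_contDiff (t : ℝ) (x : Euc n) {m : WithTop ℕ∞} :
    ContDiff ℝ m (fun z : Euc n => gk t (z - x)) := by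
  unfold gk
  exact contDiff_const.mul ((((contDiff_id.sub contDiff_const).norm_sq ℝ).div_const _).neg.exp)

lemma pd_continuous {f : Euc n → ℝ} (j : Fin n) (hf : ContDiff ℝ 1 f) : Continuous (pd j f) := by
  unfold pd
  exact (hf.continuous_fderiv one_ne_zero).clm_apply continuous_const

lemma pd_contDiff {f : Euc n → ℝ} (j : Fin n) (hf : ContDiff ℝ (⊤ : ℕ∞) f) :
    ContDiff ℝ (⊤ : ℕ∞) (pd j f) := by
  unfold pd
  exact (hf.fderiv_right (m := (⊤ : ℕ∞)) (by norm_cast)).clm_apply contDiff_const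

lemma pd_hasCompactSupport {f : Euc n → ℝ} (j : Fin n) (hf : HasCompactSupport f) :
    HasCompactSupport (pd j f) := by
  refine (hf.fderiv (𝕜 := ℝ)).mono ?_
  intro z hz h0
  apply hz
  simp [pd, h0]

lemma ibp_compact {X g : Euc n → ℝ} (j : Fin n) (hX : ContDiff ℝ 1 X) (hg : ContDiff ℝ 1 g)
    (hs : HasCompactSupport g) : ∫ z, X z * pd j g z = - ∫ z, pd j X z * g z := by
  unfold pd
  refine integral_mul_fderiv_eq_neg_fderiv_mul_of_integrable ?_ ?_ ?_ ?_ ?_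
  · exact ((pd_continuous j hX).mul hg.continuous).integrable_of_hasCompactSupport hs.mul_left
  · exact (hX.continuous.mul (pd_continuous j hg)).integrable_of_hasCompactSupport
      (pd_hasCompactSupport j hs).mul_left
  · exact (hX.continuous.mul hg.continuous).integrable_of_hasCompactSupport hs.mul_left
  · exact fun x _ => hX.differentiable one_ne_zero x
  · exact fun x _ => hg.differentiable one_ne_zero x

/-- A sequence of smooth cutoffs, equal to `1` near any given point eventually, with uniformly
bounded first derivatives. -/
lemma exists_cutoff (n : ℕ) : ∃ (χ : ℕ → Euc n → ℝ) (C : ℝ), 0 ≤ C ∧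
    (∀ k, ContDiff ℝ (⊤ : ℕ∞) (χ k)) ∧ (∀ k, HasCompactSupport (χ k)) ∧
    (∀ k z, 0 ≤ χ k z) ∧ (∀ k z, χ k z ≤ 1) ∧ (∀ k j z, |pd j (χ k) z| ≤ C) ∧
    (∀ (k : ℕ) z, ‖z‖ < k → χ k z = 1 ∧ ∀ j, pd j (χ k) z = 0) := by
  classical
  let b : ContDiffBump (0 : Euc n) := ⟨1, 2, one_pos, one_lt_two⟩
  have hb : ContDiff ℝ (⊤ : ℕ∞) b := b.contDiff
  obtain ⟨C, hC⟩ : ∃ C, ∀ z, ‖fderiv ℝ b z‖ ≤ C :=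
    (hb.continuous_fderiv (by simp)).bounded_above_of_compact_support
      (b.hasCompactSupport.fderiv (𝕜 := ℝ))
  have hCn : 0 ≤ C := (norm_nonneg _).trans (hC 0)
  have hk : ∀ k : ℕ, (0 : ℝ) < ((k : ℝ) + 1)⁻¹ := fun k => by positivity
  have hk1 : ∀ k : ℕ, ((k : ℝ) + 1)⁻¹ ≤ 1 := fun k => by
    apply inv_le_one_of_one_le₀; have : (0 : ℝ) ≤ k := by positivity
    linarith
  have hone : ∀ (k : ℕ) (z : Euc n), ‖z‖ < k → b (((k : ℝ) + 1)⁻¹ • z) = 1 := by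
    intro k z hz
    apply b.one_of_mem_closedBall
    rw [mem_closedBall_zero_iff, norm_smul, Real.norm_of_nonneg (hk k).le,
      inv_mul_le_iff₀ (by positivity)]
    show ‖z‖ ≤ ((k : ℝ) + 1) * 1
    linarith
  refine ⟨fun k z => b (((k : ℝ) + 1)⁻¹ • z), C, hCn, ?_, ?_, ?_, ?_, ?_, ?_⟩
  · intro k
    exact hb.comp (contDiff_id.const_smul _)
  · intro k
    exact b.hasCompactSupport.comp_smul (hk k).ne'
  · intro k z; exact b.nonneg
  · intro k z; exact b.le_one
  · intro k j z
    have h1 : HasFDerivAt (fun z : Euc n => ((k : ℝ) + 1)⁻¹ • z)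
        (((k : ℝ) + 1)⁻¹ • ContinuousLinearMap.id ℝ (Euc n)) z :=
      (((k : ℝ) + 1)⁻¹ • ContinuousLinearMap.id ℝ (Euc n)).hasFDerivAt
    have h2 := ((hb.differentiable (by simp) (((k : ℝ) + 1)⁻¹ • z)).hasFDerivAt.comp z h1).fderiv
    have h3 : pd j (fun z => b (((k : ℝ) + 1)⁻¹ • z)) z
        = fderiv ℝ b (((k : ℝ) + 1)⁻¹ • z) (((k : ℝ) + 1)⁻¹ • EuclideanSpace.single j 1) := by
      simp only [pd]
      rw [show (fun z => b (((k : ℝ) + 1)⁻¹ • z)) = b ∘ (fun z => ((k : ℝ) + 1)⁻¹ • z) from rfl, h2]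
      simp
    rw [h3, ← Real.norm_eq_abs]
    refine (ContinuousLinearMap.le_opNorm _ _).trans ?_
    calc _ ≤ C * 1 := by
          gcongr
          · exact hC _
          · rw [norm_smul, Real.norm_of_nonneg (hk k).le]; simpa using hk1 k
      _ = C := mul_one C
  · intro k z hz
    refine ⟨hone k z hz, fun j => ?_⟩
    have : (fun z => b (((k : ℝ) + 1)⁻¹ • z)) =ᶠ[nhds z] fun _ => (1 : ℝ) := by
      have ho : IsOpen {z : Euc n | ‖z‖ < k} := isOpen_lt continuous_norm continuous_const
      filter_upwards [ho.mem_nhds hz] with w hw using hone k w hw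
    simp only [pd]
    rw [this.fderiv_eq]; simp

/-- The divergence theorem against the heat kernel. -/
lemma gauss_div {X : Fin n → Euc n → ℝ} (hX : ∀ j, ContDiff ℝ 1 (X j)) (hg : ∀ j, GI (X j))
    (hd : GI (fun z => ∑ j, pd j (X j) z)) (x : Euc n) {t : ℝ} (ht : 0 < t) :
    gi (fun z => ∑ j, pd j (X j) z) x t
      = gi (fun z => ∑ j, X j z * ((z j - x j) / (2 * t))) x t := by
  obtain ⟨χ, C, hC, hs, hcs, h0, h1, hb, he⟩ := exists_cutoff n
  have hs1 : ∀ k, ContDiff ℝ 1 (χ k) := fun k => (hs k).of_le (by norm_cast)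
  have hgy : GI (fun z => ∑ j, X j z * ((z j - x j) / (2 * t))) :=
    GI.sum fun j _ => (hg j).mul_SG (by
      simpa [div_eq_mul_inv] using (SG.coord x j).mul (SG.const (n := n) (2 * t)⁻¹))
  have hga : GI (fun z => ∑ j, |X j z|) :=
    GI.sum fun j _ => by
      intro a ha
      have := (hg j a ha).abs
      simpa [abs_mul] using this
  have hgkc : Continuous (fun z : Euc n => gk t (z - x)) := (gk_contDiff t x (m := 0)).continuous
  have key : ∀ k, ∫ z, (∑ j, pd j (X j) z) * gk t (z - x) * χ k z
      = ∫ z, ((∑ j, X j z * ((z j - x j) / (2 * t))) * gk t (z - x) * χ k z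
        - (∑ j, X j z * pd j (χ k) z) * gk t (z - x)) := by
    intro k
    have hj : ∀ j, ∫ z, pd j (X j) z * (χ k z * gk t (z - x))
        = ∫ z, (X j z * ((z j - x j) / (2 * t)) * gk t (z - x) * χ k z
          - X j z * pd j (χ k) z * gk t (z - x)) := by
      intro j
      have := ibp_compact (X := X j) (g := fun z => χ k z * gk t (z - x)) j (hX j)
        ((hs1 k).mul (gk_contDiff t x)) ((hcs k).mul_right)
      rw [← neg_eq_iff_eq_neg] at this
      rw [← this, ← integral_neg]
      congr 1; funext z
      rw [pd_mul j ((hs1 k).differentiable one_ne_zero z)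
        ((gk_contDiff t x (m := 1)).differentiable one_ne_zero z), pd_gk]
      ring
    have e1 : ∀ z, (∑ j, pd j (X j) z) * gk t (z - x) * χ k z
        = ∑ j, pd j (X j) z * (χ k z * gk t (z - x)) := by
      intro z; rw [Finset.sum_mul, Finset.sum_mul]
      exact Finset.sum_congr rfl fun j _ => by ring
    have e2 : ∀ z, ((∑ j, X j z * ((z j - x j) / (2 * t))) * gk t (z - x) * χ k z
        - (∑ j, X j z * pd j (χ k) z) * gk t (z - x))
        = ∑ j, (X j z * ((z j - x j) / (2 * t)) * gk t (z - x) * χ k z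
          - X j z * pd j (χ k) z * gk t (z - x)) := by
      intro z; rw [Finset.sum_sub_distrib, Finset.sum_mul, Finset.sum_mul, Finset.sum_mul]
    simp only [e1, e2]
    rw [integral_finsetSum, integral_finsetSum]
    · exact Finset.sum_congr rfl fun j _ => hj j
    · intro j _
      refine Continuous.integrable_of_hasCompactSupport ?_ ?_
      · refine ((((hX j).continuous.mul ?_).mul hgkc).mul (hs k).continuous).sub
          (((hX j).continuous.mul (pd_continuous j (hs1 k))).mul hgkc)
        fun_prop
      · exact (hcs k).mul_left.sub ((pd_hasCompactSupport j (hcs k)).mul_left.mul_right)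
    · intro j _
      exact ((pd_continuous j (hX j)).mul ((hs k).continuous.mul hgkc)).integrable_of_hasCompactSupport
        ((hcs k).mul_right.mul_left)
  have hev : ∀ z : Euc n, ∀ᶠ k : ℕ in Filter.atTop, χ k z = 1 ∧ ∀ j, pd j (χ k) z = 0 := by
    intro z
    obtain ⟨k₀, hk₀⟩ := exists_nat_gt ‖z‖
    filter_upwards [Filter.eventually_ge_atTop k₀] with k hk
    exact he k z (hk₀.trans_le (by exact_mod_cast hk))
  have hcd : Continuous (fun z => ∑ j, pd j (X j) z) :=
    continuous_finsetSum _ fun j _ => pd_continuous j (hX j)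
  have hcy : Continuous (fun z => ∑ j, X j z * ((z j - x j) / (2 * t))) :=
    continuous_finsetSum _ fun j _ => (hX j).continuous.mul (by fun_prop)
  have L1 : Filter.Tendsto (fun k => ∫ z, (∑ j, pd j (X j) z) * gk t (z - x) * χ k z)
      Filter.atTop (nhds (gi (fun z => ∑ j, pd j (X j) z) x t)) := by
    refine tendsto_integral_of_dominated_convergence
      (fun z => |(∑ j, pd j (X j) z) * gk t (z - x)|) ?_ (hd.integrable ht x).abs ?_ ?_
    · intro k
      exact ((hcd.mul hgkc).mul (hs k).continuous).aestronglyMeasurable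
    · intro k
      refine Filter.Eventually.of_forall fun z => ?_
      rw [Real.norm_eq_abs, abs_mul, abs_of_nonneg (h0 k z)]
      exact mul_le_of_le_one_right (abs_nonneg _) (h1 k z)
    · refine Filter.Eventually.of_forall fun z => ?_
      refine tendsto_const_nhds.congr' ?_
      filter_upwards [hev z] with k hk
      rw [hk.1, mul_one]
  have L2 : Filter.Tendsto (fun k => ∫ z, ((∑ j, X j z * ((z j - x j) / (2 * t))) * gk t (z - x)
        * χ k z - (∑ j, X j z * pd j (χ k) z) * gk t (z - x)))
      Filter.atTop (nhds (gi (fun z => ∑ j, X j z * ((z j - x j) / (2 * t))) x t)) := by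
    refine tendsto_integral_of_dominated_convergence
      (fun z => |(∑ j, X j z * ((z j - x j) / (2 * t))) * gk t (z - x)|
        + C * ((∑ j, |X j z|) * gk t (z - x))) ?_
      ((hgy.integrable ht x).abs.add ((hga.integrable ht x).const_mul C)) ?_ ?_
    · intro k
      refine (((hcy.mul hgkc).mul (hs k).continuous).sub (Continuous.mul ?_ hgkc)).aestronglyMeasurable
      exact continuous_finsetSum _ fun j _ => (hX j).continuous.mul (pd_continuous j (hs1 k))
    · intro k
      refine Filter.Eventually.of_forall fun z => ?_
      rw [Real.norm_eq_abs]
      refine (abs_sub _ _).trans (add_le_add ?_ ?_)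
      · rw [abs_mul, abs_of_nonneg (h0 k z)]
        exact mul_le_of_le_one_right (abs_nonneg _) (h1 k z)
      · rw [abs_mul, abs_of_pos (gk_pos ht _), ← mul_assoc]
        refine mul_le_mul_of_nonneg_right ?_ (gk_pos ht _).le
        refine (Finset.abs_sum_le_sum_abs _ _).trans ?_
        rw [Finset.mul_sum]
        refine Finset.sum_le_sum fun j _ => ?_
        rw [abs_mul, mul_comm]
        exact mul_le_mul_of_nonneg_right (hb k j z) (abs_nonneg _)
    · refine Filter.Eventually.of_forall fun z => ?_
      refine tendsto_const_nhds.congr' ?_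
      filter_upwards [hev z] with k hk
      simp [hk.1, hk.2]
  simp only [key] at L1
  exact tendsto_nhds_unique L1 L2

end Div

/-! ### Derivatives of Gaussian averages in time and space -/

section Deriv

variable {n : ℕ}

lemma gk_hasDerivAt {t : ℝ} (ht : 0 < t) (y : Euc n) :
    HasDerivAt (fun s => gk s y) (gk t y * (‖y‖ ^ 2 / (4 * t ^ 2) - n / (2 * t))) t := by
  unfold gk
  have h1 : HasDerivAt (fun s : ℝ => (4 * Real.pi * s) ^ (-(n : ℝ) / 2))
      (4 * Real.pi * (-(n : ℝ) / 2) * (4 * Real.pi * t) ^ (-(n : ℝ) / 2 - 1)) t := by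
    have := ((hasDerivAt_id t).const_mul (4 * Real.pi)).rpow_const (p := -(n : ℝ) / 2)
      (Or.inl (by simp [ht.ne', Real.pi_ne_zero]))
    simpa using this
  have h2 : HasDerivAt (fun s : ℝ => Real.exp (-(‖y‖ ^ 2 / (4 * s))))
      (Real.exp (-(‖y‖ ^ 2 / (4 * t))) * (‖y‖ ^ 2 / (4 * t ^ 2))) t := by
    have h3 : HasDerivAt (fun s : ℝ => -(‖y‖ ^ 2 / (4 * s))) (‖y‖ ^ 2 / (4 * t ^ 2)) t := by
      have h4 := (((hasDerivAt_id t).const_mul 4).fun_inv (by simpa using ht.ne')).const_mul (‖y‖ ^ 2)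
      have h5 := h4.fun_neg
      simp only [id] at h5
      refine (h5.congr_deriv ?_).congr_of_eventuallyEq (Filter.Eventually.of_forall fun s => ?_)
      · field_simp
      · simp [div_eq_mul_inv]
    exact h3.exp
  refine (h1.mul h2).congr_deriv ?_
  rw [Real.rpow_sub_one (by positivity)]
  field_simp
  ring

lemma gk_shift_le_gk {s t : ℝ} (hs : 0 < s) (hst : s < t) (x y z : Euc n) :
    gk s (z - y) ≤ (t / s) ^ ((n : ℝ) / 2) * Real.exp (‖y - x‖ ^ 2 / (4 * (t - s)))
      * gk t (z - x) := by
  have ht : 0 < t := hs.trans hst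
  have hts : 0 < t - s := sub_pos.2 hst
  have h1 := gk_mul_exp hs ht (z - y)
  have hpos : 0 < (t / s) ^ ((n : ℝ) / 2) := Real.rpow_pos_of_pos (by positivity) _
  unfold gk
  rw [gk_const_ratio hs ht]
  have hc := gk_const_pos (n := n) ht
  rw [show (t / s) ^ ((n : ℝ) / 2) * Real.exp (‖y - x‖ ^ 2 / (4 * (t - s))) *
    ((4 * Real.pi * t) ^ (-(n : ℝ) / 2) * Real.exp (-(‖z - x‖ ^ 2 / (4 * t))))
    = (t / s) ^ ((n : ℝ) / 2) * (4 * Real.pi * t) ^ (-(n : ℝ) / 2) *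
    (Real.exp (‖y - x‖ ^ 2 / (4 * (t - s))) * Real.exp (-(‖z - x‖ ^ 2 / (4 * t)))) by ring,
    ← Real.exp_add]
  gcongr
  have h2 : ‖z - x‖ ≤ ‖z - y‖ + ‖y - x‖ := norm_sub_le_norm_sub_add_norm_sub z y x
  have h3 : ‖z - x‖ ^ 2 ≤ (‖z - y‖ + ‖y - x‖) ^ 2 := by gcongr
  have h4 : (‖z - y‖ + ‖y - x‖) ^ 2 / (4 * t) ≤ ‖z - y‖ ^ 2 / (4 * s) + ‖y - x‖ ^ 2 / (4 * (t - s)) := by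
    have e : ‖z - y‖ ^ 2 / (4 * s) + ‖y - x‖ ^ 2 / (4 * (t - s)) - (‖z - y‖ + ‖y - x‖) ^ 2 / (4 * t)
      = (‖z - y‖ * (t - s) - ‖y - x‖ * s) ^ 2 / (4 * s * t * (t - s)) := by
      field_simp; ring
    have : 0 ≤ (‖z - y‖ * (t - s) - ‖y - x‖ * s) ^ 2 / (4 * s * t * (t - s)) := by positivity
    linarith
  have h5 : ‖z - x‖ ^ 2 / (4 * t) ≤ (‖z - y‖ + ‖y - x‖) ^ 2 / (4 * t) := by gcongr
  linarith

lemma GI.abs {φ : Euc n → ℝ} (h : GI φ) : GI (fun z => |φ z|) := by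
  intro a ha
  have := (h a ha).abs
  simpa [abs_mul] using this

lemma gk_sub_continuous (t : ℝ) (x : Euc n) : Continuous (fun z : Euc n => gk t (z - x)) :=
  (gk_contDiff t x (m := 0)).continuous

lemma gi_hasDerivAt {φ : Euc n → ℝ} (hφ : GI φ) (hc : Continuous φ) (x : Euc n) {t : ℝ}
    (ht : 0 < t) :
    HasDerivAt (gi φ x) (gi (fun z => φ z * (‖z - x‖ ^ 2 / (4 * t ^ 2) - n / (2 * t))) x t) t := by
  have hb : GI (fun z => |φ z| * (‖z - x‖ ^ 2 * (t ^ 2)⁻¹ + n / t)) :=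
    hφ.abs.mul_SG ((((SG.norm_sub x).pow 2).mul (SG.const _)).add (SG.const _))
  have key := (hasDerivAt_integral_of_dominated_loc_of_deriv_le (μ := volume)
    (s := Ioo (t / 2) (2 * t)) (x₀ := t)
    (F := fun s z => φ z * gk s (z - x))
    (F' := fun s z => φ z * (gk s (z - x) * (‖z - x‖ ^ 2 / (4 * s ^ 2) - n / (2 * s))))
    (bound := fun z => (4 : ℝ) ^ ((n : ℝ) / 2) *
      (|φ z| * (‖z - x‖ ^ 2 * (t ^ 2)⁻¹ + n / t) * gk (2 * t) (z - x)))
    (Ioo_mem_nhds (by linarith) (by linarith)) ?_ (hφ.integrable ht x) ?_ ?_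
    ((hb.integrable (by positivity) x).const_mul _) ?_).2
  · refine key.congr_deriv ?_
    unfold gi
    congr 1; funext z; ring
  · exact Filter.Eventually.of_forall fun s =>
      (hc.mul (gk_sub_continuous s x)).aestronglyMeasurable
  · exact (hc.mul ((gk_sub_continuous t x).mul (by fun_prop))).aestronglyMeasurable
  · refine Filter.Eventually.of_forall fun z s hs => ?_
    have hs0 : 0 < s := by linarith [hs.1]
    rw [Real.norm_eq_abs, abs_mul, abs_mul, abs_of_pos (gk_pos hs0 _)]
    have h1 : gk s (z - x) ≤ (4 : ℝ) ^ ((n : ℝ) / 2) * gk (2 * t) (z - x) := by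
      refine (gk_le_gk hs0 hs.2.le _).trans ?_
      have := gk_pos (n := n) (t := 2 * t) (by positivity) (z - x)
      gcongr
      rw [div_le_iff₀ hs0]; linarith [hs.1]
    have h2 : |‖z - x‖ ^ 2 / (4 * s ^ 2) - n / (2 * s)| ≤ ‖z - x‖ ^ 2 * (t ^ 2)⁻¹ + n / t := by
      refine (abs_sub _ _).trans ?_
      rw [abs_of_nonneg (by positivity), abs_of_nonneg (by positivity)]
      refine add_le_add ?_ ?_
      · rw [div_eq_mul_inv]
        gcongr
        nlinarith [hs.1]
      · gcongr
        linarith [hs.1]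
    calc |φ z| * (gk s (z - x) * |‖z - x‖ ^ 2 / (4 * s ^ 2) - n / (2 * s)|)
        ≤ |φ z| * (((4 : ℝ) ^ ((n : ℝ) / 2) * gk (2 * t) (z - x)) *
          (‖z - x‖ ^ 2 * (t ^ 2)⁻¹ + n / t)) := by
          have := gk_pos (n := n) (t := 2 * t) (by positivity) (z - x)
          gcongr
      _ = _ := by ring
  · refine Filter.Eventually.of_forall fun z s hs => ?_
    have hs0 : 0 < s := by linarith [hs.1]
    exact (gk_hasDerivAt hs0 (z - x)).const_mul _

lemma gk_line_hasDerivAt (t : ℝ) (x e z : Euc n) (r : ℝ) :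
    HasDerivAt (fun r : ℝ => gk t (z - (x + r • e)))
      (gk t (z - (x + r • e)) * (⟪z - (x + r • e), e⟫ / (2 * t))) r := by
  have h1 : HasDerivAt (fun r : ℝ => z - (x + r • e)) (-e) r := by
    have := (((hasDerivAt_id r).smul_const e).const_add x).const_sub z
    simpa using this
  have h2 := h1.norm_sq
  have h3 : HasDerivAt (fun r : ℝ => Real.exp (-(‖z - (x + r • e)‖ ^ 2 / (4 * t)))) _ r :=
    (h2.div_const (4 * t)).fun_neg.exp
  have h4 := h3.const_mul ((4 * Real.pi * t) ^ (-(n : ℝ) / 2))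
  unfold gk
  refine h4.congr_deriv ?_
  rw [inner_neg_right]
  rcases eq_or_ne t 0 with rfl | ht
  · simp
  field_simp
  ring

lemma gi_line_hasDerivAt {φ : Euc n → ℝ} (hφ : GI φ) (hc : Continuous φ) (x e : Euc n) {t : ℝ}
    (ht : 0 < t) (r : ℝ) :
    HasDerivAt (fun r : ℝ => gi φ (x + r • e) t)
      (gi (fun z => φ z * (⟪z - (x + r • e), e⟫ / (2 * t))) (x + r • e) t) r := by
  set x' := x + r • e with hx'
  have hb : GI (fun z => |φ z| * ((‖z - x'‖ + ‖e‖) * ‖e‖ / (2 * t))) :=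
    hφ.abs.mul_SG ((((SG.norm_sub x').add (SG.const ‖e‖)).mul (SG.const (‖e‖ * (2 * t)⁻¹))).mono
      (by fun_prop) (fun z => le_of_eq (by rw [div_eq_mul_inv, mul_assoc])))
  have key := (hasDerivAt_integral_of_dominated_loc_of_deriv_le (μ := volume)
    (s := ball r 1) (x₀ := r)
    (F := fun s z => φ z * gk t (z - (x + s • e)))
    (F' := fun s z => φ z * (gk t (z - (x + s • e)) * (⟪z - (x + s • e), e⟫ / (2 * t))))
    (bound := fun z => ((2 * t / t) ^ ((n : ℝ) / 2) * Real.exp (‖e‖ ^ 2 / (4 * (2 * t - t)))) *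
      (|φ z| * ((‖z - x'‖ + ‖e‖) * ‖e‖ / (2 * t)) * gk (2 * t) (z - x')))
    (ball_mem_nhds r one_pos) ?_ (hφ.integrable ht _) ?_ ?_
    ((hb.integrable (by positivity) x').const_mul _) ?_).2
  · refine key.congr_deriv ?_
    unfold gi
    congr 1; funext z; ring
  · exact Filter.Eventually.of_forall fun s =>
      (hc.mul (gk_sub_continuous t _)).aestronglyMeasurable
  · exact (hc.mul ((gk_sub_continuous t _).mul (by fun_prop))).aestronglyMeasurable
  · refine Filter.Eventually.of_forall fun z s hs => ?_
    have hs1 : |s - r| ≤ 1 := by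
      rw [mem_ball, Real.dist_eq] at hs; exact hs.le
    rw [Real.norm_eq_abs, abs_mul, abs_mul, abs_of_pos (gk_pos ht _)]
    have hd : ‖(x + s • e) - x'‖ ≤ ‖e‖ := by
      rw [hx', add_sub_add_left_eq_sub, ← sub_smul, norm_smul, Real.norm_eq_abs]
      exact mul_le_of_le_one_left (norm_nonneg _) hs1
    have h1 : gk t (z - (x + s • e)) ≤ (2 * t / t) ^ ((n : ℝ) / 2) *
        Real.exp (‖e‖ ^ 2 / (4 * (2 * t - t))) * gk (2 * t) (z - x') := by
      refine (gk_shift_le_gk ht (by linarith : t < 2 * t) x' (x + s • e) z).trans ?_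
      have := gk_pos (n := n) (t := 2 * t) (by positivity) (z - x')
      have h5 : 0 < 2 * t - t := by linarith
      gcongr
    have h2 : |⟪z - (x + s • e), e⟫ / (2 * t)| ≤ (‖z - x'‖ + ‖e‖) * ‖e‖ / (2 * t) := by
      rw [abs_div, abs_of_pos (by positivity : 0 < 2 * t)]
      gcongr
      refine (abs_real_inner_le_norm _ _).trans ?_
      gcongr
      calc ‖z - (x + s • e)‖ ≤ ‖z - x'‖ + ‖x' - (x + s • e)‖ :=
            norm_sub_le_norm_sub_add_norm_sub _ _ _
        _ ≤ _ := by rw [norm_sub_rev x']; gcongr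
    calc |φ z| * (gk t (z - (x + s • e)) * |⟪z - (x + s • e), e⟫ / (2 * t)|)
        ≤ |φ z| * (((2 * t / t) ^ ((n : ℝ) / 2) *
        Real.exp (‖e‖ ^ 2 / (4 * (2 * t - t))) * gk (2 * t) (z - x')) *
          ((‖z - x'‖ + ‖e‖) * ‖e‖ / (2 * t))) := by
          have := gk_pos (n := n) (t := 2 * t) (by positivity) (z - x')
          gcongr
      _ = _ := by ring
  · refine Filter.Eventually.of_forall fun z s hs => ?_
    exact (gk_line_hasDerivAt t x e z s).const_mul _

lemma gk_smul {t : ℝ} (ht : 0 < t) (w : Euc n) :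
    (Real.sqrt t) ^ n * gk t (Real.sqrt t • w) = gk 1 w := by
  unfold gk
  rw [norm_smul, Real.norm_of_nonneg (Real.sqrt_nonneg t), mul_pow, Real.sq_sqrt ht.le]
  have e1 : t * ‖w‖ ^ 2 / (4 * t) = ‖w‖ ^ 2 / (4 * 1) := by field_simp
  rw [e1, ← mul_assoc]
  congr 1
  rw [Real.mul_rpow (by positivity) ht.le, mul_one, mul_comm, mul_assoc, ← Real.rpow_natCast,
    Real.sqrt_eq_rpow, ← Real.rpow_mul ht.le, ← Real.rpow_add ht]
  rw [show -(n : ℝ) / 2 + 1 / 2 * n = 0 by ring]; simp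

lemma gi_eq_scaled (φ : Euc n → ℝ) (x : Euc n) {t : ℝ} (ht : 0 < t) :
    gi φ x t = ∫ w, φ (x + Real.sqrt t • w) * gk 1 w := by
  have h1 : gi φ x t = ∫ y, φ (x + y) * gk t y := by
    unfold gi
    rw [← integral_sub_right_eq_self (fun y => φ (x + y) * gk t y) x]
    simp
  have h2 := Measure.integral_comp_smul (volume : Measure (Euc n))
    (fun y => φ (x + y) * gk t y) (Real.sqrt t)
  rw [finrank_euclideanSpace, Fintype.card_fin, abs_of_pos (by positivity), smul_eq_mul,
    eq_inv_mul_iff_mul_eq₀ (by positivity)] at h2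
  rw [h1, ← h2, ← integral_const_mul]
  congr 1; funext w
  rw [← gk_smul ht w]; ring

/-- Gaussian averages converge to the value at the centre as `t → 0⁺`. -/
lemma gi_tendsto {φ : Euc n → ℝ} (hφ : SG φ) (x : Euc n) :
    Filter.Tendsto (gi φ x) (nhdsWithin 0 (Ioi 0)) (nhds (φ x)) := by
  obtain ⟨C, hC⟩ := hφ.2 (1 / 16) (by norm_num)
  have hC0 : 0 ≤ C := by
    have := (abs_nonneg _).trans (hC 0)
    simpa using this
  have hlim : φ x = ∫ w, φ x * gk 1 (w : Euc n) := by
    rw [integral_const_mul, gk_integral one_pos, mul_one]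
  rw [hlim]
  have hcong : (fun t => ∫ w, φ (x + Real.sqrt t • w) * gk 1 w) =ᶠ[nhdsWithin 0 (Ioi 0)] gi φ x := by
    filter_upwards [self_mem_nhdsWithin] with t ht
    exact (gi_eq_scaled φ x ht).symm
  refine Filter.Tendsto.congr' hcong ?_
  refine tendsto_integral_filter_of_dominated_convergence
    (fun w => C * Real.exp (1 / 8 * ‖x‖ ^ 2) * ((2 : ℝ) ^ ((n : ℝ) / 2) * gk 2 w)) ?_ ?_ ?_ ?_
  · exact Filter.Eventually.of_forall fun t =>
      ((hφ.1.comp (by fun_prop)).mul (gk_continuous 1)).aestronglyMeasurable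
  · have : ∀ᶠ t : ℝ in nhdsWithin 0 (Ioi 0), t ∈ Ioo (0 : ℝ) 1 := Ioo_mem_nhdsGT one_pos
    filter_upwards [this] with t ht
    refine Filter.Eventually.of_forall fun w => ?_
    rw [norm_mul, Real.norm_eq_abs, Real.norm_of_nonneg (gk_pos one_pos _).le]
    have h1 : ‖x + Real.sqrt t • w‖ ≤ ‖x‖ + ‖w‖ := by
      refine (norm_add_le _ _).trans ?_
      gcongr
      rw [norm_smul, Real.norm_of_nonneg (Real.sqrt_nonneg _)]
      exact mul_le_of_le_one_left (norm_nonneg _) (Real.sqrt_le_one.2 ht.2.le)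
    have h2 : 1 / 16 * ‖x + Real.sqrt t • w‖ ^ 2 ≤ 1 / 8 * ‖x‖ ^ 2 + 1 / 8 * ‖w‖ ^ 2 := by
      have : ‖x + Real.sqrt t • w‖ ^ 2 ≤ (‖x‖ + ‖w‖) ^ 2 := by gcongr
      nlinarith [sq_nonneg (‖x‖ - ‖w‖)]
    have h3 := gk_mul_exp (n := n) (s := 1) (t := 2) one_pos two_pos w
    rw [div_one] at h3
    rw [← h3]
    calc |φ (x + Real.sqrt t • w)| * gk 1 w
        ≤ C * Real.exp (1 / 16 * ‖x + Real.sqrt t • w‖ ^ 2) * gk 1 w := by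
          have := gk_pos one_pos w
          gcongr; exact hC _
      _ ≤ C * Real.exp (1 / 8 * ‖x‖ ^ 2 + 1 / 8 * ‖w‖ ^ 2) * gk 1 w := by
          have := gk_pos one_pos w
          gcongr
      _ = _ := by
          rw [Real.exp_add, show ‖w‖ ^ 2 / (4 * 1) - ‖w‖ ^ 2 / (4 * 2) = 1 / 8 * ‖w‖ ^ 2 by ring]
          ring
  · have := ((SG.const (n := n) 1).gi.integrable two_pos 0)
    simp only [sub_zero, one_mul] at this
    exact (this.const_mul _).const_mul _
  · refine Filter.Eventually.of_forall fun w => ?_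
    refine Filter.Tendsto.mul_const _ ?_
    have h1 : Filter.Tendsto (fun t : ℝ => x + Real.sqrt t • w) (nhds 0) (nhds x) := by
      have : Continuous (fun t : ℝ => x + Real.sqrt t • w) := by fun_prop
      simpa using this.tendsto 0
    exact ((hφ.1.tendsto x).comp h1).mono_left nhdsWithin_le_nhds

end Deriv

/-! ### Energy integrability and the heat equation for Gaussian averages -/

section Energy

variable {n : ℕ}

/-- The squared length of the gradient. -/
noncomputable def gs (f : Euc n → ℝ) (z : Euc n) : ℝ := ∑ j, pd j f z ^ 2

lemma gs_nonneg (f : Euc n → ℝ) (z : Euc n) : 0 ≤ gs f z := Finset.sum_nonneg fun _ _ => sq_nonneg _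

lemma gs_continuous {f : Euc n → ℝ} (hf : ContDiff ℝ 1 f) : Continuous (gs f) :=
  continuous_finsetSum _ fun j _ => (pd_continuous j hf).pow 2

lemma lap_eq (f : Euc n → ℝ) (z : Euc n) : lap f z = ∑ j, pd j (pd j f) z := rfl

lemma smooth_one {f : Euc n → ℝ} (hf : ContDiff ℝ (⊤ : ℕ∞) f) : ContDiff ℝ 1 f :=
  hf.of_le (by norm_cast)

lemma smooth_diff {f : Euc n → ℝ} (hf : ContDiff ℝ (⊤ : ℕ∞) f) (z : Euc n) :
    DifferentiableAt ℝ f z := hf.differentiable (by simp) z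

/-- Caccioppoli's inequality with Gaussian weights: if `u Δu ≥ 0` and `u` has sub-Gaussian growth,
then `|∇u|²` is integrable against every Gaussian. -/
lemma gs_GI {u : Euc n → ℝ} (hu : ContDiff ℝ (⊤ : ℕ∞) u) (hsg : SG u)
    (hlap : ∀ z, 0 ≤ u z * lap u z) : GI (gs u) := by
  intro b hb
  obtain ⟨χ, C, hC, hs, hcs, h0, h1, hbd, he⟩ := exists_cutoff n
  set a : ℝ := b / 2 with ha
  have ha0 : 0 < a := by positivity
  set w : Euc n → ℝ := fun z => Real.exp (-a * ‖z‖ ^ 2) with hw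
  have hws : ContDiff ℝ (⊤ : ℕ∞) w :=
    (contDiff_const.mul (contDiff_id.norm_sq ℝ)).exp
  have hwpd : ∀ j z, pd j w z = -(2 * a * z j) * w z := by
    intro j z
    have h2 : DifferentiableAt ℝ (fun z : Euc n => ‖z - 0‖ ^ 2) z :=
      ((hasFDerivAt_id z).sub_const 0).norm_sq.differentiableAt
    have h3 : HasDerivAt (fun r : ℝ => Real.exp (-a * r)) (Real.exp (-a * ‖z - 0‖ ^ 2) * -a)
        (‖z - 0‖ ^ 2) := by
      simpa using ((hasDerivAt_id (‖z - 0‖ ^ 2)).const_mul (-a)).exp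
    have := pd_comp (f := fun z : Euc n => ‖z - 0‖ ^ 2) j h3 h2
    rw [pd_norm_sq] at this
    simp only [sub_zero] at this
    rw [hw, this]; simp; ring
  have hwp : ∀ z, 0 < w z := fun z => Real.exp_pos _
  have hB : GI (fun z => 4 * (u z ^ 2 * (n * (C + 2 * a * ‖z - 0‖) ^ 2))) :=
    ((hsg.pow 2).mul ((((SG.const C).add ((SG.norm_sub 0).const_mul (2 * a))).pow 2).const_mul n)).gi.const_mul 4
  have hBi := hB b hb
  have key : ∀ k, ∫ z, gs u z * (χ k z * w z) ^ 2
      ≤ ∫ z, 4 * (u z ^ 2 * (n * (C + 2 * a * ‖z - 0‖) ^ 2)) * Real.exp (-b * ‖z‖ ^ 2) := by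
    intro k
    set η : Euc n → ℝ := fun z => χ k z * w z with hη
    have hηs : ContDiff ℝ (⊤ : ℕ∞) η := (hs k).mul hws
    have hηc : HasCompactSupport η := (hcs k).mul_right
    have hgs : ContDiff ℝ (⊤ : ℕ∞) (fun z => u z * (η z * η z)) := hu.mul (hηs.mul hηs)
    have hgc : HasCompactSupport (fun z => u z * (η z * η z)) := (hηc.mul_right).mul_left
    have hpdg : ∀ j z, pd j (fun z => u z * (η z * η z)) z
        = η z ^ 2 * pd j u z + 2 * u z * η z * pd j η z := by
      intro j z
      rw [pd_mul (g := fun z => η z * η z) j (smooth_diff hu z)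
        ((smooth_diff hηs z).fun_mul (smooth_diff hηs z)),
        pd_mul j (smooth_diff hηs z) (smooth_diff hηs z)]
      ring
    have hsum : ∫ z, ∑ j, pd j u z * pd j (fun z => u z * (η z * η z)) z
        = - ∫ z, u z * lap u z * η z ^ 2 := by
      rw [integral_finsetSum]
      · have : ∀ z, u z * lap u z * η z ^ 2 = ∑ j, pd j (pd j u) z * (u z * (η z * η z)) := by
          intro z; rw [lap_eq, ← Finset.sum_mul]; ring
        simp only [this]
        rw [integral_finsetSum, ← Finset.sum_neg_distrib]
        · exact Finset.sum_congr rfl fun j _ =>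
            ibp_compact j (smooth_one (pd_contDiff j hu)) (smooth_one hgs) hgc
        · intro j _
          exact ((pd_continuous j (smooth_one (pd_contDiff j hu))).mul
            hgs.continuous).integrable_of_hasCompactSupport hgc.mul_left
      · intro j _
        exact ((pd_continuous j (smooth_one hu)).mul
          (pd_continuous j (smooth_one hgs))).integrable_of_hasCompactSupport
          (pd_hasCompactSupport j hgc).mul_left
    have hle0 : ∫ z, ∑ j, pd j u z * pd j (fun z => u z * (η z * η z)) z ≤ 0 := by
      rw [hsum]
      have : 0 ≤ ∫ z, u z * lap u z * η z ^ 2 :=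
        integral_nonneg fun z => mul_nonneg (hlap z) (sq_nonneg _)
      linarith
    have hint1 : Integrable (fun z => ∑ j, pd j u z * pd j (fun z => u z * (η z * η z)) z) := by
      refine integrable_finsetSum _ fun j _ => ?_
      exact ((pd_continuous j (smooth_one hu)).mul
          (pd_continuous j (smooth_one hgs))).integrable_of_hasCompactSupport
          (pd_hasCompactSupport j hgc).mul_left
    have hint0 : Integrable (fun z => gs u z * η z ^ 2) := by
      refine ((gs_continuous (smooth_one hu)).mul (hηs.continuous.pow 2)).integrable_of_hasCompactSupport
        (HasCompactSupport.mul_left ?_)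
      exact hηc.mono (fun z hz h => hz (by show η z ^ 2 = 0; rw [h]; norm_num))
    have hpt : ∀ z, gs u z * η z ^ 2 ≤ 2 * (∑ j, pd j u z * pd j (fun z => u z * (η z * η z)) z)
        + 4 * (u z ^ 2 * (n * (C + 2 * a * ‖z - 0‖) ^ 2)) * Real.exp (-b * ‖z‖ ^ 2) := by
      intro z
      have hww : Real.exp (-b * ‖z‖ ^ 2) = w z ^ 2 := by
        rw [hw]; simp only
        rw [sq (Real.exp _), ← Real.exp_add, ha]; ring_nf
      have hη1 : ∀ j, pd j η z ^ 2 ≤ (C + 2 * a * ‖z - 0‖) ^ 2 * w z ^ 2 := by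
        intro j
        have : pd j η z = (pd j (χ k) z - χ k z * (2 * a * z j)) * w z := by
          rw [hη, pd_mul j (smooth_diff (hs k) z) (smooth_diff hws z), hwpd]; ring
        rw [this, mul_pow]
        have hzj : |z j| ≤ ‖z - 0‖ := by
          have := PiLp.norm_apply_le (z - 0) j
          simpa using this
        have hab : |pd j (χ k) z - χ k z * (2 * a * z j)| ≤ C + 2 * a * ‖z - 0‖ := by
          refine (abs_sub _ _).trans (add_le_add (hbd k j z) ?_)
          rw [abs_mul, abs_mul, abs_of_nonneg (h0 k z), abs_of_pos (by positivity : 0 < 2 * a)]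
          calc χ k z * (2 * a * |z j|) ≤ 1 * (2 * a * ‖z - 0‖) := by
                gcongr
                exact h1 k z
            _ = _ := one_mul _
        have := sq_le_sq' (by linarith [abs_le.1 hab |>.1]) (abs_le.1 hab).2
        gcongr
      have hη2 : ∑ j, pd j η z ^ 2 ≤ n * (C + 2 * a * ‖z - 0‖) ^ 2 * w z ^ 2 := by
        refine (Finset.sum_le_sum fun j _ => hη1 j).trans (le_of_eq ?_)
        simp; ring
      have h3 : ∀ j, pd j u z ^ 2 * η z ^ 2 ≤ 2 * (pd j u z * pd j (fun z => u z * (η z * η z)) z)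
          + 4 * u z ^ 2 * pd j η z ^ 2 := by
        intro j
        rw [hpdg]
        nlinarith [sq_nonneg (pd j u z * η z + 2 * u z * pd j η z)]
      have h4 := Finset.sum_le_sum fun j (_ : j ∈ Finset.univ) => h3 j
      rw [Finset.sum_add_distrib, ← Finset.mul_sum, ← Finset.mul_sum, ← Finset.sum_mul] at h4
      rw [hww]
      refine h4.trans ?_
      have h5 : 4 * u z ^ 2 * ∑ j, pd j η z ^ 2
          ≤ 4 * u z ^ 2 * (n * (C + 2 * a * ‖z - 0‖) ^ 2 * w z ^ 2) := by gcongr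
      nlinarith
    have := integral_mono hint0 ((hint1.const_mul 2).add hBi) hpt
    refine this.trans ?_
    rw [integral_add' (hint1.const_mul 2) hBi, integral_const_mul]
    linarith
  -- exhaust by balls, on which the cutoffs equal one
  have hcov : AECover (volume : Measure (Euc n)) Filter.atTop
      (fun k : ℕ => ball (0 : Euc n) ((k : ℝ))) :=
    aecover_ball (tendsto_natCast_atTop_atTop)
  refine hcov.integrable_of_integral_bounded_of_nonneg_ae
    (∫ z, 4 * (u z ^ 2 * (n * (C + 2 * a * ‖z - 0‖) ^ 2)) * Real.exp (-b * ‖z‖ ^ 2)) ?_ ?_ ?_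
  · intro k
    have hcont : Continuous (fun z => gs u z * Real.exp (-b * ‖z‖ ^ 2)) :=
      (gs_continuous (smooth_one hu)).mul (by fun_prop)
    exact (hcont.continuousOn.integrableOn_compact (isCompact_closedBall 0 (k : ℝ))).mono_set
      ball_subset_closedBall
  · exact Filter.Eventually.of_forall fun z => mul_nonneg (gs_nonneg u z) (Real.exp_pos _).le
  · refine Filter.Eventually.of_forall fun k => le_trans ?_ (key k)
    have hcont2 : Continuous (fun z => gs u z * (χ k z * w z) ^ 2) :=
      (gs_continuous (smooth_one hu)).mul (((hs k).continuous.mul hws.continuous).pow 2)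
    have hint2 : Integrable (fun z => gs u z * (χ k z * w z) ^ 2) :=
      hcont2.integrable_of_hasCompactSupport ((hcs k).mono (fun z hz h => hz (by simp [h])))
    rw [← integral_indicator measurableSet_ball]
    refine integral_mono_of_nonneg ?_ hint2 ?_
    · refine Filter.Eventually.of_forall fun z => ?_
      exact Set.indicator_nonneg (fun z _ => mul_nonneg (gs_nonneg u z) (Real.exp_pos _).le) z
    · refine Filter.Eventually.of_forall fun z => ?_
      simp only [Set.indicator]
      split_ifs with hz
      · rw [mem_ball_zero_iff] at hz
        rw [(he k z hz).1, one_mul, hw]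
        simp only
        rw [sq (Real.exp _), ← Real.exp_add, ha]
        apply le_of_eq; ring_nf
      · exact mul_nonneg (gs_nonneg u z) (sq_nonneg _)

lemma GI.pd_sq {u : Euc n → ℝ} (hu : ContDiff ℝ 1 u) (h : GI (gs u)) (j : Fin n) :
    GI (fun z => pd j u z ^ 2) := by
  refine h.mono ((pd_continuous j hu).pow 2) (fun z => ?_)
  rw [abs_of_nonneg (sq_nonneg _)]
  exact Finset.single_le_sum (f := fun j => pd j u z ^ 2) (fun _ _ => sq_nonneg _) (Finset.mem_univ j)

lemma GI.of_sq_one {φ : Euc n → ℝ} (hc : Continuous φ) (h : GI (fun z => φ z ^ 2)) : GI φ := by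
  have := GI.of_sq hc (continuous_const (y := (1 : ℝ))) h
    (by simpa using (SG.const (n := n) 1).gi)
  simpa using this

lemma sum_coord_sq (x z : Euc n) : ∑ j, (z j - x j) ^ 2 = ‖z - x‖ ^ 2 := by
  rw [EuclideanSpace.norm_sq_eq]; simp

/-- Time derivative of a Gaussian average through the radial derivative. -/
lemma gi_hasDerivAt_grad {φ : Euc n → ℝ} (hs : ContDiff ℝ 1 φ) (hφ : GI φ)
    (hp : ∀ j, GI (pd j φ)) (x : Euc n) {t : ℝ} (ht : 0 < t) :
    HasDerivAt (gi φ x) (gi (fun z => ∑ j, pd j φ z * ((z j - x j) / (2 * t))) x t) t := by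
  refine (gi_hasDerivAt hφ hs.continuous x ht).congr_deriv ?_
  have hco : ∀ j, SG (fun z : Euc n => (z j - x j) / (2 * t)) := fun j => by
    simpa [div_eq_mul_inv] using (SG.coord x j).mul (SG.const (n := n) (2 * t)⁻¹)
  have hcd : ∀ j, ContDiff ℝ 1 (fun z : Euc n => (z j - x j) / (2 * t)) := fun j => by fun_prop
  have hpj : ∀ j z, pd j (fun z => φ z * ((z j - x j) / (2 * t))) z
      = φ z * (1 / (2 * t)) + pd j φ z * ((z j - x j) / (2 * t)) := by
    intro j z
    rw [pd_mul j (hs.differentiable one_ne_zero z) ((hcd j).differentiable one_ne_zero z)]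
    have : pd j (fun z => (z j - x j) / (2 * t)) z = 1 / (2 * t) := by
      have h1 := pd_const_mul (f := fun z : Euc n => z j - x j) (z := z) j (2 * t)⁻¹ (by fun_prop)
      rw [pd_coord, if_pos rfl] at h1
      simp only [div_eq_inv_mul]
      rw [h1]
    rw [this]; ring
  have hG1 : GI (fun z => ∑ j, pd j φ z * ((z j - x j) / (2 * t))) :=
    GI.sum fun j _ => (hp j).mul_SG (hco j)
  have hsumj : ∀ z, ∑ j, pd j (fun z => φ z * ((z j - x j) / (2 * t))) z
      = (n / (2 * t)) * φ z + ∑ j, pd j φ z * ((z j - x j) / (2 * t)) := by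
    intro z
    simp only [hpj]
    rw [Finset.sum_add_distrib]; simp; ring
  have hG2 : GI (fun z => (n / (2 * t)) * φ z + ∑ j, pd j φ z * ((z j - x j) / (2 * t))) :=
    (hφ.const_mul _).add hG1
  have := gauss_div (X := fun j z => φ z * ((z j - x j) / (2 * t)))
    (fun j => hs.mul (hcd j)) (fun j => hφ.mul_SG (hco j))
    (by simpa only [hsumj] using hG2) x ht
  simp only [hsumj] at this
  rw [gi_add (hφ.const_mul _) hG1 x ht, gi_const_mul] at this
  have e : ∀ z, φ z * (‖z - x‖ ^ 2 / (4 * t ^ 2) - n / (2 * t))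
      = (∑ j, φ z * ((z j - x j) / (2 * t)) * ((z j - x j) / (2 * t))) - (n / (2 * t)) * φ z := by
    intro z
    rw [← sum_coord_sq]
    have : ∀ j, φ z * ((z j - x j) / (2 * t)) * ((z j - x j) / (2 * t))
        = φ z * ((z j - x j) ^ 2) / (4 * t ^ 2) := by intro j; field_simp; ring
    simp only [this]
    rw [← Finset.sum_div, ← Finset.mul_sum]; ring
  rw [gi_congr x t e, gi_sub _ (hφ.const_mul _) x ht, gi_const_mul, ← this]
  · ring
  · exact GI.sum fun j _ => (hφ.mul_SG (hco j)).mul_SG (hco j)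

/-- Gaussian averages solve the heat equation. -/
lemma gi_hasDerivAt_lap {φ : Euc n → ℝ} (hs : ContDiff ℝ (⊤ : ℕ∞) φ) (hφ : GI φ)
    (hp : ∀ j, GI (pd j φ)) (hl : GI (lap φ)) (x : Euc n) {t : ℝ} (ht : 0 < t) :
    HasDerivAt (gi φ x) (gi (lap φ) x t) t := by
  refine (gi_hasDerivAt_grad (smooth_one hs) hφ hp x ht).congr_deriv ?_
  exact (gauss_div (X := fun j => pd j φ) (fun j => smooth_one (pd_contDiff j hs)) hp hl x ht).symm

end Energy

/-! ### Solutions and the Gaussian frequency -/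

section Frequency

variable {n : ℕ}

/-- Positive entire solutions of the system with linear growth. -/
structure Sol (u v : Euc n → ℝ) : Prop where
  hu : ContDiff ℝ (⊤ : ℕ∞) u
  hv : ContDiff ℝ (⊤ : ℕ∞) v
  pu : ∀ x, 0 < u x
  pv : ∀ x, 0 < v x
  eu : ∀ x, lap u x = u x * v x ^ 2
  ev : ∀ x, lap v x = v x * u x ^ 2
  gr : ∃ C₀ > (0 : ℝ), ∀ x, u x + v x ≤ C₀ * (1 + ‖x‖)

/-- Gaussian mean of `u² + v²`. -/
noncomputable def HH (u v : Euc n → ℝ) (x : Euc n) (t : ℝ) : ℝ :=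
  gi (fun z => u z ^ 2 + v z ^ 2) x t

/-- Gaussian mean of the interaction `u² v²`. -/
noncomputable def PP (u v : Euc n → ℝ) (x : Euc n) (t : ℝ) : ℝ :=
  gi (fun z => u z ^ 2 * v z ^ 2) x t

/-- The energy density `|∇u|² + |∇v|² + u²v²`. -/
noncomputable def ed (u v : Euc n → ℝ) (z : Euc n) : ℝ := gs u z + gs v z + u z ^ 2 * v z ^ 2

/-- Gaussian mean of the energy density. -/
noncomputable def DD (u v : Euc n → ℝ) (x : Euc n) (t : ℝ) : ℝ := gi (ed u v) x t

/-- The Gaussian (parabolic Almgren) frequency `2 t D / H`. -/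
noncomputable def NN (u v : Euc n → ℝ) (x : Euc n) (t : ℝ) : ℝ := 2 * t * DD u v x t / HH u v x t

/-- The radial derivative `(z - x) · ∇f`. -/
noncomputable def rad (f : Euc n → ℝ) (x z : Euc n) : ℝ := ∑ i, pd i f z * (z i - x i)

namespace Sol

variable {u v : Euc n → ℝ}

lemma symm (S : Sol u v) : Sol v u :=
  ⟨S.hv, S.hu, S.pv, S.pu, S.ev, S.eu, by
    obtain ⟨C, hC, h⟩ := S.gr; exact ⟨C, hC, fun x => by rw [add_comm]; exact h x⟩⟩

lemma SGu (S : Sol u v) : SG u := by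
  obtain ⟨C, hC, h⟩ := S.gr
  refine ((((SG.const 1).add (SG.norm_sub 0)).const_mul C)).mono S.hu.continuous (fun z => ?_)
  have h1 := h z
  have h2 := S.pu z
  have h3 := S.pv z
  rw [abs_of_pos h2, sub_zero, abs_of_nonneg (by positivity)]
  linarith

lemma SGv (S : Sol u v) : SG v := S.symm.SGu

lemma GIgu (S : Sol u v) : GI (gs u) :=
  gs_GI S.hu S.SGu (fun z => by rw [S.eu]; have := S.pu z; positivity)

lemma GIgv (S : Sol u v) : GI (gs v) := S.symm.GIgu

lemma GIpu2 (S : Sol u v) (j : Fin n) : GI (fun z => pd j u z ^ 2) :=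
  GI.pd_sq (smooth_one S.hu) S.GIgu j

lemma cpu (S : Sol u v) (j : Fin n) : Continuous (pd j u) := pd_continuous j (smooth_one S.hu)

lemma cpv (S : Sol u v) (j : Fin n) : Continuous (pd j v) := pd_continuous j (smooth_one S.hv)

lemma GIpv2 (S : Sol u v) (j : Fin n) : GI (fun z => pd j v z ^ 2) := S.symm.GIpu2 j

lemma GIpu (S : Sol u v) (j : Fin n) : GI (pd j u) := GI.of_sq_one (S.cpu j) (S.GIpu2 j)

lemma GIpv (S : Sol u v) (j : Fin n) : GI (pd j v) := S.symm.GIpu j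

lemma GIed (S : Sol u v) : GI (ed u v) :=
  (S.GIgu.add S.GIgv).add ((S.SGu.pow 2).mul (S.SGv.pow 2)).gi

lemma ed_cont (S : Sol u v) : Continuous (ed u v) :=
  ((gs_continuous (smooth_one S.hu)).add (gs_continuous (smooth_one S.hv))).add
    ((S.hu.continuous.pow 2).mul (S.hv.continuous.pow 2))

lemma SGH (S : Sol u v) : SG (fun z => u z ^ 2 + v z ^ 2) := (S.SGu.pow 2).add (S.SGv.pow 2)

lemma SGP (S : Sol u v) : SG (fun z => u z ^ 2 * v z ^ 2) := (S.SGu.pow 2).mul (S.SGv.pow 2)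

lemma H_pos (S : Sol u v) (x : Euc n) {t : ℝ} (ht : 0 < t) : 0 < HH u v x t :=
  gi_pos S.SGH.gi S.SGH.1 x ht (fun z => by have := S.pu z; have := S.pv z; positivity)

lemma P_nonneg (_S : Sol u v) (x : Euc n) {t : ℝ} (ht : 0 < t) : 0 ≤ PP u v x t :=
  gi_nonneg x ht (fun z => by positivity)

lemma P_pos (S : Sol u v) (x : Euc n) {t : ℝ} (ht : 0 < t) : 0 < PP u v x t :=
  gi_pos S.SGP.gi S.SGP.1 x ht (fun z => by have := S.pu z; have := S.pv z; positivity)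

lemma P_le_D (S : Sol u v) (x : Euc n) {t : ℝ} (ht : 0 < t) : PP u v x t ≤ DD u v x t :=
  gi_mono S.SGP.gi S.GIed x ht (fun z => by
    unfold ed; have := gs_nonneg u z; have := gs_nonneg v z; linarith)

lemma HH_symm (u v : Euc n → ℝ) (x : Euc n) (t : ℝ) : HH v u x t = HH u v x t :=
  gi_congr x t fun _ => add_comm _ _

lemma PP_symm (u v : Euc n → ℝ) (x : Euc n) (t : ℝ) : PP v u x t = PP u v x t :=
  gi_congr x t fun _ => mul_comm _ _

lemma pd_H (S : Sol u v) (j : Fin n) (z : Euc n) :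
    pd j (fun z => u z ^ 2 + v z ^ 2) z = 2 * u z * pd j u z + 2 * v z * pd j v z := by
  rw [pd_add j ((smooth_diff S.hu z).fun_pow 2) ((smooth_diff S.hv z).fun_pow 2),
    pd_sq j (smooth_diff S.hu z), pd_sq j (smooth_diff S.hv z)]

lemma lap_H (S : Sol u v) (z : Euc n) :
    lap (fun z => u z ^ 2 + v z ^ 2) z = 2 * ed u v z + 2 * (u z ^ 2 * v z ^ 2) := by
  rw [lap_eq]
  have h : ∀ j, pd j (pd j (fun z => u z ^ 2 + v z ^ 2)) z
      = 2 * pd j u z ^ 2 + 2 * u z * pd j (pd j u) z + (2 * pd j v z ^ 2 + 2 * v z * pd j (pd j v) z) := by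
    intro j
    rw [show pd j (fun z => u z ^ 2 + v z ^ 2) = fun z => 2 * u z * pd j u z + 2 * v z * pd j v z from
      funext fun z => S.pd_H j z]
    have du := smooth_diff S.hu z
    have dv := smooth_diff S.hv z
    have dpu := smooth_diff (pd_contDiff j S.hu) z
    have dpv := smooth_diff (pd_contDiff j S.hv) z
    rw [pd_add j ((du.const_mul 2).fun_mul dpu) ((dv.const_mul 2).fun_mul dpv),
      pd_mul j (du.const_mul 2) dpu, pd_mul j (dv.const_mul 2) dpv,
      pd_const_mul j 2 du, pd_const_mul j 2 dv]
    ring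
  simp only [h, Finset.sum_add_distrib, ← Finset.mul_sum]
  rw [← lap_eq, ← lap_eq, S.eu, S.ev]
  unfold ed gs
  ring

lemma GI_pd_H (S : Sol u v) (j : Fin n) : GI (pd j (fun z => u z ^ 2 + v z ^ 2)) := by
  have : pd j (fun z => u z ^ 2 + v z ^ 2) = fun z => 2 * u z * pd j u z + 2 * v z * pd j v z :=
    funext fun z => S.pd_H j z
  rw [this]
  exact ((S.GIpu j).SG_mul (S.SGu.const_mul 2)).add ((S.GIpv j).SG_mul (S.SGv.const_mul 2))

lemma smoothH (S : Sol u v) : ContDiff ℝ (⊤ : ℕ∞) (fun z => u z ^ 2 + v z ^ 2) :=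
  (S.hu.pow 2).add (S.hv.pow 2)

lemma H_deriv (S : Sol u v) (x : Euc n) {t : ℝ} (ht : 0 < t) :
    HasDerivAt (HH u v x) (2 * DD u v x t + 2 * PP u v x t) t := by
  have hl : lap (fun z => u z ^ 2 + v z ^ 2) = fun z => 2 * ed u v z + 2 * (u z ^ 2 * v z ^ 2) :=
    funext fun z => S.lap_H z
  have := gi_hasDerivAt_lap S.smoothH S.SGH.gi S.GI_pd_H
    (by rw [hl]; exact (S.GIed.const_mul 2).add (S.SGP.gi.const_mul 2)) x ht
  rw [hl, gi_add (S.GIed.const_mul 2) (S.SGP.gi.const_mul 2) x ht, gi_const_mul, gi_const_mul] at this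
  exact this

lemma A_deriv (S : Sol u v) (x : Euc n) {t : ℝ} (ht : 0 < t) :
    HasDerivAt (gi u x) (gi (fun z => u z * v z ^ 2) x t) t := by
  have hl : lap u = fun z => u z * v z ^ 2 := funext S.eu
  have := gi_hasDerivAt_lap S.hu S.SGu.gi S.GIpu
    (by rw [hl]; exact (S.SGu.mul (S.SGv.pow 2)).gi) x ht
  rwa [hl] at this

lemma rad_cont (S : Sol u v) (x : Euc n) : Continuous (rad u x) :=
  continuous_finsetSum _ fun i _ => (S.cpu i).mul (by fun_prop)

lemma GI_pp (S : Sol u v) (i j : Fin n) : GI (fun z => pd i u z * pd j u z) :=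
  GI.of_sq (S.cpu i) (S.cpu j) (S.GIpu2 i) (S.GIpu2 j)

lemma GI_rad2 (S : Sol u v) (x : Euc n) : GI (fun z => rad u x z ^ 2) := by
  have : (fun z => rad u x z ^ 2) = fun z => ∑ i, ∑ j, (pd i u z * pd j u z) *
      ((z i - x i) * (z j - x j)) := by
    funext z
    unfold rad
    rw [sq, Finset.sum_mul_sum]
    exact Finset.sum_congr rfl fun i _ => Finset.sum_congr rfl fun j _ => by ring
  rw [this]
  exact GI.sum fun i _ => GI.sum fun j _ => (S.GI_pp i j).mul_SG ((SG.coord x i).mul (SG.coord x j))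

lemma Q_eq (S : Sol u v) (x : Euc n) {t : ℝ} (ht : 0 < t) :
    gi (fun z => u z * rad u x z + v z * rad v x z) x t = 2 * t * (DD u v x t + PP u v x t) := by
  have h1 := (gi_hasDerivAt_grad (smooth_one S.smoothH) S.SGH.gi S.GI_pd_H x ht).unique
    (S.H_deriv x ht)
  have e : ∀ z, ∑ j, pd j (fun z => u z ^ 2 + v z ^ 2) z * ((z j - x j) / (2 * t))
      = (1 / t) * (u z * rad u x z + v z * rad v x z) := by
    intro z
    unfold rad
    rw [Finset.mul_sum, Finset.mul_sum, ← Finset.sum_add_distrib, Finset.mul_sum]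
    refine Finset.sum_congr rfl fun j _ => ?_
    rw [S.pd_H]
    field_simp
  rw [gi_congr x t e, gi_const_mul] at h1
  field_simp at h1
  linarith

lemma GI_urad (S : Sol u v) (x : Euc n) : GI (fun z => u z * rad u x z) :=
  GI.of_sq S.hu.continuous (S.rad_cont x) (S.SGu.pow 2).gi (S.GI_rad2 x)

/-- Cauchy–Schwarz between the pair `(u, v)` and its radial derivative. -/
lemma Q_cs (S : Sol u v) (x : Euc n) {t : ℝ} (ht : 0 < t) :
    (gi (fun z => u z * rad u x z + v z * rad v x z) x t) ^ 2
      ≤ HH u v x t * gi (fun z => rad u x z ^ 2 + rad v x z ^ 2) x t := by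
  have hm : GI (fun z => u z * rad u x z + v z * rad v x z) := (S.GI_urad x).add (S.symm.GI_urad x)
  have hr : GI (fun z => rad u x z ^ 2 + rad v x z ^ 2) := (S.GI_rad2 x).add (S.symm.GI_rad2 x)
  have key : ∀ r : ℝ, 0 ≤ gi (fun z => rad u x z ^ 2 + rad v x z ^ 2) x t * (r * r)
      + (2 * gi (fun z => u z * rad u x z + v z * rad v x z) x t) * r + HH u v x t := by
    intro r
    have h0 : 0 ≤ gi (fun z => (u z + r * rad u x z) ^ 2 + (v z + r * rad v x z) ^ 2) x t :=
      gi_nonneg x ht (fun z => by positivity)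
    have e : gi (fun z => (u z + r * rad u x z) ^ 2 + (v z + r * rad v x z) ^ 2) x t
        = gi (fun z => (u z ^ 2 + v z ^ 2) + ((2 * r) * (u z * rad u x z + v z * rad v x z)
          + (r * r) * (rad u x z ^ 2 + rad v x z ^ 2))) x t :=
      gi_congr x t (fun z => by ring)
    rw [e, gi_add S.SGH.gi ((hm.const_mul _).add (hr.const_mul _)) x ht,
      gi_add (hm.const_mul _) (hr.const_mul _) x ht, gi_const_mul, gi_const_mul] at h0
    unfold HH
    linarith
  have := discrim_le_zero key
  unfold discrim at this
  nlinarith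

lemma pd_comm {f : Euc n → ℝ} (hf : ContDiff ℝ (⊤ : ℕ∞) f) (i j : Fin n) (z : Euc n) :
    pd j (pd i f) z = pd i (pd j f) z := by
  have h2 : DifferentiableAt ℝ (fderiv ℝ f) z :=
    (hf.fderiv_right (m := (⊤ : ℕ∞)) (by norm_cast)).differentiable (by simp) z
  have h1 : ∀ a b : Fin n, pd a (pd b f) z
      = fderiv ℝ (fderiv ℝ f) z (EuclideanSpace.single a 1) (EuclideanSpace.single b 1) := by
    intro a b
    unfold pd
    rw [fderiv_clm_apply h2 (differentiableAt_const _)]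
    simp
  rw [h1, h1]
  have hsym : IsSymmSndFDerivAt ℝ f z := (hf.contDiffAt).isSymmSndFDerivAt (by
    rw [minSmoothness_of_isRCLikeNormedField]
    exact (WithTop.coe_le_coe.2 le_top : ((2 : ℕ∞) : WithTop ℕ∞) ≤ _))
  exact hsym _ _

lemma pd_rad {f : Euc n → ℝ} (hf : ContDiff ℝ (⊤ : ℕ∞) f) (j : Fin n) (x z : Euc n) :
    pd j (rad f x) z = (∑ i, pd j (pd i f) z * (z i - x i)) + pd j f z := by
  have h1 : pd j (rad f x) z = ∑ i, pd j (fun z => pd i f z * (z i - x i)) z := by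
    unfold rad
    exact pd_sum _ j (fun i _ => (smooth_diff (pd_contDiff i hf) z).fun_mul (by fun_prop))
  rw [h1]
  have h2 : ∀ i, pd j (fun z => pd i f z * (z i - x i)) z
      = pd j (pd i f) z * (z i - x i) + (if i = j then pd i f z else 0) := by
    intro i
    rw [pd_mul j (smooth_diff (pd_contDiff i hf) z) (by fun_prop), pd_coord]
    split_ifs <;> ring
  simp only [h2, Finset.sum_add_distrib]
  simp

lemma pd_gs {f : Euc n → ℝ} (hf : ContDiff ℝ (⊤ : ℕ∞) f) (j : Fin n) (z : Euc n) :
    pd j (gs f) z = ∑ i, 2 * pd i f z * pd j (pd i f) z := by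
  have h1 : pd j (gs f) z = ∑ i, pd j (fun z => pd i f z ^ 2) z := by
    unfold gs
    exact pd_sum _ j (fun i _ => (smooth_diff (pd_contDiff i hf) z).fun_pow 2)
  rw [h1]
  exact Finset.sum_congr rfl fun i _ => pd_sq j (smooth_diff (pd_contDiff i hf) z)

lemma rad_smooth {f : Euc n → ℝ} (hf : ContDiff ℝ (⊤ : ℕ∞) f) (x : Euc n) :
    ContDiff ℝ (⊤ : ℕ∞) (rad f x) := by
  unfold rad
  refine ContDiff.sum fun i _ => (pd_contDiff i hf).mul ?_
  fun_prop

lemma gs_smooth {f : Euc n → ℝ} (hf : ContDiff ℝ (⊤ : ℕ∞) f) : ContDiff ℝ (⊤ : ℕ∞) (gs f) := by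
  unfold gs
  exact ContDiff.sum fun i _ => (pd_contDiff i hf).pow 2

lemma ed_smooth (S : Sol u v) : ContDiff ℝ (⊤ : ℕ∞) (ed u v) :=
  ((gs_smooth S.hu).add (gs_smooth S.hv)).add ((S.hu.pow 2).mul (S.hv.pow 2))

lemma pd_ed (S : Sol u v) (j : Fin n) (z : Euc n) :
    pd j (ed u v) z = (∑ i, 2 * pd i u z * pd j (pd i u) z) + (∑ i, 2 * pd i v z * pd j (pd i v) z)
      + (u z ^ 2 * (2 * v z * pd j v z) + v z ^ 2 * (2 * u z * pd j u z)) := by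
  have du := smooth_diff S.hu z
  have dv := smooth_diff S.hv z
  have e1 : pd j (ed u v) z = pd j (fun z => gs u z + gs v z) z
      + pd j (fun z => u z ^ 2 * v z ^ 2) z := by
    unfold ed
    exact pd_add j ((smooth_diff (gs_smooth S.hu) z).fun_add (smooth_diff (gs_smooth S.hv) z))
      ((du.fun_pow 2).fun_mul (dv.fun_pow 2))
  rw [e1, pd_add j (smooth_diff (gs_smooth S.hu) z) (smooth_diff (gs_smooth S.hv) z),
    pd_gs S.hu, pd_gs S.hv, pd_mul j (du.fun_pow 2) (dv.fun_pow 2), pd_sq j du, pd_sq j dv]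

/-- The stress field contracted with `z - x`. -/
noncomputable def stress (u v : Euc n → ℝ) (x : Euc n) (j : Fin n) (z : Euc n) : ℝ :=
  rad u x z * pd j u z + rad v x z * pd j v z - 1 / 2 * (ed u v z * (z j - x j))

lemma div_stress (S : Sol u v) (x z : Euc n) :
    ∑ j, pd j (stress u v x j) z = gs u z + gs v z - n / 2 * ed u v z := by
  have du := smooth_diff S.hu z
  have dv := smooth_diff S.hv z
  have hj : ∀ j, pd j (stress u v x j) z
      = (rad u x z * pd j (pd j u) z + pd j u z * ((∑ i, pd j (pd i u) z * (z i - x i)) + pd j u z))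
      + (rad v x z * pd j (pd j v) z + pd j v z * ((∑ i, pd j (pd i v) z * (z i - x i)) + pd j v z))
      - 1 / 2 * (ed u v z + (z j - x j) * ((∑ i, 2 * pd i u z * pd j (pd i u) z)
        + (∑ i, 2 * pd i v z * pd j (pd i v) z)
      + (u z ^ 2 * (2 * v z * pd j v z) + v z ^ 2 * (2 * u z * pd j u z)))) := by
    intro j
    have dru := smooth_diff (rad_smooth S.hu x) z
    have drv := smooth_diff (rad_smooth S.hv x) z
    have dpu := smooth_diff (pd_contDiff j S.hu) z
    have dpv := smooth_diff (pd_contDiff j S.hv) z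
    have ded := smooth_diff S.ed_smooth z
    have dc : DifferentiableAt ℝ (fun z : Euc n => z j - x j) z := by fun_prop
    have e : pd j (stress u v x j) z = pd j (fun z => rad u x z * pd j u z + rad v x z * pd j v z) z
        - pd j (fun z => 1 / 2 * (ed u v z * (z j - x j))) z := by
      unfold stress
      exact pd_sub j ((dru.fun_mul dpu).fun_add (drv.fun_mul dpv)) ((ded.fun_mul dc).const_mul _)
    rw [e, pd_add j (dru.fun_mul dpu) (drv.fun_mul dpv), pd_mul j dru dpu, pd_mul j drv dpv,
      pd_const_mul j _ (ded.fun_mul dc), pd_mul j ded dc, pd_rad S.hu, pd_rad S.hv, S.pd_ed, pd_coord,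
      if_pos rfl]
    ring
  have hsw : ∀ f : Euc n → ℝ, ContDiff ℝ (⊤ : ℕ∞) f →
      ∑ j, pd j f z * (∑ i, pd j (pd i f) z * (z i - x i))
        = ∑ j, (z j - x j) * ∑ i, pd i f z * pd j (pd i f) z := by
    intro f hf
    simp only [Finset.mul_sum]
    rw [Finset.sum_comm]
    refine Finset.sum_congr rfl fun i _ => Finset.sum_congr rfl fun j _ => ?_
    rw [pd_comm hf i j]; ring
  have h2 : ∀ j, pd j (stress u v x j) z
      = rad u x z * pd j (pd j u) z + rad v x z * pd j (pd j v) z + pd j u z ^ 2 + pd j v z ^ 2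
      + (pd j u z * (∑ i, pd j (pd i u) z * (z i - x i)))
      + (pd j v z * (∑ i, pd j (pd i v) z * (z i - x i)))
      - (z j - x j) * (∑ i, pd i u z * pd j (pd i u) z)
      - (z j - x j) * (∑ i, pd i v z * pd j (pd i v) z)
      - 1 / 2 * ed u v z - u z ^ 2 * v z * (pd j v z * (z j - x j))
        - v z ^ 2 * u z * (pd j u z * (z j - x j)) := by
    intro j
    rw [hj j]
    have e1 : ∀ f : Euc n → ℝ, ∑ i, 2 * pd i f z * pd j (pd i f) z
        = 2 * ∑ i, pd i f z * pd j (pd i f) z := by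
      intro f; rw [Finset.mul_sum]; exact Finset.sum_congr rfl fun i _ => by ring
    rw [e1, e1]
    ring
  simp only [h2, Finset.sum_sub_distrib, Finset.sum_add_distrib]
  have k1 : ∑ j, rad u x z * pd j (pd j u) z = rad u x z * (u z * v z ^ 2) := by
    rw [← Finset.mul_sum, ← lap_eq, S.eu]
  have k2 : ∑ j, rad v x z * pd j (pd j v) z = rad v x z * (v z * u z ^ 2) := by
    rw [← Finset.mul_sum, ← lap_eq, S.ev]
  have k3 : ∑ j, u z ^ 2 * v z * (pd j v z * (z j - x j)) = u z ^ 2 * v z * rad v x z := by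
    rw [← Finset.mul_sum]; rfl
  have k4 : ∑ j, v z ^ 2 * u z * (pd j u z * (z j - x j)) = v z ^ 2 * u z * rad u x z := by
    rw [← Finset.mul_sum]; rfl
  rw [hsw u S.hu, hsw v S.hv, k1, k2, k3, k4]
  simp only [Finset.sum_const, Finset.card_univ, Fintype.card_fin, nsmul_eq_mul]
  unfold gs
  ring

lemma D_deriv (S : Sol u v) (x : Euc n) {t : ℝ} (ht : 0 < t) :
    HasDerivAt (DD u v x) ((gi (fun z => rad u x z ^ 2 + rad v x z ^ 2) x t / (2 * t)
      - DD u v x t + PP u v x t) / t) t := by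
  refine (gi_hasDerivAt S.GIed S.ed_cont x ht).congr_deriv ?_
  have hr : GI (fun z => rad u x z ^ 2 + rad v x z ^ 2) := (S.GI_rad2 x).add (S.symm.GI_rad2 x)
  have hgg : GI (fun z => gs u z + gs v z) := S.GIgu.add S.GIgv
  have hrp : ∀ {a b : Euc n → ℝ}, Sol a b → ∀ j, GI (fun z => rad a x z * pd j a z) := fun T j =>
    GI.of_sq (T.rad_cont x) (T.cpu j) (T.GI_rad2 x) (T.GIpu2 j)
  have hdiv := gauss_div (X := stress u v x)
    (fun j => by
      unfold stress
      refine smooth_one ((((rad_smooth S.hu x).mul (pd_contDiff j S.hu)).add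
        ((rad_smooth S.hv x).mul (pd_contDiff j S.hv))).sub
        (contDiff_const.mul (S.ed_smooth.mul ?_)))
      fun_prop)
    (fun j => ((hrp S j).add (hrp S.symm j)).sub
      ((S.GIed.mul_SG (SG.coord x j)).const_mul _))
    (by simp only [S.div_stress]; exact hgg.sub (S.GIed.const_mul _)) x ht
  simp only [S.div_stress] at hdiv
  have hw2 : GI (fun z => ed u v z * ‖z - x‖ ^ 2) := S.GIed.mul_SG ((SG.norm_sub x).pow 2)
  have e : ∀ z, ∑ j, stress u v x j z * ((z j - x j) / (2 * t))
      = (1 / (2 * t)) * (rad u x z ^ 2 + rad v x z ^ 2) - (1 / (4 * t)) * (ed u v z * ‖z - x‖ ^ 2) := by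
    intro z
    have hj : ∀ j, stress u v x j z * ((z j - x j) / (2 * t))
        = (1 / (2 * t)) * (rad u x z * (pd j u z * (z j - x j)))
          + (1 / (2 * t)) * (rad v x z * (pd j v z * (z j - x j)))
          - (1 / (4 * t)) * (ed u v z * (z j - x j) ^ 2) := by
      intro j; unfold stress; field_simp; ring
    simp only [hj, Finset.sum_sub_distrib, Finset.sum_add_distrib, ← Finset.mul_sum]
    rw [sum_coord_sq, show ∑ i, pd i v z * (z i - x i) = rad v x z from rfl,
      show ∑ i, pd i u z * (z i - x i) = rad u x z from rfl]
    ring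
  rw [gi_congr x t e, gi_sub hgg (S.GIed.const_mul _) x ht, gi_const_mul,
    gi_sub (hr.const_mul _) (hw2.const_mul _) x ht, gi_const_mul, gi_const_mul] at hdiv
  have hD : DD u v x t = gi (fun z => gs u z + gs v z) x t + PP u v x t := by
    unfold DD PP
    rw [← gi_add hgg S.SGP.gi x ht]; rfl
  have e2 : ∀ z, ed u v z * (‖z - x‖ ^ 2 / (4 * t ^ 2) - n / (2 * t))
      = (1 / (4 * t ^ 2)) * (ed u v z * ‖z - x‖ ^ 2) - (n / (2 * t)) * ed u v z := by
    intro z; ring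
  rw [gi_congr x t e2, gi_sub (hw2.const_mul _) (S.GIed.const_mul _) x ht, gi_const_mul, gi_const_mul]
  rw [show gi (fun z => ed u v z) x t = DD u v x t from rfl] at *
  have h3 : (1 / (4 * t)) * gi (fun z => ed u v z * ‖z - x‖ ^ 2) x t
      = (1 / (2 * t)) * gi (fun z => rad u x z ^ 2 + rad v x z ^ 2) x t
        - (DD u v x t - PP u v x t) + n / 2 * DD u v x t := by linarith
  have h4 : (1 / (4 * t ^ 2)) * gi (fun z => ed u v z * ‖z - x‖ ^ 2) x t
      = ((1 / (4 * t)) * gi (fun z => ed u v z * ‖z - x‖ ^ 2) x t) / t := by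
    field_simp
  rw [h4, h3]
  field_simp
  ring

end Sol

end Frequency

/-! ### Monotonicity of the frequency and its consequences -/

section Monotone

variable {n : ℕ}

lemma mono_Icc {f : ℝ → ℝ} {a b : ℝ} (hab : a ≤ b)
    (h : ∀ t ∈ Icc a b, ∃ f', HasDerivAt f f' t ∧ 0 ≤ f') : f a ≤ f b := by
  choose! f' hf using h
  refine (monotoneOn_of_deriv_nonneg (convex_Icc a b) (fun t ht => (hf t ht).1.continuousAt.continuousWithinAt)
    (fun t ht => ((hf t (interior_subset ht)).1.differentiableAt).differentiableWithinAt)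
    (fun t ht => ?_)) (left_mem_Icc.2 hab) (right_mem_Icc.2 hab) hab
  rw [(hf t (interior_subset ht)).1.deriv]
  exact (hf t (interior_subset ht)).2

lemma mono_pos {f : ℝ → ℝ} (h : ∀ t, 0 < t → ∃ f', HasDerivAt f f' t ∧ 0 ≤ f') {a b : ℝ}
    (ha : 0 < a) (hab : a ≤ b) : f a ≤ f b :=
  mono_Icc hab fun t ht => h t (ha.trans_le ht.1)

/-- Gaussian means of radial functions are scale invariant. -/
lemma gi_radial (ψ : ℝ → ℝ) (x : Euc n) {t : ℝ} (ht : 0 < t) :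
    gi (fun z => ψ (‖z - x‖ / √t)) x t = gi (fun w : Euc n => ψ ‖w‖) 0 1 := by
  have hs : 0 < √t := Real.sqrt_pos.2 ht
  rw [gi_eq_scaled _ x ht]
  unfold gi
  refine integral_congr_ae (Filter.Eventually.of_forall fun w => ?_)
  simp only [add_sub_cancel_left, norm_smul, sub_zero, Real.norm_of_nonneg hs.le]
  rw [mul_div_cancel_left₀ _ hs.ne']

/-- The exponential moment `∫ exp(k|w|) G₁(w) dw`. -/
noncomputable def EE (n : ℕ) (k : ℝ) : ℝ := gi (fun w : Euc n => Real.exp (k * ‖w‖)) 0 1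

/-- The second moment `∫ |w|² G₁(w) dw`. -/
noncomputable def M2 (n : ℕ) : ℝ := gi (fun w : Euc n => ‖w‖ ^ 2) 0 1

lemma gi_exp (k : ℝ) (x : Euc n) {t : ℝ} (ht : 0 < t) :
    gi (fun z => Real.exp (k * (‖z - x‖ / √t))) x t = EE n k :=
  gi_radial (fun r => Real.exp (k * r)) x ht

lemma SG_exp (k : ℝ) (x : Euc n) (t : ℝ) : SG (fun z : Euc n => Real.exp (k * (‖z - x‖ / √t))) := by
  have := SG.exp_norm_sub (k / √t) x
  refine this.mono (by fun_prop) (fun z => le_of_eq ?_)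
  congr 2
  ring

lemma gi_norm_sq (x : Euc n) {t : ℝ} (ht : 0 < t) : gi (fun z => ‖z - x‖ ^ 2) x t = t * M2 n := by
  have h := gi_radial (n := n) (fun r => r ^ 2) x ht
  unfold M2
  rw [← h, ← gi_const_mul]
  refine gi_congr x t fun z => ?_
  rw [div_pow, Real.sq_sqrt ht.le]
  field_simp

lemma M2_nonneg (n : ℕ) : 0 ≤ M2 n := gi_nonneg _ one_pos fun _ => by positivity

lemma EE_one_le {k : ℝ} (hk : 0 ≤ k) : 1 ≤ EE n k := by
  have h := gi_mono (SG.const (n := n) 1).gi (SG_exp k 0 1).gi 0 one_pos (fun z =>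
    Real.one_le_exp (by positivity))
  rwa [gi_const one_pos, gi_exp k 0 one_pos] at h

lemma le_gi_of_mono {φ : Euc n → ℝ} (hφ : SG φ) (x : Euc n)
    (h : ∀ s t, 0 < s → s ≤ t → gi φ x s ≤ gi φ x t) {t : ℝ} (ht : 0 < t) : φ x ≤ gi φ x t := by
  refine le_of_tendsto (gi_tendsto hφ x) ?_
  filter_upwards [Ioc_mem_nhdsGT ht] with s hs
  exact h s t hs.1 hs.2

namespace Sol

variable {u v : Euc n → ℝ}

/-- Quantitative monotonicity of the frequency. The part of the derivative beyond `2 P / H` is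
nonnegative by `Q_cs`. -/
lemma N_deriv (S : Sol u v) (x : Euc n) {t : ℝ} (ht : 0 < t) :
    ∃ N', HasDerivAt (NN u v x) N' t ∧ 2 * PP u v x t / HH u v x t ≤ N' := by
  have hH := S.H_pos x ht
  have hP := S.P_nonneg x ht
  have hD : 0 ≤ DD u v x t := hP.trans (S.P_le_D x ht)
  have hq := S.Q_cs x ht
  rw [S.Q_eq x ht] at hq
  have h1 := (((hasDerivAt_id t).const_mul 2).fun_mul (S.D_deriv x ht)).div (S.H_deriv x ht) hH.ne'
  refine ⟨_, h1, ?_⟩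
  set W := gi (fun z => rad u x z ^ 2 + rad v x z ^ 2) x t
  set H := HH u v x t
  set D := DD u v x t
  set P := PP u v x t
  simp only [id]
  have e : (2 * t * ((W / (2 * t) - D + P) / t)) = W / t - 2 * D + 2 * P := by field_simp
  rw [div_le_div_iff₀ hH (by positivity), mul_one, e]
  have hw : 4 * t * (D + P) ^ 2 ≤ H * (W / t) := by
    rw [mul_div_assoc', le_div_iff₀ ht]
    nlinarith
  have : 2 * P * H ≤ (2 * D + (W / t - 2 * D + 2 * P)) * H - 2 * t * D * (2 * D + 2 * P) := by
    have : 0 ≤ t * P * (D + P) := by positivity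
    nlinarith
  have h5 := mul_le_mul_of_nonneg_right this hH.le
  refine le_trans (le_of_eq (by ring)) (h5.trans (le_of_eq ?_))
  ring

lemma N_nonneg (S : Sol u v) (x : Euc n) {t : ℝ} (ht : 0 < t) : 0 ≤ NN u v x t := by
  have hH := S.H_pos x ht
  have hP := S.P_nonneg x ht
  have hD : 0 ≤ DD u v x t := hP.trans (S.P_le_D x ht)
  unfold NN; positivity

lemma N_mono (S : Sol u v) (x : Euc n) {s t : ℝ} (hs : 0 < s) (hst : s ≤ t) :
    NN u v x s ≤ NN u v x t :=
  mono_pos (fun t ht => by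
    obtain ⟨N', h, h'⟩ := S.N_deriv x ht
    exact ⟨N', h, (div_nonneg (mul_nonneg two_pos.le (S.P_nonneg x ht)) (S.H_pos x ht).le).trans h'⟩)
    hs hst

lemma H_mono (S : Sol u v) (x : Euc n) {s t : ℝ} (hs : 0 < s) (hst : s ≤ t) :
    HH u v x s ≤ HH u v x t :=
  mono_pos (fun t ht => ⟨_, S.H_deriv x ht, by
    have := S.P_nonneg x ht
    have := S.P_le_D x ht
    linarith⟩) hs hst

lemma A_mono (S : Sol u v) (x : Euc n) {s t : ℝ} (hs : 0 < s) (hst : s ≤ t) :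
    gi u x s ≤ gi u x t :=
  mono_pos (fun t ht => ⟨_, S.A_deriv x ht, gi_nonneg x ht fun z => by
    have := S.pu z; positivity⟩) hs hst

lemma B_mono (S : Sol u v) (x : Euc n) {s t : ℝ} (hs : 0 < s) (hst : s ≤ t) :
    gi v x s ≤ gi v x t := S.symm.A_mono x hs hst

lemma u_le_A (S : Sol u v) (x : Euc n) {t : ℝ} (ht : 0 < t) : u x ≤ gi u x t :=
  le_gi_of_mono S.SGu x (fun _ _ => S.A_mono x) ht

lemma sq_le_H (S : Sol u v) (x : Euc n) {t : ℝ} (ht : 0 < t) : u x ^ 2 + v x ^ 2 ≤ HH u v x t :=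
  le_gi_of_mono S.SGH x (fun _ _ => S.H_mono x) ht

lemma logH_deriv (S : Sol u v) (x : Euc n) {t : ℝ} (ht : 0 < t) :
    HasDerivAt (fun t => Real.log (HH u v x t))
      ((2 * DD u v x t + 2 * PP u v x t) / HH u v x t) t :=
  (S.H_deriv x ht).log (S.H_pos x ht).ne'

/-- If the frequency is at least `ν` from time `a` on then `H` grows at least like `t ^ ν`. -/
lemma H_growth (S : Sol u v) (x : Euc n) {a b ν : ℝ} (ha : 0 < a) (hab : a ≤ b)
    (hν : ν ≤ NN u v x a) :
    Real.log (HH u v x a) + ν * (Real.log b - Real.log a) ≤ Real.log (HH u v x b) := by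
  have := mono_Icc (f := fun t => Real.log (HH u v x t) - ν * Real.log t) hab (fun t ht => by
    have ht0 := ha.trans_le ht.1
    refine ⟨_, (S.logH_deriv x ht0).sub ((Real.hasDerivAt_log ht0.ne').const_mul ν), ?_⟩
    have hN := hν.trans (S.N_mono x ha ht.1)
    have hH := S.H_pos x ht0
    have hP := S.P_nonneg x ht0
    unfold NN at hN
    rw [le_div_iff₀ hH] at hN
    rw [sub_nonneg, ← div_eq_mul_inv, div_le_div_iff₀ ht0 hH]
    nlinarith)
  linarith

lemma H_upper (S : Sol u v) : ∃ C > (0 : ℝ), ∀ (x : Euc n) (t : ℝ), 0 < t →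
    HH u v x t ≤ C * ((1 + ‖x‖) ^ 2 + t) := by
  obtain ⟨C₀, hC₀, hg⟩ := S.gr
  have hM := M2_nonneg n
  refine ⟨2 * C₀ ^ 2 * (1 + M2 n), by positivity, fun x t ht => ?_⟩
  have h1 : HH u v x t ≤ gi (fun z => 2 * C₀ ^ 2 * (1 + ‖x‖) ^ 2 + 2 * C₀ ^ 2 * ‖z - x‖ ^ 2) x t := by
    refine gi_mono S.SGH.gi ((SG.const _).add (((SG.norm_sub x).pow 2).const_mul _)).gi x ht
      (fun z => ?_)
    have h2 := hg z
    have h3 := S.pu z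
    have h4 := S.pv z
    have h5 : ‖z‖ ≤ ‖x‖ + ‖z - x‖ := by
      have := norm_add_le x (z - x); simpa using this
    have h6 : u z + v z ≤ C₀ * ((1 + ‖x‖) + ‖z - x‖) := 
      h2.trans (mul_le_mul_of_nonneg_left (by linarith) hC₀.le)
    have h7 : (u z + v z) ^ 2 ≤ (C₀ * ((1 + ‖x‖) + ‖z - x‖)) ^ 2 := by gcongr
    nlinarith [mul_pos h3 h4, mul_nonneg (sq_nonneg C₀) (sq_nonneg ((1 + ‖x‖) - ‖z - x‖))]
  rw [gi_add (SG.const _).gi (((SG.norm_sub x).pow 2).const_mul _).gi x ht, gi_const ht,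
    gi_const_mul, gi_norm_sq x ht] at h1
  refine h1.trans ?_
  have : 0 ≤ C₀ ^ 2 * (1 + ‖x‖) ^ 2 * M2 n := by positivity
  have : 0 ≤ C₀ ^ 2 * t := by positivity
  nlinarith

/-- A frequency above `1` at one time would make `H` grow faster than `t`, against linear growth. -/
lemma N_le_one (S : Sol u v) (x : Euc n) {t : ℝ} (ht : 0 < t) : NN u v x t ≤ 1 := by
  by_contra hcon
  push Not at hcon
  obtain ⟨C, hC, hCH⟩ := S.H_upper
  set ν := NN u v x t with hν
  set K := Real.log (C * ((1 + ‖x‖) ^ 2 + 1)) - Real.log (HH u v x t) + ν * Real.log t with hK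
  have hlim : Filter.Tendsto (fun s : ℝ => (ν - 1) * Real.log s) Filter.atTop Filter.atTop :=
    Real.tendsto_log_atTop.const_mul_atTop (by linarith)
  obtain ⟨s, hs1, hs2⟩ := ((hlim.eventually_gt_atTop K).and
    (Filter.eventually_ge_atTop (max t 1))).exists
  have hst : t ≤ s := (le_max_left _ _).trans hs2
  have hs1' : 1 ≤ s := (le_max_right _ _).trans hs2
  have hs0 : 0 < s := by linarith
  have h1 := S.H_growth x ht hst hν.le
  have h2 : HH u v x s ≤ (C * ((1 + ‖x‖) ^ 2 + 1)) * s := by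
    refine (hCH x s hs0).trans ?_
    have : 0 ≤ C * (1 + ‖x‖) ^ 2 := by positivity
    nlinarith
  have h3 := Real.log_le_log (S.H_pos x hs0) h2
  rw [Real.log_mul (by positivity) hs0.ne'] at h3
  linarith

/-- `H(b) ≤ e (b/a) H(a)`. -/
lemma H_doubling (S : Sol u v) (x : Euc n) {a b : ℝ} (ha : 0 < a) (hab : a ≤ b) :
    HH u v x b ≤ Real.exp 1 * (b / a) * HH u v x a := by
  have hb := ha.trans_le hab
  have := mono_Icc (f := fun t => NN u v x t + Real.log t - Real.log (HH u v x t)) hab (fun t ht => by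
    have ht0 := ha.trans_le ht.1
    obtain ⟨N', h, h'⟩ := S.N_deriv x ht0
    refine ⟨_, (h.add (Real.hasDerivAt_log ht0.ne')).sub (S.logH_deriv x ht0), ?_⟩
    have hN := S.N_le_one x ht0
    have hH := S.H_pos x ht0
    unfold NN at hN
    rw [div_le_iff₀ hH] at hN
    have h3 : 2 * DD u v x t / HH u v x t ≤ t⁻¹ := by
      rw [inv_eq_one_div, div_le_div_iff₀ hH ht0]; linarith
    rw [add_div]
    linarith)
  have h1 := S.N_le_one x hb
  have h2 := S.N_nonneg x ha
  have h3 : Real.log (HH u v x b) ≤ 1 + (Real.log b - Real.log a) + Real.log (HH u v x a) := by linarith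
  have hHa := S.H_pos x ha
  have hHb := S.H_pos x hb
  rw [← Real.log_le_log_iff hHb (by positivity), Real.log_mul (by positivity) hHa.ne',
    Real.log_mul (by positivity) (by positivity), Real.log_exp, Real.log_div hb.ne' ha.ne']
  exact h3

lemma D_le (S : Sol u v) (x : Euc n) {t : ℝ} (ht : 0 < t) : 2 * t * DD u v x t ≤ HH u v x t := by
  have h := S.N_le_one x ht
  unfold NN at h
  rwa [div_le_one (S.H_pos x ht)] at h

lemma line_bound (S : Sol u v) (c e : Euc n) (he : e ≠ 0) {t : ℝ} (ht : 0 < t) :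
    |gi (fun z => (u z ^ 2 + v z ^ 2) * (⟪z - c, e⟫ / (2 * t))) c t|
      ≤ 2 * (‖e‖ / √t) * HH u v c t := by
  have hs : 0 < √t := Real.sqrt_pos.2 ht
  have hst : √t * √t = t := Real.mul_self_sqrt ht.le
  have hn : 0 < ‖e‖ := norm_pos_iff.2 he
  set φ : Euc n → ℝ := fun z => u z ^ 2 + v z ^ 2 with hφ
  have hX : ∀ j, ContDiff ℝ 1 (fun z => e j * φ z) := fun j =>
    contDiff_const.mul (smooth_one S.smoothH)
  have hpd : ∀ j z, pd j (fun z => e j * φ z) z = e j * pd j φ z := fun j z =>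
    pd_const_mul j _ (smooth_diff S.smoothH z)
  have hGd : GI (fun z => ∑ j, pd j (fun z => e j * φ z) z) := by
    simp only [hpd]
    exact GI.sum fun j _ => (S.GI_pd_H j).const_mul _
  have hdiv := gauss_div hX (fun j => S.SGH.gi.const_mul (e j)) hGd c ht
  have e1 : gi (fun z => φ z * (⟪z - c, e⟫ / (2 * t))) c t
      = gi (fun z => ∑ j, pd j (fun z => e j * φ z) z) c t := by
    rw [hdiv]
    refine gi_congr c t fun z => ?_
    rw [PiLp.inner_apply, Finset.sum_div, Finset.mul_sum]
    refine Finset.sum_congr rfl fun j _ => ?_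
    simp
    ring
  rw [e1]
  refine (gi_abs_le c ht).trans ?_
  have hG2 : GI (fun z => (‖e‖ / √t) * φ z + (‖e‖ * √t) * ed u v z) :=
    (S.SGH.gi.const_mul _).add (S.GIed.const_mul _)
  refine (gi_mono hGd.abs hG2 c ht (fun z => ?_)).trans ?_
  · simp only [hpd]
    simp only [hφ, S.pd_H]
    set a := ∑ j, e j * pd j u z with ha
    set b := ∑ j, e j * pd j v z with hb
    have e2 : ∑ j, e j * (2 * u z * pd j u z + 2 * v z * pd j v z) = 2 * (u z * a + v z * b) := by
      rw [ha, hb, Finset.mul_sum, Finset.mul_sum, ← Finset.sum_add_distrib, Finset.mul_sum]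
      exact Finset.sum_congr rfl fun j _ => by ring
    rw [e2]
    have hee : ∑ j, e j ^ 2 = ‖e‖ ^ 2 := by
      have := sum_coord_sq 0 e; simpa using this
    have ha2 : a ^ 2 ≤ ‖e‖ ^ 2 * gs u z := by
      rw [← hee]; exact Finset.sum_mul_sq_le_sq_mul_sq _ _ _
    have hb2 : b ^ 2 ≤ ‖e‖ ^ 2 * gs v z := by
      rw [← hee]; exact Finset.sum_mul_sq_le_sq_mul_sq _ _ _
    have hed : gs u z + gs v z ≤ ed u v z := by
      unfold ed; have : 0 ≤ u z ^ 2 * v z ^ 2 := by positivity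
      linarith
    have hab : a ^ 2 + b ^ 2 ≤ ‖e‖ ^ 2 * ed u v z := by nlinarith [sq_nonneg ‖e‖]
    have key : ∀ p q : ℝ, |2 * p * q| ≤ (‖e‖ / √t) * p ^ 2 + (√t / ‖e‖) * q ^ 2 := by
      intro p q
      have h1 : (‖e‖ / √t) * (√t / ‖e‖) = 1 := by field_simp
      set α := ‖e‖ / √t
      set β := √t / ‖e‖
      have hα : 0 < α := by positivity
      have e3 : α * p ^ 2 + β * q ^ 2 = α * (p ^ 2 + β ^ 2 * q ^ 2) := by
        rw [mul_add]; congr 1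
        calc β * q ^ 2 = (α * β) * β * q ^ 2 := by rw [h1]; ring
          _ = _ := by ring
      have e4 : 2 * p * q = α * (2 * p * (β * q)) := by
        calc 2 * p * q = (α * β) * (2 * p * q) := by rw [h1]; ring
          _ = _ := by ring
      rw [e3, e4, abs_mul, abs_of_pos hα]
      gcongr
      rw [abs_le]; constructor <;> nlinarith [sq_nonneg (p + β * q), sq_nonneg (p - β * q)]
    have k1 := key (u z) a
    have k2 := key (v z) b
    have k3 : (√t / ‖e‖) * (a ^ 2 + b ^ 2) ≤ ‖e‖ * √t * ed u v z := by
      calc (√t / ‖e‖) * (a ^ 2 + b ^ 2) ≤ (√t / ‖e‖) * (‖e‖ ^ 2 * ed u v z) := by gcongr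
        _ = _ := by field_simp
    have k4 : 2 * (u z * a + v z * b) = 2 * u z * a + 2 * v z * b := by ring
    rw [k4]
    refine (abs_add_le _ _).trans ?_
    nlinarith
  · rw [gi_add (S.SGH.gi.const_mul _) (S.GIed.const_mul _) c ht, gi_const_mul, gi_const_mul]
    have h1 := S.D_le c ht
    have h2 : ‖e‖ * √t * DD u v c t ≤ ‖e‖ / √t * HH u v c t := by
      rw [div_mul_eq_mul_div, le_div_iff₀ hs]
      have : 0 ≤ DD u v c t := (S.P_nonneg c ht).trans (S.P_le_D c ht)
      calc ‖e‖ * √t * DD u v c t * √t = ‖e‖ * (√t * √t * DD u v c t) := by ring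
        _ ≤ ‖e‖ * HH u v c t := by gcongr; rw [hst]; nlinarith
    have h3 : gi (ed u v) c t = DD u v c t := rfl
    have h4 : gi φ c t = HH u v c t := rfl
    rw [h3, h4]
    linarith

/-- `log H` is Lipschitz in space at the parabolic scale. -/
lemma H_lip (S : Sol u v) (x y : Euc n) {t : ℝ} (ht : 0 < t) :
    HH u v y t ≤ HH u v x t * Real.exp (2 * (‖y - x‖ / √t)) := by
  rcases eq_or_ne y x with rfl | hne
  · simp
  have he : y - x ≠ 0 := sub_ne_zero.2 hne
  have := mono_Icc (f := fun r => (2 * (‖y - x‖ / √t)) * r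
    - Real.log (HH u v (x + r • (y - x)) t)) zero_le_one (fun r _ => by
    have hH := S.H_pos (x + r • (y - x)) ht
    refine ⟨_, ((hasDerivAt_id r).const_mul _).sub
      ((gi_line_hasDerivAt S.SGH.gi S.SGH.1 x (y - x) ht r).log hH.ne'), ?_⟩
    have h1 := (abs_le.1 (S.line_bound (x + r • (y - x)) (y - x) he ht)).2
    rw [sub_nonneg, mul_one]
    exact (div_le_iff₀ hH).2 h1)
  simp only [mul_zero, zero_smul, add_zero, zero_sub, mul_one, one_smul, add_sub_cancel] at this
  have hx := S.H_pos x ht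
  have hy := S.H_pos y ht
  rw [← Real.log_le_log_iff hy (by positivity), Real.log_mul hx.ne' (Real.exp_pos _).ne', Real.log_exp]
  linarith

/-- Pointwise control of the solution by the Gaussian mean at another point. -/
lemma u_le_H (S : Sol u v) (x z : Euc n) {t : ℝ} (ht : 0 < t) :
    u z ≤ √(HH u v x t) * Real.exp (‖z - x‖ / √t) := by
  have hH := S.H_pos x ht
  have h1 := S.sq_le_H z ht
  have h2 := S.H_lip x z ht
  have h3 : u z ^ 2 ≤ (√(HH u v x t) * Real.exp (‖z - x‖ / √t)) ^ 2 := by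
    rw [mul_pow, Real.sq_sqrt hH.le, ← Real.exp_nat_mul]
    push_cast
    nlinarith [sq_nonneg (v z)]
  exact (le_abs_self _).trans (abs_le_of_sq_le_sq h3 (by positivity))

lemma v_le_H (S : Sol u v) (x z : Euc n) {t : ℝ} (ht : 0 < t) :
    v z ≤ √(HH u v x t) * Real.exp (‖z - x‖ / √t) := by
  have := S.symm.u_le_H x z ht
  rwa [HH_symm] at this

end Sol

end Monotone

/-! ### The sharp Gaussian Poincaré inequality -/

section Poincare

variable {n : ℕ}

lemma fderiv_eq_sum (f : Euc n → ℝ) (z w : Euc n) : fderiv ℝ f z w = ∑ j, pd j f z * w j := by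
  have h := (EuclideanSpace.basisFun (Fin n) ℝ).sum_repr w
  conv_lhs => rw [← h]
  rw [map_sum]
  refine Finset.sum_congr rfl fun j _ => ?_
  rw [map_smul, smul_eq_mul, mul_comm]
  simp [pd]

lemma pd_affine {f : Euc n → ℝ} (j : Fin n) (c : ℝ) (b z : Euc n)
    (hf : DifferentiableAt ℝ f (c • z + b)) :
    pd j (fun x => f (c • x + b)) z = c * pd j f (c • z + b) := by
  unfold pd
  have h1 : HasFDerivAt (fun x : Euc n => c • x + b) (c • ContinuousLinearMap.id ℝ (Euc n)) z :=
    ((hasFDerivAt_id z).const_smul c).add_const b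
  have h2 := (hf.hasFDerivAt.comp z h1).fderiv
  have h3 : (fun x => f (c • x + b)) = f ∘ (fun x => c • x + b) := rfl
  rw [h3, h2]
  simp

/-- Symmetry of the Ornstein–Uhlenbeck (Mehler) kernel. -/
lemma mehler_symm {c s : ℝ} (hcs : c ^ 2 + s ^ 2 = 1) (hs : 0 < s) (x w : Euc n) :
    gk 1 x * gk (s ^ 2) (w - c • x) = gk 1 w * gk (s ^ 2) (x - c • w) := by
  have key : -(‖x‖ ^ 2 / (4 * 1)) + -(‖w - c • x‖ ^ 2 / (4 * s ^ 2))
      = -(‖w‖ ^ 2 / (4 * 1)) + -(‖x - c • w‖ ^ 2 / (4 * s ^ 2)) := by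
    rw [norm_sub_sq_real, norm_sub_sq_real, norm_smul, norm_smul, inner_smul_right, inner_smul_right,
      real_inner_comm, mul_pow, mul_pow, Real.norm_eq_abs, sq_abs]
    have : s ^ 2 = 1 - c ^ 2 := by linarith
    field_simp
    rw [this]; ring
  unfold gk
  calc _ = ((4 * Real.pi * 1) ^ (-(n : ℝ) / 2) * (4 * Real.pi * s ^ 2) ^ (-(n : ℝ) / 2))
        * Real.exp (-(‖x‖ ^ 2 / (4 * 1)) + -(‖w - c • x‖ ^ 2 / (4 * s ^ 2))) := by
        rw [Real.exp_add]; ring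
    _ = _ := by rw [key, Real.exp_add]; ring

lemma gk1_integrable : Integrable (fun z : Euc n => gk 1 z) := by
  have := (SG.const (n := n) 1).gi.integrable one_pos 0
  simpa using this

lemma gk1_norm_integrable : Integrable (fun z : Euc n => ‖z‖ * gk 1 z) := by
  have := (SG.norm_sub (n := n) 0).gi.integrable one_pos 0
  simpa using this

lemma prod_int_bdd {F : Euc n × Euc n → ℝ} (hc : Continuous F) {C : ℝ} (hC : ∀ p, |F p| ≤ C) :
    Integrable (fun p : Euc n × Euc n => F p * (gk 1 p.1 * gk 1 p.2)) (volume.prod volume) :=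
  ((gk1_integrable (n := n)).mul_prod (gk1_integrable (n := n))).bdd_mul hc.aestronglyMeasurable
    (Filter.Eventually.of_forall hC)

lemma gk1_cont2 : Continuous (fun p : Euc n × Euc n => gk 1 p.1 * gk 1 p.2) :=
  ((gk_continuous 1).comp continuous_fst).mul ((gk_continuous 1).comp continuous_snd)

/-- The Gaussian measure is invariant under rotations of two independent copies. -/
lemma law_rot {φ : Euc n → ℝ} (hc : Continuous φ) {C : ℝ} (hC : ∀ z, |φ z| ≤ C) {c s : ℝ}
    (hcs : c ^ 2 + s ^ 2 = 1) (hs : 0 < s) :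
    ∫ p : Euc n × Euc n, φ (c • p.1 + s • p.2) * (gk 1 p.1 * gk 1 p.2) ∂(volume.prod volume)
      = ∫ z, φ z * gk 1 z := by
  have hs2 : 0 < s ^ 2 := by positivity
  rw [integral_prod _ (prod_int_bdd (F := fun p => φ (c • p.1 + s • p.2)) (by fun_prop)
    (fun p => hC _))]
  have h1 : ∀ x : Euc n, ∫ y, φ (c • x + s • y) * (gk 1 x * gk 1 y)
      = ∫ w, φ w * (gk 1 w * gk (s ^ 2) (x - c • w)) := by
    intro x
    have h := gi_eq_scaled φ (c • x) hs2
    rw [Real.sqrt_sq hs.le] at h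
    calc ∫ y, φ (c • x + s • y) * (gk 1 x * gk 1 y)
        = gk 1 x * ∫ y, φ (c • x + s • y) * gk 1 y := by
          rw [← integral_const_mul]; congr 1; funext y; ring
      _ = gk 1 x * gi φ (c • x) (s ^ 2) := by rw [h]
      _ = ∫ w, gk 1 x * (φ w * gk (s ^ 2) (w - c • x)) := by
          unfold gi; rw [integral_const_mul]
      _ = _ := by
          congr 1; funext w
          rw [← mehler_symm hcs hs x w]; ring
  simp only [h1]
  have hk : ∀ w : Euc n, ∫ x, gk (s ^ 2) (x - c • w) = 1 := fun w => by
    rw [integral_sub_right_eq_self (fun y => gk (s ^ 2) y) (c • w), gk_integral hs2]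
  have hki : ∀ w : Euc n, Integrable (fun x => gk (s ^ 2) (x - c • w)) := fun w => by
    have := (SG.const (n := n) 1).gi.integrable hs2 (c • w); simpa using this
  have hcg : Continuous (fun p : Euc n × Euc n => gk (s ^ 2) (p.1 - c • p.2)) :=
    (gk_continuous _).comp (by fun_prop)
  have hint : Integrable (fun p : Euc n × Euc n => φ p.2 * (gk 1 p.2 * gk (s ^ 2) (p.1 - c • p.2)))
      (volume.prod volume) := by
    have hcont : Continuous (fun p : Euc n × Euc n =>
        φ p.2 * (gk 1 p.2 * gk (s ^ 2) (p.1 - c • p.2))) :=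
      (hc.comp continuous_snd).mul (((gk_continuous 1).comp continuous_snd).mul hcg)
    refine (integrable_prod_iff' hcont.aestronglyMeasurable).2 ⟨Filter.Eventually.of_forall fun w => ((hki w).const_mul (φ w * gk 1 w)).congr
      (Filter.Eventually.of_forall fun x => by ring_nf), ?_⟩
    have h2 : ∀ w : Euc n, ∫ x, ‖φ w * (gk 1 w * gk (s ^ 2) (x - c • w))‖ = |φ w| * gk 1 w := by
      intro w
      have : ∀ x, ‖φ w * (gk 1 w * gk (s ^ 2) (x - c • w))‖
          = (|φ w| * gk 1 w) * gk (s ^ 2) (x - c • w) := fun x => by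
        rw [norm_mul, norm_mul, Real.norm_eq_abs, Real.norm_of_nonneg (gk_pos one_pos _).le,
          Real.norm_of_nonneg (gk_pos hs2 _).le, mul_assoc]
      simp only [this]
      rw [integral_const_mul, hk, mul_one]
    simp only [h2]
    exact (gk1_integrable (n := n)).bdd_mul hc.abs.aestronglyMeasurable
      (Filter.Eventually.of_forall fun z => by rw [Real.norm_eq_abs, abs_abs]; exact hC z)
  rw [integral_integral_swap (f := fun x w => φ w * (gk 1 w * gk (s ^ 2) (x - c • w))) hint]
  congr 1; funext w
  calc ∫ x, φ w * (gk 1 w * gk (s ^ 2) (x - c • w))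
      = (φ w * gk 1 w) * ∫ x, gk (s ^ 2) (x - c • w) := by
        rw [← integral_const_mul]; congr 1; funext x; ring
    _ = _ := by rw [hk, mul_one]

lemma int_fst (φ : Euc n → ℝ) :
    ∫ p : Euc n × Euc n, φ p.1 * (gk 1 p.1 * gk 1 p.2) ∂(volume.prod volume) = ∫ z, φ z * gk 1 z := by
  have h := integral_prod_mul (μ := (volume : Measure (Euc n))) (ν := (volume : Measure (Euc n)))
    (fun z => φ z * gk 1 z) (fun z => gk 1 z)
  rw [gk_integral one_pos, mul_one] at h
  rw [← h]
  congr 1; funext p; ring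

/-- The correlation of `h` with its rotation by the angle `θ`. -/
noncomputable def corr (h : Euc n → ℝ) (θ : ℝ) : ℝ :=
  ∫ p : Euc n × Euc n, h p.1 * h (Real.cos θ • p.1 + Real.sin θ • p.2) * (gk 1 p.1 * gk 1 p.2)
    ∂(volume.prod volume)

lemma corr_deriv {h : Euc n → ℝ} (hh : ContDiff ℝ (⊤ : ℕ∞) h) (hs : HasCompactSupport h) (θ : ℝ) :
    HasDerivAt (corr h) (∫ p : Euc n × Euc n, h p.1 * (∑ j, pd j h (Real.cos θ • p.1 + Real.sin θ • p.2)
      * (-Real.sin θ * p.1 j + Real.cos θ * p.2 j)) * (gk 1 p.1 * gk 1 p.2)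
        ∂(volume.prod volume)) θ := by
  have hc := hh.continuous
  obtain ⟨C, hC⟩ := hs.exists_bound_of_continuous hc
  have hfc : Continuous (fderiv ℝ h) := hh.continuous_fderiv (by simp)
  obtain ⟨K, hK⟩ := (hs.fderiv (𝕜 := ℝ)).exists_bound_of_continuous hfc
  have hC0 : 0 ≤ C := (norm_nonneg _).trans (hC 0)
  have hK0 : 0 ≤ K := (norm_nonneg _).trans (hK 0)
  unfold corr
  have hsum : ∀ (α : ℝ) (p : Euc n × Euc n),
      ∑ j, pd j h (Real.cos α • p.1 + Real.sin α • p.2)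
        * (-Real.sin α * p.1 j + Real.cos α * p.2 j)
      = fderiv ℝ h (Real.cos α • p.1 + Real.sin α • p.2) (-Real.sin α • p.1 + Real.cos α • p.2) := by
    intro α p; rw [fderiv_eq_sum]; simp
  simp only [hsum]
  refine (hasDerivAt_integral_of_dominated_loc_of_deriv_le (s := univ)
    (F := fun α (p : Euc n × Euc n) => h p.1 * h (Real.cos α • p.1 + Real.sin α • p.2) * (gk 1 p.1 * gk 1 p.2))
    (F' := fun α (p : Euc n × Euc n) => h p.1 * fderiv ℝ h (Real.cos α • p.1 + Real.sin α • p.2)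
      (-Real.sin α • p.1 + Real.cos α • p.2) * (gk 1 p.1 * gk 1 p.2))
    (bound := fun (p : Euc n × Euc n) => C * K * (‖p.1‖ * gk 1 p.1 * gk 1 p.2 + gk 1 p.1 * (‖p.2‖ * gk 1 p.2)))
    Filter.univ_mem ?_ ?_ ?_ ?_ ?_ ?_).2
  · refine Filter.Eventually.of_forall fun α => ?_
    exact (Continuous.mul (by fun_prop) gk1_cont2).aestronglyMeasurable
  · exact prod_int_bdd (F := fun p => h p.1 * h (Real.cos θ • p.1 + Real.sin θ • p.2)) (by fun_prop)
      (C := C * C) (fun p => by rw [abs_mul]; exact mul_le_mul (hC _) (hC _) (abs_nonneg _) hC0)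
  · refine Continuous.aestronglyMeasurable (Continuous.mul ?_ gk1_cont2)
    exact (hc.comp continuous_fst).mul ((hfc.comp (by fun_prop)).clm_apply (by fun_prop))
  · refine Filter.Eventually.of_forall fun p α _ => ?_
    have g1 := gk_pos (n := n) one_pos p.1
    have g2 := gk_pos (n := n) one_pos p.2
    rw [norm_mul, norm_mul, Real.norm_of_nonneg (mul_pos g1 g2).le]
    have b1 : ‖-Real.sin α • p.1 + Real.cos α • p.2‖ ≤ ‖p.1‖ + ‖p.2‖ := by
      refine (norm_add_le _ _).trans (add_le_add ?_ ?_)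
      · rw [norm_smul, norm_neg]
        exact mul_le_of_le_one_left (norm_nonneg _) (Real.abs_sin_le_one α)
      · rw [norm_smul]
        exact mul_le_of_le_one_left (norm_nonneg _) (Real.abs_cos_le_one α)
    have b2 := (ContinuousLinearMap.le_opNorm (fderiv ℝ h (Real.cos α • p.1 + Real.sin α • p.2))
      (-Real.sin α • p.1 + Real.cos α • p.2)).trans (mul_le_mul (hK _) b1 (norm_nonneg _) hK0)
    have b3 := mul_le_mul (hC p.1) b2 (norm_nonneg _) hC0
    refine (mul_le_mul_of_nonneg_right b3 (mul_pos g1 g2).le).trans (le_of_eq ?_)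
    ring
  · exact ((gk1_norm_integrable.mul_prod gk1_integrable).add
      (gk1_integrable.mul_prod gk1_norm_integrable)).const_mul _
  · refine Filter.Eventually.of_forall fun p α _ => ?_
    have d1 : HasDerivAt (fun α => Real.cos α • p.1 + Real.sin α • p.2)
        (-Real.sin α • p.1 + Real.cos α • p.2) α :=
      ((Real.hasDerivAt_cos α).smul_const p.1).add ((Real.hasDerivAt_sin α).smul_const p.2)
    have d2 := (hh.differentiable (by simp) (Real.cos α • p.1 + Real.sin α • p.2)).hasFDerivAt.comp_hasDerivAt
      α d1
    exact (d2.const_mul (h p.1)).mul_const _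

lemma prod_int_lin {F : Euc n × Euc n → ℝ} (hc : Continuous F) {C : ℝ}
    (hC : ∀ p, |F p| ≤ C * (‖p.1‖ + ‖p.2‖)) :
    Integrable (fun p : Euc n × Euc n => F p * (gk 1 p.1 * gk 1 p.2)) (volume.prod volume) := by
  refine (((gk1_norm_integrable.mul_prod gk1_integrable).add
      (gk1_integrable.mul_prod gk1_norm_integrable)).const_mul C).mono'
    (hc.mul gk1_cont2).aestronglyMeasurable (Filter.Eventually.of_forall fun p => ?_)
  have g1 := gk_pos (n := n) one_pos p.1
  have g2 := gk_pos (n := n) one_pos p.2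
  rw [norm_mul, Real.norm_of_nonneg (mul_pos g1 g2).le]
  refine (mul_le_mul_of_nonneg_right (hC p) (mul_pos g1 g2).le).trans (le_of_eq ?_)
  simp only [Pi.add_apply]
  ring

/-- Gaussian integration by parts at unit scale, for fields integrable against all Gaussians. -/
lemma ibp_unit {X : Fin n → Euc n → ℝ} (hX : ∀ j, ContDiff ℝ 1 (X j)) (hg : ∀ j, GI (X j))
    (hd : GI (fun z => ∑ j, pd j (X j) z)) :
    ∫ z, (∑ j, X j z * z j) * gk 1 z = 2 * ∫ z, (∑ j, pd j (X j) z) * gk 1 z := by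
  have h := gauss_div hX hg hd 0 one_pos
  unfold gi at h
  simp only [sub_zero, PiLp.zero_apply, mul_one] at h
  rw [h, ← integral_const_mul]
  congr 1; funext z
  rw [Finset.sum_mul, Finset.sum_mul, Finset.mul_sum]
  exact Finset.sum_congr rfl fun j _ => by ring

lemma GI.bdd {φ : Euc n → ℝ} (hc : Continuous φ) {C : ℝ} (hC : ∀ z, |φ z| ≤ C) : GI φ :=
  (SG.const (n := n) C).gi.mono hc hC


lemma corr_deriv_eq {h : Euc n → ℝ} (hh : ContDiff ℝ (⊤ : ℕ∞) h) (hs : HasCompactSupport h)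
    (c s : ℝ) :
    ∫ p : Euc n × Euc n, h p.1 * (∑ j, pd j h (c • p.1 + s • p.2)
      * (-s * p.1 j + c * p.2 j)) * (gk 1 p.1 * gk 1 p.2) ∂(volume.prod volume)
    = -2 * s * ∫ p : Euc n × Euc n, (∑ j, pd j h p.1 * pd j h (c • p.1 + s • p.2))
      * (gk 1 p.1 * gk 1 p.2) ∂(volume.prod volume) := by
  have hc := hh.continuous
  have hcp : ∀ j, Continuous (pd j h) := fun j => (pd_contDiff j hh).continuous
  have hcpp : ∀ j, Continuous (pd j (pd j h)) := fun j => (pd_contDiff j (pd_contDiff j hh)).continuous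
  obtain ⟨C, hC⟩ := hs.exists_bound_of_continuous hc
  have hK' : ∀ j, ∃ K, ∀ z, ‖pd j h z‖ ≤ K := fun j =>
    (pd_hasCompactSupport j hs).exists_bound_of_continuous (hcp j)
  choose K hK using hK'
  have hL' : ∀ j, ∃ K, ∀ z, ‖pd j (pd j h) z‖ ≤ K := fun j =>
    (pd_hasCompactSupport j (pd_hasCompactSupport j hs)).exists_bound_of_continuous (hcpp j)
  choose L hL using hL'
  have hC0 : 0 ≤ C := (norm_nonneg _).trans (hC 0)
  have hK0 : ∀ j, 0 ≤ K j := fun j => (norm_nonneg _).trans (hK j 0)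
  have hL0 : ∀ j, 0 ≤ L j := fun j => (norm_nonneg _).trans (hL j 0)
  -- integrability of all terms
  have i1 : Integrable (fun p : Euc n × Euc n => (∑ j, pd j h p.1 * pd j h (c • p.1 + s • p.2))
      * (gk 1 p.1 * gk 1 p.2)) (volume.prod volume) := by
    refine prod_int_bdd (F := fun p => ∑ j, pd j h p.1 * pd j h (c • p.1 + s • p.2))
      (continuous_finsetSum _ fun j _ => ((hcp j).comp continuous_fst).mul ((hcp j).comp (by fun_prop)))
      (C := ∑ j, K j * K j) (fun p => (Finset.abs_sum_le_sum_abs _ _).trans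
        (Finset.sum_le_sum fun j _ => ?_))
    rw [abs_mul]; exact mul_le_mul (hK j _) (hK j _) (abs_nonneg _) (hK0 j)
  have i2 : Integrable (fun p : Euc n × Euc n => (h p.1 * ∑ j, pd j (pd j h) (c • p.1 + s • p.2))
      * (gk 1 p.1 * gk 1 p.2)) (volume.prod volume) := by
    refine prod_int_bdd (F := fun p => h p.1 * ∑ j, pd j (pd j h) (c • p.1 + s • p.2))
      ((hc.comp continuous_fst).mul (continuous_finsetSum _ fun j _ => ((hcpp j).comp (by fun_prop))))
      (C := C * ∑ j, L j) (fun p => ?_)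
    rw [abs_mul]
    exact mul_le_mul (hC _) ((Finset.abs_sum_le_sum_abs _ _).trans
        (Finset.sum_le_sum fun j _ => hL j _)) (abs_nonneg _) hC0
  have lin : ∀ (w : Euc n × Euc n → Euc n), Continuous w → (∀ p, ‖w p‖ ≤ ‖p.1‖ + ‖p.2‖) →
      Integrable (fun p : Euc n × Euc n => (∑ j, h p.1 * pd j h (c • p.1 + s • p.2) * w p j)
      * (gk 1 p.1 * gk 1 p.2)) (volume.prod volume) := by
    intro w hw hwb
    refine prod_int_lin (F := fun p => ∑ j, h p.1 * pd j h (c • p.1 + s • p.2) * w p j)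
      (continuous_finsetSum _ fun j _ => ((hc.comp continuous_fst).mul
        ((hcp j).comp (by fun_prop))).mul (by fun_prop))
      (C := ∑ j, C * K j) (fun p => (Finset.abs_sum_le_sum_abs _ _).trans ?_)
    rw [Finset.sum_mul]
    refine Finset.sum_le_sum fun j _ => ?_
    rw [abs_mul, abs_mul]
    have := hK0 j
    refine mul_le_mul (mul_le_mul (hC _) (hK j _) (abs_nonneg _) hC0)
      ((PiLp.norm_apply_le (w p) j).trans (hwb p)) (abs_nonneg _) (by positivity)
  have j1 := lin (fun p => p.1) continuous_fst (fun p => by linarith [norm_nonneg p.2])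
  have j2 := lin (fun p => p.2) continuous_snd (fun p => by linarith [norm_nonneg p.1])
  have hcd : ∀ j (b : Euc n) (a : ℝ), ContDiff ℝ 1 (fun x : Euc n => pd j h (a • x + b)) := fun j b a =>
    (smooth_one (pd_contDiff j hh)).comp (by fun_prop)
  -- integration by parts in the first variable
  have D1 : ∫ p : Euc n × Euc n, (∑ j, h p.1 * pd j h (c • p.1 + s • p.2) * p.1 j)
      * (gk 1 p.1 * gk 1 p.2) ∂(volume.prod volume)
      = 2 * (∫ p : Euc n × Euc n, (∑ j, pd j h p.1 * pd j h (c • p.1 + s • p.2))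
      * (gk 1 p.1 * gk 1 p.2) ∂(volume.prod volume)
      + c * ∫ p : Euc n × Euc n, (h p.1 * ∑ j, pd j (pd j h) (c • p.1 + s • p.2))
      * (gk 1 p.1 * gk 1 p.2) ∂(volume.prod volume)) := by
    have hR := (i1.add (i2.const_mul c)).const_mul 2
    simp only [Pi.add_apply] at hR
    rw [← integral_const_mul, ← integral_add i1 (i2.const_mul c), ← integral_const_mul,
      integral_prod_symm _ j1, integral_prod_symm _ hR]
    congr 1; funext y
    have hpdX : ∀ j x, pd j (fun x => h x * pd j h (c • x + s • y)) x
        = h x * (c * pd j (pd j h) (c • x + s • y)) + pd j h (c • x + s • y) * pd j h x := by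
      intro j x
      rw [pd_mul j (smooth_diff hh x) ((hcd j (s • y) c).differentiable (by simp) x),
        pd_affine j c (s • y) x (smooth_diff (pd_contDiff j hh) _)]
    have key := ibp_unit (X := fun j x => h x * pd j h (c • x + s • y))
      (fun j => (smooth_one hh).mul (hcd j _ c))
      (fun j => GI.bdd (C := C * K j) (hc.mul (hcd j _ c).continuous) (fun z => by
        rw [abs_mul]; exact mul_le_mul (hC _) (hK j _) (abs_nonneg _) hC0))
      (by
        simp only [hpdX]
        refine GI.sum fun j _ => GI.bdd (C := C * (|c| * L j) + K j * K j) ?_ (fun z => ?_)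
        · exact (hc.mul (continuous_const.mul ((hcpp j).comp (by fun_prop)))).add
            (((hcp j).comp (by fun_prop)).mul (hcp j))
        · refine (abs_add_le _ _).trans (add_le_add ?_ ?_)
          · rw [abs_mul, abs_mul]
            have := hL0 j
            exact mul_le_mul (hC _) (mul_le_mul_of_nonneg_left (hL j _) (abs_nonneg _))
              (by positivity) hC0
          · rw [abs_mul]; exact mul_le_mul (hK j _) (hK j _) (abs_nonneg _) (hK0 j))
    simp only [hpdX] at key
    calc ∫ x, (∑ j, h x * pd j h (c • x + s • y) * x j) * (gk 1 x * gk 1 y)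
        = gk 1 y * ∫ x, (∑ j, h x * pd j h (c • x + s • y) * x j) * gk 1 x := by
          rw [← integral_const_mul]; congr 1; funext x; ring
      _ = _ := by
          rw [key, ← integral_const_mul, ← integral_const_mul]
          congr 1; funext x
          simp only [Finset.sum_add_distrib, ← Finset.mul_sum]
          rw [Finset.sum_congr rfl fun j _ => mul_comm (pd j h (c • x + s • y)) (pd j h x)]
          ring
  -- integration by parts in the second variable
  have D2 : ∫ p : Euc n × Euc n, (∑ j, h p.1 * pd j h (c • p.1 + s • p.2) * p.2 j)
      * (gk 1 p.1 * gk 1 p.2) ∂(volume.prod volume)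
      = 2 * (s * ∫ p : Euc n × Euc n, (h p.1 * ∑ j, pd j (pd j h) (c • p.1 + s • p.2))
      * (gk 1 p.1 * gk 1 p.2) ∂(volume.prod volume)) := by
    rw [← integral_const_mul, ← integral_const_mul,
      integral_prod _ j2, integral_prod _ ((i2.const_mul s).const_mul 2)]
    congr 1; funext x
    have hpdX : ∀ j y, pd j (fun y => h x * pd j h (c • x + s • y)) y
        = h x * (s * pd j (pd j h) (c • x + s • y)) := by
      intro j y
      simp only [add_comm (c • x)]
      rw [pd_const_mul j _ ((hcd j (c • x) s).differentiable (by simp) y),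
        pd_affine j s (c • x) y (smooth_diff (pd_contDiff j hh) _)]
    have hcd' : ∀ j, ContDiff ℝ 1 (fun y : Euc n => pd j h (c • x + s • y)) := fun j =>
      (smooth_one (pd_contDiff j hh)).comp (by fun_prop)
    have key := ibp_unit (X := fun j y => h x * pd j h (c • x + s • y))
      (fun j => contDiff_const.mul (hcd' j))
      (fun j => GI.bdd (C := C * K j) (continuous_const.mul (hcd' j).continuous) (fun z => by
        rw [abs_mul]; exact mul_le_mul (hC _) (hK j _) (abs_nonneg _) hC0))
      (by
        simp only [hpdX]
        refine GI.sum fun j _ => GI.bdd (C := C * (|s| * L j)) ?_ (fun z => ?_)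
        · exact (continuous_const.mul (continuous_const.mul ((hcpp j).comp (by fun_prop))))
        · rw [abs_mul, abs_mul]
          have := hL0 j
          exact mul_le_mul (hC _) (mul_le_mul_of_nonneg_left (hL j _) (abs_nonneg _))
              (by positivity) hC0)
    simp only [hpdX] at key
    calc ∫ y, (∑ j, h x * pd j h (c • x + s • y) * y j) * (gk 1 x * gk 1 y)
        = gk 1 x * ∫ y, (∑ j, h x * pd j h (c • x + s • y) * y j) * gk 1 y := by
          rw [← integral_const_mul]; congr 1; funext y; ring
      _ = _ := by
          rw [key, ← integral_const_mul, ← integral_const_mul]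
          congr 1; funext y
          simp only [← Finset.mul_sum]
          ring
  have split : ∀ p : Euc n × Euc n, h p.1 * (∑ j, pd j h (c • p.1 + s • p.2)
      * (-s * p.1 j + c * p.2 j)) * (gk 1 p.1 * gk 1 p.2)
      = -s * ((∑ j, h p.1 * pd j h (c • p.1 + s • p.2) * p.1 j) * (gk 1 p.1 * gk 1 p.2))
      + c * ((∑ j, h p.1 * pd j h (c • p.1 + s • p.2) * p.2 j) * (gk 1 p.1 * gk 1 p.2)) := by
    intro p
    have : h p.1 * (∑ j, pd j h (c • p.1 + s • p.2) * (-s * p.1 j + c * p.2 j))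
        = -s * (∑ j, h p.1 * pd j h (c • p.1 + s • p.2) * p.1 j)
        + c * (∑ j, h p.1 * pd j h (c • p.1 + s • p.2) * p.2 j) := by
      rw [Finset.mul_sum, Finset.mul_sum, Finset.mul_sum, ← Finset.sum_add_distrib]
      exact Finset.sum_congr rfl fun j _ => by ring
    rw [this]; ring
  simp only [split]
  rw [integral_add (j1.const_mul _) (j2.const_mul _), integral_const_mul, integral_const_mul, D1, D2]
  ring

lemma poincare_unit {h : Euc n → ℝ} (hh : ContDiff ℝ (⊤ : ℕ∞) h) (hs : HasCompactSupport h) :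
    gi (fun z => h z ^ 2) 0 1 - gi h 0 1 ^ 2 ≤ 2 * gi (gs h) 0 1 := by
  have hc := hh.continuous
  have hcp : ∀ j, Continuous (pd j h) := fun j => (pd_contDiff j hh).continuous
  have hK' : ∀ j, ∃ K, ∀ z, ‖pd j h z‖ ≤ K := fun j =>
    (pd_hasCompactSupport j hs).exists_bound_of_continuous (hcp j)
  choose K hK using hK'
  have hK0 : ∀ j, 0 ≤ K j := fun j => (norm_nonneg _).trans (hK j 0)
  have hgc : Continuous (gs h) := gs_continuous (smooth_one hh)
  have hgb : ∀ z, |gs h z| ≤ ∑ j, K j ^ 2 := fun z => by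
    rw [abs_of_nonneg (gs_nonneg h z)]
    exact Finset.sum_le_sum fun j _ => by
      rw [← sq_abs]; exact pow_le_pow_left₀ (abs_nonneg _) (hK j z) 2
  set E := gi (gs h) 0 1 with hE
  have hEi : ∫ z, gs h z * gk 1 z = E := by rw [hE]; unfold gi; simp
  have hmono := mono_Icc (f := fun θ => corr h θ - 2 * E * Real.cos θ) (a := 0) (b := Real.pi / 2)
    (by positivity) (fun θ hθ => by
      refine ⟨_, (corr_deriv hh hs θ).sub ((Real.hasDerivAt_cos θ).const_mul (2 * E)), ?_⟩
      rw [corr_deriv_eq hh hs]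
      rcases eq_or_lt_of_le (Real.sin_nonneg_of_nonneg_of_le_pi hθ.1
        (hθ.2.trans (by linarith [Real.pi_pos]))) with h0 | h0
      · rw [← h0]; simp
      have hcs : Real.cos θ ^ 2 + Real.sin θ ^ 2 = 1 := Real.cos_sq_add_sin_sq θ
      have hI : ∫ p : Euc n × Euc n, (∑ j, pd j h p.1 * pd j h (Real.cos θ • p.1 + Real.sin θ • p.2))
          * (gk 1 p.1 * gk 1 p.2) ∂(volume.prod volume) ≤ E := by
        have a1 := prod_int_bdd (F := fun p : Euc n × Euc n => gs h p.1) (hgc.comp continuous_fst)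
          (fun p => hgb _)
        have a2 := prod_int_bdd (F := fun p : Euc n × Euc n =>
          gs h (Real.cos θ • p.1 + Real.sin θ • p.2)) (hgc.comp (by fun_prop)) (fun p => hgb _)
        have e1 : ∫ p : Euc n × Euc n, gs h p.1 * (gk 1 p.1 * gk 1 p.2) ∂(volume.prod volume) = E := by
          rw [← hEi, int_fst]
        have e2 := law_rot hgc hgb hcs h0
        rw [hEi] at e2
        have e3 : E = ∫ p : Euc n × Euc n, ((1 / 2) * (gs h p.1 * (gk 1 p.1 * gk 1 p.2))
            + (1 / 2) * (gs h (Real.cos θ • p.1 + Real.sin θ • p.2) * (gk 1 p.1 * gk 1 p.2)))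
            ∂(volume.prod volume) := by
          rw [integral_add (a1.const_mul _) (a2.const_mul _), integral_const_mul, integral_const_mul,
            e1, e2]; ring
        rw [e3]
        refine integral_mono ?_ ((a1.const_mul _).add (a2.const_mul _)) (fun p => ?_)
        · refine prod_int_bdd (F := fun p => ∑ j, pd j h p.1 * pd j h
            (Real.cos θ • p.1 + Real.sin θ • p.2))
            (continuous_finsetSum _ fun j _ => ((hcp j).comp continuous_fst).mul
              ((hcp j).comp (by fun_prop)))
            (C := ∑ j, K j * K j) (fun p => (Finset.abs_sum_le_sum_abs _ _).trans
              (Finset.sum_le_sum fun j _ => ?_))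
          rw [abs_mul]; exact mul_le_mul (hK j _) (hK j _) (abs_nonneg _) (hK0 j)
        · have g1 := gk_pos (n := n) one_pos p.1
          have g2 := gk_pos (n := n) one_pos p.2
          have : ∑ j, pd j h p.1 * pd j h (Real.cos θ • p.1 + Real.sin θ • p.2)
              ≤ 1 / 2 * gs h p.1 + 1 / 2 * gs h (Real.cos θ • p.1 + Real.sin θ • p.2) := by
            unfold gs
            rw [Finset.mul_sum, Finset.mul_sum, ← Finset.sum_add_distrib]
            refine Finset.sum_le_sum fun j _ => ?_
            nlinarith [sq_nonneg (pd j h p.1 - pd j h (Real.cos θ • p.1 + Real.sin θ • p.2))]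
          have := mul_le_mul_of_nonneg_right this (mul_pos g1 g2).le
          linarith
      nlinarith)
  simp only [Real.cos_zero, Real.cos_pi_div_two, mul_zero, sub_zero, mul_one] at hmono
  have r0 : corr h 0 = gi (fun z => h z ^ 2) 0 1 := by
    unfold corr gi
    simp only [Real.cos_zero, Real.sin_zero, one_smul, zero_smul, add_zero, sub_zero]
    rw [← int_fst]
    congr 1; funext p; ring
  have r1 : corr h (Real.pi / 2) = gi h 0 1 ^ 2 := by
    unfold corr gi
    simp only [Real.cos_pi_div_two, Real.sin_pi_div_two, one_smul, zero_smul, zero_add, sub_zero]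
    rw [sq, ← integral_prod_mul]
    congr 1; funext p; ring
  rw [r0, r1] at hmono
  linarith

/-- Sharp Gaussian Poincaré inequality. -/
lemma poincare {h : Euc n → ℝ} (hh : ContDiff ℝ (⊤ : ℕ∞) h) (h2 : GI (fun z => h z ^ 2))
    (hg : GI (gs h)) (x : Euc n) {t : ℝ} (ht : 0 < t) :
    gi (fun z => h z ^ 2) x t - gi h x t ^ 2 ≤ 2 * t * gi (gs h) x t := by
  have hst : 0 < √t := Real.sqrt_pos.2 ht
  have hc := hh.continuous
  -- compactly supported functions, by scaling
  have hcs : ∀ f : Euc n → ℝ, ContDiff ℝ (⊤ : ℕ∞) f → HasCompactSupport f →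
      gi (fun z => f z ^ 2) x t - gi f x t ^ 2 ≤ 2 * t * gi (gs f) x t := by
    intro f hf hfs
    have hf' : ContDiff ℝ (⊤ : ℕ∞) (fun w => f (√t • w + x)) := hf.comp (by fun_prop)
    have hfs' : HasCompactSupport (fun w => f (√t • w + x)) := by
      have e : (fun w => f (√t • w + x)) = f ∘ ((Homeomorph.smulOfNeZero (√t) hst.ne').trans
        (Homeomorph.addRight x)) := by funext w; simp
      rw [e]; exact hfs.comp_homeomorph _
    have key := poincare_unit hf' hfs'
    have e1 : ∀ φ : Euc n → ℝ, gi (fun w => φ (√t • w + x)) 0 1 = gi φ x t := by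
      intro φ; rw [gi_eq_scaled φ x ht]; unfold gi; simp [add_comm]
    have e2 : gs (fun w => f (√t • w + x)) = fun w => t * gs f (√t • w + x) := by
      funext w
      unfold gs
      rw [Finset.mul_sum]
      refine Finset.sum_congr rfl fun j _ => ?_
      rw [pd_affine j _ _ _ (smooth_diff hf _), mul_pow, Real.sq_sqrt ht.le]
    rw [e2, gi_const_mul, e1 (fun z => f z ^ 2), e1 f, e1 (gs f)] at key
    linarith
  obtain ⟨χ, C, hC0, hχs, hχc, hχ0, hχ1, hχd, hχ⟩ := exists_cutoff n
  have hdiff : ∀ k z, DifferentiableAt ℝ (χ k) z := fun k z => smooth_diff (hχs k) z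
  have hpd : ∀ k j z, pd j (fun z => h z * χ k z) z = h z * pd j (χ k) z + χ k z * pd j h z :=
    fun k j z => pd_mul j (smooth_diff hh z) (hdiff k z)
  have hk := fun k => hcs (fun z => h z * χ k z) (hh.mul (hχs k)) (hχc k).mul_left
  have hev : ∀ z : Euc n, ∀ᶠ k : ℕ in Filter.atTop, ‖z‖ < k := fun z =>
    (tendsto_natCast_atTop_atTop (R := ℝ)).eventually_gt_atTop ‖z‖
  have dct : ∀ (F : ℕ → Euc n → ℝ) (φ b : Euc n → ℝ), (∀ k, Continuous (F k)) → GI b →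
      (∀ k z, |F k z| ≤ b z) → (∀ (k : ℕ) z, ‖z‖ < k → F k z = φ z) →
      Filter.Tendsto (fun k => gi (F k) x t) Filter.atTop (nhds (gi φ x t)) := by
    intro F φ b hF hb hFb hFφ
    unfold gi
    refine tendsto_integral_of_dominated_convergence (fun z => b z * gk t (z - x))
      (fun k => ((hF k).mul (gk_sub_continuous t x)).aestronglyMeasurable) (hb.integrable ht x)
      (fun k => Filter.Eventually.of_forall fun z => ?_) (Filter.Eventually.of_forall fun z => ?_)
    · rw [norm_mul, Real.norm_of_nonneg (gk_pos ht _).le]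
      exact mul_le_mul_of_nonneg_right (hFb k z) (gk_pos ht _).le
    · refine tendsto_const_nhds.congr' ?_
      filter_upwards [hev z] with k hkz
      rw [hFφ k z hkz]
  have l1 := dct (fun k z => (h z * χ k z) ^ 2) (fun z => h z ^ 2) (fun z => h z ^ 2)
    (fun k => (hc.mul (hχs k).continuous).pow 2) h2 (fun k z => by
      rw [abs_of_nonneg (sq_nonneg _), mul_pow]
      exact mul_le_of_le_one_right (sq_nonneg _) (pow_le_one₀ (hχ0 k z) (hχ1 k z)))
    (fun k z hz => by simp only [(hχ k z hz).1, mul_one])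
  have l2 := dct (fun k z => h z * χ k z) h (fun z => |h z|)
    (fun k => hc.mul (hχs k).continuous) (GI.of_sq_one hc h2).abs (fun k z => by
      rw [abs_mul, abs_of_nonneg (hχ0 k z)]
      exact mul_le_of_le_one_right (abs_nonneg _) (hχ1 k z))
    (fun k z hz => by simp only [(hχ k z hz).1, mul_one])
  have l3 := dct (fun k => gs (fun z => h z * χ k z)) (gs h)
    (fun z => (2 * ∑ _j : Fin n, C ^ 2) * h z ^ 2 + 2 * gs h z)
    (fun k => gs_continuous (smooth_one (hh.mul (hχs k)))) ((h2.const_mul _).add (hg.const_mul 2))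
    (fun k z => by
      rw [abs_of_nonneg (gs_nonneg _ _)]
      unfold gs
      rw [Finset.mul_sum, Finset.sum_mul, Finset.mul_sum, ← Finset.sum_add_distrib]
      refine Finset.sum_le_sum fun j _ => ?_
      rw [hpd]
      have a1 : pd j (χ k) z ^ 2 ≤ C ^ 2 := by
        rw [← sq_abs]; exact pow_le_pow_left₀ (abs_nonneg _) (hχd k j z) 2
      have a2 : χ k z ^ 2 ≤ 1 := pow_le_one₀ (hχ0 k z) (hχ1 k z)
      have a3 := mul_le_mul_of_nonneg_left a1 (sq_nonneg (h z))
      have a4 := mul_le_mul_of_nonneg_left a2 (sq_nonneg (pd j h z))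
      nlinarith [sq_nonneg (h z * pd j (χ k) z - χ k z * pd j h z)])
    (fun k z hz => by
      unfold gs
      refine Finset.sum_congr rfl fun j _ => ?_
      rw [hpd, (hχ k z hz).1, (hχ k z hz).2 j]; ring)
  exact le_of_tendsto_of_tendsto' (l1.sub (l2.pow 2)) (l3.const_mul (2 * t)) hk

end Poincare

/-! ### Behaviour at points of the interface -/

section Interface

variable {n : ℕ}

lemma gi_le_exp {φ : Euc n → ℝ} (hφ : GI φ) (x : Euc n) {t : ℝ} (ht : 0 < t) (c k : ℝ)
    (h : ∀ z, φ z ≤ c * Real.exp (k * (‖z - x‖ / √t))) : gi φ x t ≤ c * EE n k := by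
  refine (gi_mono hφ ((SG_exp k x t).const_mul c).gi x ht h).trans (le_of_eq ?_)
  rw [gi_const_mul, gi_exp k x ht]

namespace Sol

variable {u v : Euc n → ℝ}

lemma H_eq (S : Sol u v) (x : Euc n) {t : ℝ} (ht : 0 < t) :
    HH u v x t = gi (fun z => u z ^ 2) x t + gi (fun z => v z ^ 2) x t :=
  gi_add (S.SGu.pow 2).gi (S.SGv.pow 2).gi x ht

lemma A_pos (S : Sol u v) (x : Euc n) {t : ℝ} (ht : 0 < t) : 0 < gi u x t :=
  gi_pos S.SGu.gi S.hu.continuous x ht S.pu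

lemma B_pos (S : Sol u v) (x : Euc n) {t : ℝ} (ht : 0 < t) : 0 < gi v x t := S.symm.A_pos x ht

/-- Reverse Hölder inequality: the `L²` mean is controlled by the `L¹` mean. -/
lemma sqrtH_le (S : Sol u v) (x : Euc n) {t : ℝ} (ht : 0 < t) :
    √(HH u v x t) ≤ 8 * EE n 3 * (gi u x t + gi v x t) := by
  have hH := S.H_pos x ht
  have hh : 0 < √(HH u v x t) := Real.sqrt_pos.2 hH
  have hpos : ∀ z, 0 < u z + v z := fun z => add_pos (S.pu z) (S.pv z)
  have hS : SG (fun z => u z + v z) := S.SGu.add S.SGv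
  have hc : Continuous (fun z => √(u z + v z)) := hS.continuous.sqrt
  have e1 : ∀ z, √(u z + v z) ^ 2 = u z + v z := fun z => Real.sq_sqrt (hpos z).le
  have hcs := gi_cs (φ := fun z => √(u z + v z)) (ψ := fun z => (u z + v z) * √(u z + v z)) hc
    (hS.continuous.mul hc) (by simpa only [e1] using hS.gi)
    (by
      have : (fun z => ((u z + v z) * √(u z + v z)) ^ 2) = fun z => (u z + v z) ^ 3 := by
        funext z; rw [mul_pow, e1]; ring
      rw [this]; exact (hS.pow 3).gi) x ht
  rw [gi_congr x t (fun z => show √(u z + v z) * ((u z + v z) * √(u z + v z)) = (u z + v z) ^ 2 by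
      calc _ = (u z + v z) * √(u z + v z) ^ 2 := by ring
        _ = _ := by rw [e1]; ring), gi_congr x t e1,
    gi_congr x t (fun z => show ((u z + v z) * √(u z + v z)) ^ 2 = (u z + v z) ^ 3 by
      rw [mul_pow, e1]; ring), gi_add S.SGu.gi S.SGv.gi x ht] at hcs
  have h1 : HH u v x t ≤ gi (fun z => (u z + v z) ^ 2) x t :=
    gi_mono S.SGH.gi (hS.pow 2).gi x ht fun z => by nlinarith [mul_pos (S.pu z) (S.pv z)]
  have h3 : gi (fun z => (u z + v z) ^ 3) x t ≤ (8 * √(HH u v x t) ^ 3) * EE n 3 := by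
    refine gi_le_exp (hS.pow 3).gi x ht _ _ fun z => ?_
    have h4 : u z + v z ≤ 2 * (√(HH u v x t) * Real.exp (‖z - x‖ / √t)) := by
      linarith [S.u_le_H x z ht, S.v_le_H x z ht]
    calc (u z + v z) ^ 3 ≤ (2 * (√(HH u v x t) * Real.exp (‖z - x‖ / √t))) ^ 3 :=
          pow_le_pow_left₀ (hpos z).le h4 3
      _ = _ := by
          rw [mul_pow, mul_pow, ← Real.exp_nat_mul]; push_cast; ring
  have hA := S.A_pos x ht
  have hB := S.B_pos x ht
  have h5 : √(HH u v x t) ^ 4 ≤ (gi u x t + gi v x t) * ((8 * √(HH u v x t) ^ 3) * EE n 3) := by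
    calc √(HH u v x t) ^ 4 = HH u v x t ^ 2 := by
          rw [show (4 : ℕ) = 2 * 2 from rfl, pow_mul, Real.sq_sqrt hH.le]
      _ ≤ gi (fun z => (u z + v z) ^ 2) x t ^ 2 := pow_le_pow_left₀ hH.le h1 2
      _ ≤ _ := hcs.trans (mul_le_mul_of_nonneg_left h3 (by positivity))
  have h6 : 0 < √(HH u v x t) ^ 3 := by positivity
  refine le_of_mul_le_mul_right ?_ h6
  linarith

lemma SG_inter (S : Sol u v) : SG (fun z => u z * v z ^ 2) := S.SGu.mul (S.SGv.pow 2)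

lemma SG_inter' (S : Sol u v) : SG (fun z => v z * u z ^ 2) := S.SGv.mul (S.SGu.pow 2)

lemma inter_le (S : Sol u v) (x : Euc n) {t : ℝ} (ht : 0 < t) :
    gi (fun z => u z * v z ^ 2) x t ≤ √(HH u v x t) ^ 3 * EE n 3 := by
  refine gi_le_exp S.SG_inter.gi x ht _ _ fun z => ?_
  have h1 := S.u_le_H x z ht
  have h2 := S.v_le_H x z ht
  have hu := S.pu z
  have hv := S.pv z
  calc u z * v z ^ 2 ≤ (√(HH u v x t) * Real.exp (‖z - x‖ / √t)) *
        (√(HH u v x t) * Real.exp (‖z - x‖ / √t)) ^ 2 := by gcongr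
    _ = _ := by
        rw [← pow_succ', mul_pow, ← Real.exp_nat_mul]; push_cast; ring

/-- The mean of `u` grows at a rate controlled by `H ^ (3/2)`. -/
lemma A_le (S : Sol u v) (x : Euc n) {t s : ℝ} (ht : 0 < t) (hts : t ≤ s) :
    gi u x t ≤ u x + √(HH u v x s) ^ 3 * EE n 3 * t := by
  set K := √(HH u v x s) ^ 3 * EE n 3 with hK
  have hmono : ∀ r, 0 < r → r ≤ t → K * r - gi u x r ≤ K * t - gi u x t := by
    intro r hr hrt
    refine mono_Icc (f := fun r => K * r - gi u x r) hrt fun q hq => ?_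
    have hq0 := hr.trans_le hq.1
    refine ⟨_, (((hasDerivAt_id q).const_mul K).fun_sub (S.A_deriv x hq0)), ?_⟩
    have h1 := S.inter_le x hq0
    have h2 := S.H_mono x hq0 (hq.2.trans hts)
    have h3 : √(HH u v x q) ^ 3 * EE n 3 ≤ K :=
      mul_le_mul_of_nonneg_right (pow_le_pow_left₀ (Real.sqrt_nonneg _) (Real.sqrt_le_sqrt h2) 3)
        (zero_le_one.trans (EE_one_le (by norm_num)))
    linarith
  have hlim : Filter.Tendsto (fun r => K * r - gi u x r) (nhdsWithin 0 (Ioi 0))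
      (nhds (K * 0 - u x)) :=
    (((continuous_const.mul continuous_id).tendsto 0).mono_left nhdsWithin_le_nhds).sub
      (gi_tendsto S.SGu x)
  have := le_of_tendsto hlim (b := K * t - gi u x t) (by
    filter_upwards [Ioc_mem_nhdsGT ht] with r hr using hmono r hr.1 hr.2)
  linarith

/-- At an interface point the common value is comparable with `√H` at the unit scale `s H(s) = 1`. -/
lemma unit_scale (S : Sol u v) (x : Euc n) (hx : u x = v x) {s : ℝ} (hs : 0 < s)
    (hκ : s * HH u v x s = 1) : √(HH u v x s) ≤ 4096 * EE n 3 ^ 3 * u x := by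
  set E := EE n 3 with hE
  have hE1 : 1 ≤ E := EE_one_le (by norm_num)
  have hH := S.H_pos x hs
  set q := 1 / (64 * E ^ 2) with hq
  have hq0 : 0 < q := by positivity
  have hq1 : q ≤ 1 := by
    rw [hq, div_le_one (by positivity)]; nlinarith
  have ht : 0 < q ^ 2 * s := by positivity
  have hts : q ^ 2 * s ≤ s := by nlinarith
  have hA := S.A_le x ht hts
  have hB := S.symm.A_le x ht hts
  rw [HH_symm] at hB
  have hR := S.sqrtH_le x ht
  have hD := S.H_doubling x ht hts
  set h := √(HH u v x s) with hh
  have hhpos : 0 < h := Real.sqrt_pos.2 hH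
  have hh2 : h ^ 2 = HH u v x s := Real.sq_sqrt hH.le
  have h3 : h ^ 3 * E * (q ^ 2 * s) = E * q ^ 2 * h := by
    rw [← hh2] at hκ
    calc h ^ 3 * E * (q ^ 2 * s) = E * q ^ 2 * h * (s * h ^ 2) := by ring
      _ = _ := by rw [hκ, mul_one]
  have he : Real.exp 1 ≤ 4 := by linarith [Real.exp_one_lt_d9]
  have h4 : q * h / 2 ≤ √(HH u v x (q ^ 2 * s)) := by
    refine Real.le_sqrt_of_sq_le ?_
    have h5 : Real.exp 1 * (s / (q ^ 2 * s)) = Real.exp 1 / q ^ 2 := by field_simp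
    rw [h5, div_mul_eq_mul_div, le_div_iff₀ (by positivity), ← hh2] at hD
    have := S.H_pos x ht
    nlinarith
  rw [← hx] at hB
  rw [h3] at hA hB
  have h6 : q * h / 2 ≤ 8 * E * (2 * u x + 2 * (E * q ^ 2 * h)) :=
    h4.trans (hR.trans (mul_le_mul_of_nonneg_left (by linarith) (by positivity)))
  have hqE : q * (64 * E ^ 2) = 1 := by rw [hq]; field_simp
  -- multiply by `256 E ^ 2` and use `q = 1 / (64 E ^ 2)`
  have h7 : (256 * E ^ 2) * (q * h / 2) ≤ (256 * E ^ 2) * (8 * E * (2 * u x + 2 * (E * q ^ 2 * h))) :=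
    mul_le_mul_of_nonneg_left h6 (by positivity)
  have h8 : (256 * E ^ 2) * (q * h / 2) = 2 * h := by
    calc _ = 2 * h * (q * (64 * E ^ 2)) := by ring
      _ = _ := by rw [hqE, mul_one]
  have h9 : (256 * E ^ 2) * (8 * E * (2 * u x + 2 * (E * q ^ 2 * h))) = 4096 * E ^ 3 * u x + h := by
    calc _ = 4096 * E ^ 3 * u x + h * (q * (64 * E ^ 2)) ^ 2 := by ring
      _ = _ := by rw [hqE]; ring
  linarith

/-- Cauchy–Schwarz for the mean of the product. -/
lemma uv_sq_le (S : Sol u v) (x : Euc n) {t : ℝ} (ht : 0 < t) :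
    gi (fun z => u z * v z) x t ^ 2 ≤ PP u v x t := by
  have := gi_sq_le (φ := fun z => u z * v z) (S.hu.continuous.mul S.hv.continuous)
    (by simpa only [mul_pow] using S.SGP.gi) x ht
  simp only [mul_pow] at this
  exact this

lemma var_le (S : Sol u v) (x : Euc n) {t : ℝ} (ht : 0 < t) :
    HH u v x t - gi u x t ^ 2 - gi v x t ^ 2 ≤ 2 * t * DD u v x t := by
  have h1 := poincare S.hu (S.SGu.pow 2).gi S.GIgu x ht
  have h2 := poincare S.hv (S.SGv.pow 2).gi S.GIgv x ht
  have h3 : gi (gs u) x t + gi (gs v) x t ≤ DD u v x t := by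
    rw [← gi_add S.GIgu S.GIgv x ht]
    exact gi_mono (S.GIgu.add S.GIgv) S.GIed x ht fun z => by unfold ed; nlinarith [sq_nonneg (u z * v z)]
  rw [S.H_eq x ht]
  nlinarith

/-- The frequency is bounded below at the unit scale of an interface point. -/
lemma N_unit (S : Sol u v) (x : Euc n) (hx : u x = v x) {s : ℝ} (hs : 0 < s)
    (hκ : s * HH u v x s = 1) : 1 / (2 * (4096 * EE n 3 ^ 3) ^ 4) ≤ NN u v x s := by
  have hE1 : 1 ≤ EE n 3 := EE_one_le (by norm_num)
  set c := 4096 * EE n 3 ^ 3 with hc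
  have hc0 : 0 < c := by positivity
  have hH := S.H_pos x hs
  have h1 := S.unit_scale x hx hs hκ
  have hN0 := S.N_nonneg x hs
  have hN1 := S.N_le_one x hs
  set N := NN u v x s with hN
  have hND : N * HH u v x s = 2 * s * DD u v x s := by
    rw [hN]; unfold NN; field_simp
  have hv := S.var_le x hs
  rw [← hND] at hv
  have hA := S.u_le_A x hs
  have hB := S.symm.u_le_A x hs
  rw [← hx] at hB
  have hu := S.pu x
  set I := gi (fun z => u z * v z) x s with hI
  -- `(A + B)² ≤ H + 2 ∫ u v`
  have h2 : (gi u x s + gi v x s) ^ 2 ≤ HH u v x s + 2 * I := by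
    have h := gi_sq_le (φ := fun z => u z + v z) (S.SGu.add S.SGv).continuous
      ((S.SGu.add S.SGv).pow 2).gi x hs
    rw [gi_add S.SGu.gi S.SGv.gi x hs] at h
    refine h.trans (le_of_eq ?_)
    rw [hI, ← gi_const_mul, HH, ← gi_add S.SGH.gi ((S.SGu.mul S.SGv).const_mul 2).gi x hs]
    exact gi_congr x s fun z => by ring
  have h3 : u x ^ 2 ≤ gi u x s * gi v x s := by nlinarith
  have hsq : HH u v x s ≤ c ^ 2 * u x ^ 2 := by
    rw [← mul_pow, ← Real.sq_sqrt hH.le]; exact pow_le_pow_left₀ (Real.sqrt_nonneg _) h1 2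
  have hI2 : 2 * I ^ 2 ≤ N * HH u v x s ^ 2 := by
    have h4 := (S.uv_sq_le x hs).trans (S.P_le_D x hs)
    have h5 : N * HH u v x s ^ 2 = 2 * DD u v x s := by
      calc N * HH u v x s ^ 2 = (N * HH u v x s) * HH u v x s := by ring
        _ = 2 * DD u v x s * (s * HH u v x s) := by rw [hND]; ring
        _ = _ := by rw [hκ, mul_one]
    linarith
  set H := HH u v x s with hHdef
  -- `2 u(x)² ≤ N H + 2 I`
  have h4 : 2 * u x ^ 2 ≤ N * H + 2 * I := by nlinarith
  have h5 : 2 * H ≤ c ^ 2 * (N * H + 2 * I) := by nlinarith [sq_nonneg c]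
  set r := √(N / 2) with hr
  have hr0 : 0 ≤ r := Real.sqrt_nonneg _
  have hr2 : r ^ 2 = N / 2 := Real.sq_sqrt (by linarith)
  have hr1 : r ≤ 1 := by nlinarith
  have hI3 : I ≤ r * H := by
    refine abs_le_of_sq_le_sq' ?_ (by positivity) |>.2
    rw [mul_pow, hr2]; linarith
  have h6 : 2 * H ≤ c ^ 2 * (4 * (r * H)) := by
    refine h5.trans (mul_le_mul_of_nonneg_left ?_ (by positivity))
    have : N = 2 * r ^ 2 := by linarith
    rw [this]
    nlinarith [mul_nonneg hr0 hH.le]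
  have h7 : 1 ≤ 2 * c ^ 2 * r := by
    by_contra hcon
    push Not at hcon
    nlinarith
  have h8 : 1 ≤ (2 * c ^ 2 * r) ^ 2 := one_le_pow₀ h7
  rw [div_le_iff₀ (by positivity)]
  have h9 : (2 * c ^ 2 * r) ^ 2 = N * (2 * c ^ 4) := by
    rw [mul_pow, hr2]; ring
  linarith

lemma H_cont (S : Sol u v) (x : Euc n) {t : ℝ} (ht : 0 < t) : ContinuousAt (HH u v x) t :=
  (S.H_deriv x ht).continuousAt

/-- Existence of the unit scale below any scale with `t H(t) ≥ 1`. -/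
lemma exists_unit (S : Sol u v) (x : Euc n) {t : ℝ} (ht : 0 < t) (h : 1 ≤ t * HH u v x t) :
    ∃ s, 0 < s ∧ s ≤ t ∧ s * HH u v x s = 1 := by
  have hH := S.H_pos x ht
  have ha : 0 < 1 / HH u v x t := by positivity
  have hat : 1 / HH u v x t ≤ t := by rwa [div_le_iff₀ hH]
  have hc : ContinuousOn (fun s => s * HH u v x s) (Icc (1 / HH u v x t) t) := fun s hs =>
    (continuousAt_id.mul (S.H_cont x (ha.trans_le hs.1))).continuousWithinAt
  have hle : 1 / HH u v x t * HH u v x (1 / HH u v x t) ≤ 1 := by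
    rw [div_mul_eq_mul_div, one_mul, div_le_one hH]; exact S.H_mono x ha hat
  obtain ⟨s, hs, hs1⟩ := intermediate_value_Icc hat hc ⟨hle, h⟩
  exact ⟨s, ha.trans_le hs.1, hs.2, hs1⟩

lemma H_le_val (S : Sol u v) (x : Euc n) (hx : u x = v x) {t : ℝ} (ht : 0 < t)
    (h : 1 ≤ t * HH u v x t) :
    HH u v x t ≤ 4 * (4096 * EE n 3 ^ 3) ^ 2 * (t * HH u v x t) * u x ^ 2 := by
  obtain ⟨s, hs, hst, hs1⟩ := S.exists_unit x ht h
  have h1 := S.unit_scale x hx hs hs1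
  have hHs := S.H_pos x hs
  have hH := S.H_pos x ht
  have hD := S.H_doubling x hs hst
  have he : Real.exp 1 ≤ 4 := by linarith [Real.exp_one_lt_d9]
  have h2 : HH u v x s ≤ (4096 * EE n 3 ^ 3) ^ 2 * u x ^ 2 := by
    rw [← mul_pow, ← Real.sq_sqrt hHs.le]; exact pow_le_pow_left₀ (Real.sqrt_nonneg _) h1 2
  have h3 : t / s ≤ t * HH u v x t := by
    have : 1 / s = HH u v x s := by rw [div_eq_iff hs.ne']; linarith
    rw [div_eq_mul_one_div, this]
    exact mul_le_mul_of_nonneg_left (S.H_mono x hs hst) ht.le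
  calc HH u v x t ≤ Real.exp 1 * (t / s) * HH u v x s := hD
    _ ≤ 4 * (t * HH u v x t) * ((4096 * EE n 3 ^ 3) ^ 2 * u x ^ 2) := by
        gcongr
    _ = _ := by ring

/-- Polynomial smallness, relative to `H`, of the solution on the interface. -/
lemma interface_small (n : ℕ) : ∃ δ : ℝ, 0 < δ ∧ δ ≤ 1 ∧ ∀ (u v : Euc n → ℝ), Sol u v →
    ∀ y, u y = v y → ∀ s, 0 < s →
      2 * u y ^ 2 ≤ HH u v y s * (s * HH u v y s) ^ (-δ) := by
  have hE1 : 1 ≤ EE n 3 := EE_one_le (by norm_num)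
  set c₀ := 1 / (2 * (4096 * EE n 3 ^ 3) ^ 4) with hc₀
  have hc₀p : 0 < c₀ := by positivity
  refine ⟨c₀ / (1 + c₀), by positivity, by rw [div_le_one (by positivity)]; linarith, ?_⟩
  intro u v S y hy s hs
  set δ := c₀ / (1 + c₀) with hδ
  have hδ0 : 0 < δ := by positivity
  have hH := S.H_pos y hs
  have hsq := S.sq_le_H y hs
  rw [← hy] at hsq
  have hκ0 : 0 < s * HH u v y s := by positivity
  rcases le_or_gt (s * HH u v y s) 1 with h1 | h1
  · have : 1 ≤ (s * HH u v y s) ^ (-δ) := by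
      rw [Real.rpow_neg hκ0.le]
      exact (one_le_inv₀ (by positivity)).2 (Real.rpow_le_one hκ0.le h1 hδ0.le)
    nlinarith
  · obtain ⟨r, hr, hrs, hr1⟩ := S.exists_unit y hs h1.le
    have hg := S.H_growth y hr hrs (S.N_unit y hy hr hr1)
    have hHr := S.H_pos y hr
    have hsq' := S.sq_le_H y hr
    rw [← hy] at hsq'
    have hlr : Real.log r + Real.log (HH u v y r) = 0 := by
      rw [← Real.log_mul hr.ne' hHr.ne', hr1, Real.log_one]
    have hls := Real.log_mul hs.ne' hH.ne'
    have h2 : Real.log (HH u v y r) ≤ Real.log (HH u v y s) + Real.log (s * HH u v y s) * (-δ) := by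
      rw [hls]
      have hδ' : δ * (1 + c₀) = c₀ := by rw [hδ]; field_simp
      rw [← hc₀] at hg
      have h3 : (Real.log s + Real.log (HH u v y s)) * c₀
          ≤ (Real.log (HH u v y s) - Real.log (HH u v y r)) * (1 + c₀) := by
        nlinarith
      have h4 : (1 + c₀) * ((Real.log s + Real.log (HH u v y s)) * δ)
          ≤ (1 + c₀) * (Real.log (HH u v y s) - Real.log (HH u v y r)) := by
        calc _ = (Real.log s + Real.log (HH u v y s)) * (δ * (1 + c₀)) := by ring
          _ ≤ _ := by rw [hδ']; linarith
      have h5 := le_of_mul_le_mul_left h4 (by positivity)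
      linarith
    calc 2 * u y ^ 2 ≤ HH u v y r := by linarith
      _ = Real.exp (Real.log (HH u v y r)) := (Real.exp_log hHr).symm
      _ ≤ Real.exp (Real.log (HH u v y s) + Real.log (s * HH u v y s) * (-δ)) :=
          Real.exp_le_exp.2 h2
      _ = _ := by rw [Real.exp_add, Real.exp_log hH, Real.rpow_def_of_pos hκ0]

end Sol

end Interface

/-! ### The frequency is almost one at balanced points -/

section Balanced

variable {n : ℕ}

/-- A smooth truncation of the positive part, with error at most `ε`. -/
lemma exists_trunc {ε : ℝ} (hε : 0 < ε) : ∃ φ : ℝ → ℝ, ContDiff ℝ (⊤ : ℕ∞) φ ∧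
    (∀ r, r ≤ 0 → φ r = 0) ∧ (∀ r, 0 ≤ φ r) ∧ (∀ r, 0 ≤ r → φ r ≤ r) ∧ (∀ r, r - ε ≤ φ r) ∧
    ∀ r, ∃ d, HasDerivAt φ d r ∧ 0 ≤ d ∧ d ≤ 1 := by
  set σ := fun q : ℝ => Real.smoothTransition (q / ε) with hσ
  have hσc : Continuous σ := Real.smoothTransition.continuous.comp (continuous_id.div_const ε)
  have hσs : ContDiff ℝ (⊤ : ℕ∞) σ := Real.smoothTransition.contDiff.comp (contDiff_id.div_const ε)
  set φ := fun r : ℝ => ∫ q in (0 : ℝ)..r, σ q with hφ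
  have hd : ∀ r, HasDerivAt φ (σ r) r := fun r =>
    intervalIntegral.integral_hasDerivAt_right (hσc.intervalIntegrable _ _)
      hσc.aestronglyMeasurable.stronglyMeasurableAtFilter hσc.continuousAt
  have h0 : ∀ r, 0 ≤ σ r := fun r => Real.smoothTransition.nonneg _
  have h1 : ∀ r, σ r ≤ 1 := fun r => Real.smoothTransition.le_one _
  have hz : φ 0 = 0 := by simp [hφ]
  have hmono : ∀ a b, a ≤ b → φ a ≤ φ b := fun a b hab =>
    mono_Icc hab fun t _ => ⟨_, hd t, h0 t⟩
  have hneg : ∀ r, r ≤ 0 → φ r = 0 := by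
    intro r hr
    refine le_antisymm (hz ▸ hmono r 0 hr) ?_
    have := mono_Icc (f := fun r => - φ r) hr fun t ht => ⟨_, (hd t).fun_neg, by
      have : σ t = 0 := Real.smoothTransition.zero_of_nonpos (div_nonpos_of_nonpos_of_nonneg ht.2 hε.le)
      simp [this]⟩
    simp only [hz] at this
    linarith
  have hpos : ∀ r, 0 ≤ φ r := fun r => by
    rcases le_total r 0 with h | h
    · rw [hneg r h]
    · rw [← hz]; exact hmono 0 r h
  refine ⟨φ, ?_, hneg, hpos, ?_, ?_, fun r => ⟨_, hd r, h0 r, h1 r⟩⟩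
  · rw [contDiff_infty_iff_deriv]
    refine ⟨fun r => (hd r).differentiableAt, ?_⟩
    have : deriv φ = σ := funext fun r => (hd r).deriv
    rw [this]; exact hσs
  · intro r hr
    have := mono_Icc (f := fun r => r - φ r) hr fun t _ =>
      ⟨_, (hasDerivAt_id t).fun_sub (hd t), by linarith [h1 t]⟩
    simp only [hz] at this
    linarith
  · intro r
    rcases le_total r ε with h | h
    · linarith [hpos r]
    · have := mono_Icc (f := fun r => φ r - r) h fun t ht =>
        ⟨_, (hd t).fun_sub (hasDerivAt_id t), by
          have : σ t = 1 := Real.smoothTransition.one_of_one_le ((one_le_div hε).2 ht.1)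
          rw [this]; norm_num⟩
      linarith [hpos ε]

lemma gs_congr {f g : Euc n → ℝ} {z : Euc n} (h : f =ᶠ[nhds z] g) : gs f z = gs g z := by
  unfold gs pd
  rw [h.fderiv_eq]

lemma sq_sub_le (a b : ℝ) {τ : ℝ} (hτ : 0 < τ) :
    (a - b) ^ 2 ≤ (1 + τ) * a ^ 2 + (1 + 1 / τ) * b ^ 2 := by
  have h : 0 ≤ τ * (a + b / τ) ^ 2 := by positivity
  have e : τ * (a + b / τ) ^ 2 = τ * a ^ 2 + 2 * a * b + 1 / τ * b ^ 2 := by field_simp; ring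
  nlinarith

lemma sq_add_le (a b : ℝ) {τ : ℝ} (hτ : 0 < τ) :
    (a + b) ^ 2 ≤ (1 + τ) * a ^ 2 + (1 + 1 / τ) * b ^ 2 := by
  simpa using sq_sub_le a (-b) hτ

lemma gs_trunc_le {f ε : Euc n → ℝ} {φ : ℝ → ℝ} (hf : ContDiff ℝ (⊤ : ℕ∞) f)
    (hε : ContDiff ℝ (⊤ : ℕ∞) ε) (hφ : ∀ r, ∃ d, HasDerivAt φ d r ∧ 0 ≤ d ∧ d ≤ 1) (z : Euc n)
    {τ : ℝ} (hτ : 0 < τ) :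
    gs (fun z => φ (f z - ε z)) z ≤ (1 + τ) * gs f z + (1 + 1 / τ) * gs ε z := by
  obtain ⟨d, hd, h0, h1⟩ := hφ (f z - ε z)
  unfold gs
  rw [Finset.mul_sum, Finset.mul_sum, ← Finset.sum_add_distrib]
  refine Finset.sum_le_sum fun j _ => ?_
  rw [pd_comp (f := fun z => f z - ε z) j hd ((smooth_diff hf z).fun_sub (smooth_diff hε z)),
    pd_sub j (smooth_diff hf z) (smooth_diff hε z), mul_pow]
  refine (mul_le_of_le_one_left (sq_nonneg _) (by nlinarith)).trans (sq_sub_le _ _ hτ)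

/-- The signed truncation `φ(u - ε) 1_{u > v} - φ(v - ε) 1_{u ≤ v}`. -/
noncomputable def glue (u v ε : Euc n → ℝ) (φ : ℝ → ℝ) (z : Euc n) : ℝ :=
  if v z < u z then φ (u z - ε z) else - φ (v z - ε z)

lemma glue_local {u v ε : Euc n → ℝ} {φ : ℝ → ℝ} (hu : Continuous u) (hv : Continuous v)
    (hε : Continuous ε) (h0 : ∀ r, r ≤ 0 → φ r = 0) (hlt : ∀ z, u z = v z → u z < ε z) (z : Euc n) :
    glue u v ε φ =ᶠ[nhds z] (fun z => φ (u z - ε z)) ∨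
    glue u v ε φ =ᶠ[nhds z] (fun z => - φ (v z - ε z)) ∨
    glue u v ε φ =ᶠ[nhds z] (fun _ => 0) := by
  rcases lt_trichotomy (u z) (v z) with h | h | h
  · right; left
    filter_upwards [(isOpen_lt hu hv).mem_nhds h] with y hy
    exact if_neg (not_lt.2 (le_of_lt hy))
  · right; right
    have h1 := hlt z h
    have h2 : v z < ε z := h ▸ h1
    filter_upwards [(isOpen_lt hu hε).mem_nhds h1, (isOpen_lt hv hε).mem_nhds h2] with y hy hy'
    unfold glue
    rw [h0 _ (sub_nonpos.2 (le_of_lt hy)), h0 _ (sub_nonpos.2 (le_of_lt hy'))]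
    simp
  · left
    filter_upwards [(isOpen_lt hv hu).mem_nhds h] with y hy
    exact if_pos hy

lemma glue_smooth {u v ε : Euc n → ℝ} {φ : ℝ → ℝ} (hu : ContDiff ℝ (⊤ : ℕ∞) u)
    (hv : ContDiff ℝ (⊤ : ℕ∞) v) (hε : ContDiff ℝ (⊤ : ℕ∞) ε) (hφ : ContDiff ℝ (⊤ : ℕ∞) φ)
    (h0 : ∀ r, r ≤ 0 → φ r = 0) (hlt : ∀ z, u z = v z → u z < ε z) :
    ContDiff ℝ (⊤ : ℕ∞) (glue u v ε φ) := by
  rw [contDiff_iff_contDiffAt]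
  intro z
  rcases glue_local hu.continuous hv.continuous hε.continuous h0 hlt z with h | h | h
  · exact (hφ.comp (hu.sub hε)).contDiffAt.congr_of_eventuallyEq h
  · exact (hφ.comp (hv.sub hε)).neg.contDiffAt.congr_of_eventuallyEq h
  · exact contDiff_const.contDiffAt.congr_of_eventuallyEq h

lemma gs_glue_le {u v ε : Euc n → ℝ} {φ : ℝ → ℝ} (hu : ContDiff ℝ (⊤ : ℕ∞) u)
    (hv : ContDiff ℝ (⊤ : ℕ∞) v) (hε : ContDiff ℝ (⊤ : ℕ∞) ε)
    (hφ : ∀ r, ∃ d, HasDerivAt φ d r ∧ 0 ≤ d ∧ d ≤ 1)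
    (h0 : ∀ r, r ≤ 0 → φ r = 0) (hlt : ∀ z, u z = v z → u z < ε z) (z : Euc n)
    {τ : ℝ} (hτ : 0 < τ) :
    gs (glue u v ε φ) z ≤ (1 + τ) * (gs u z + gs v z) + (1 + 1 / τ) * gs ε z := by
  have hgu := gs_nonneg u z
  have hgv := gs_nonneg v z
  have hge := gs_nonneg ε z
  have h1 := mul_nonneg (show 0 ≤ 1 + τ by positivity) hgu
  have h2 := mul_nonneg (show 0 ≤ 1 + τ by positivity) hgv
  rcases glue_local hu.continuous hv.continuous hε.continuous h0 hlt z with h | h | h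
  · rw [gs_congr h]
    linarith [gs_trunc_le hu hε hφ z hτ]
  · rw [gs_congr h]
    have e : gs (fun z => - φ (v z - ε z)) z = gs (fun z => φ (v z - ε z)) z := by
      unfold gs pd
      refine Finset.sum_congr rfl fun j _ => ?_
      rw [fderiv_fun_neg]; simp
    rw [e]
    linarith [gs_trunc_le hv hε hφ z hτ]
  · rw [gs_congr h]
    have e : gs (fun _ : Euc n => (0 : ℝ)) z = 0 := by
      unfold gs
      simp [pd_const]
    rw [e]; positivity

/-- The smooth weight `exp √(1 + |z - x|²/s)`. -/
noncomputable def wt (x : Euc n) (s : ℝ) (z : Euc n) : ℝ := Real.exp √(1 + ‖z - x‖ ^ 2 / s)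

lemma wt_smooth (x : Euc n) {s : ℝ} (hs : 0 < s) : ContDiff ℝ (⊤ : ℕ∞) (wt x s) := by
  unfold wt
  refine Real.contDiff_exp.comp (ContDiff.sqrt ?_ fun z => by positivity)
  exact contDiff_const.add (((contDiff_id.sub contDiff_const).norm_sq ℝ).div_const s)

lemma le_wt (x : Euc n) {s : ℝ} (hs : 0 < s) (z : Euc n) : Real.exp (‖z - x‖ / √s) ≤ wt x s z := by
  unfold wt
  refine Real.exp_le_exp.2 (Real.le_sqrt_of_sq_le ?_)
  rw [div_pow, Real.sq_sqrt hs.le]; linarith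

lemma wt_le (x : Euc n) {s : ℝ} (hs : 0 < s) (z : Euc n) :
    wt x s z ≤ Real.exp (1 + ‖z - x‖ / √s) := by
  unfold wt
  refine Real.exp_le_exp.2 (Real.sqrt_le_left (by positivity) |>.2 ?_)
  have : ‖z - x‖ ^ 2 / s = (‖z - x‖ / √s) ^ 2 := by rw [div_pow, Real.sq_sqrt hs.le]
  rw [this]
  have : 0 ≤ ‖z - x‖ / √s := by positivity
  nlinarith

lemma one_le_wt (x : Euc n) (s : ℝ) (z : Euc n) : 1 ≤ wt x s z :=
  Real.one_le_exp (Real.sqrt_nonneg _)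

lemma SG_wt (x : Euc n) {s : ℝ} (hs : 0 < s) : SG (wt x s) := by
  refine ((SG_exp 1 x s).const_mul (Real.exp 1)).mono (wt_smooth x hs).continuous fun z => ?_
  rw [abs_of_nonneg (zero_le_one.trans (one_le_wt x s z)), abs_of_pos (by positivity),
    ← Real.exp_add, one_mul]
  exact wt_le x hs z

lemma gi_wt_sq_le (x : Euc n) {s : ℝ} (hs : 0 < s) :
    gi (fun z => wt x s z ^ 2) x s ≤ Real.exp 2 * EE n 2 := by
  refine gi_le_exp ((SG_wt x hs).pow 2).gi x hs _ _ fun z => ?_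
  calc wt x s z ^ 2 ≤ Real.exp (1 + ‖z - x‖ / √s) ^ 2 :=
        pow_le_pow_left₀ (Real.exp_pos _).le (wt_le x hs z) 2
    _ = _ := by rw [← Real.exp_nat_mul, ← Real.exp_add]; congr 1; push_cast; ring

lemma gs_wt_le (x : Euc n) {s : ℝ} (hs : 0 < s) (c : ℝ) (z : Euc n) :
    gs (fun z => c * wt x s z) z ≤ c ^ 2 * wt x s z ^ 2 / s := by
  have hq : 0 < 1 + ‖z - x‖ ^ 2 / s := by positivity
  set q := 1 + ‖z - x‖ ^ 2 / s with hqd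
  have hn : DifferentiableAt ℝ (fun z : Euc n => ‖z - x‖ ^ 2) z :=
    ((differentiableAt_id.sub_const x).norm_sq ℝ)
  have hn' : DifferentiableAt ℝ (fun z : Euc n => 1 + ‖z - x‖ ^ 2 / s) z :=
    by simpa only [div_eq_mul_inv] using (hn.mul_const s⁻¹).const_add 1
  have hder : HasDerivAt (fun r : ℝ => c * Real.exp √r) (c * (Real.exp √q * (1 / (2 * √q)))) q :=
    ((Real.hasDerivAt_sqrt hq.ne').exp).const_mul c
  have hpd : ∀ j, pd j (fun z => c * wt x s z) z =
      c * (Real.exp √q * (1 / (2 * √q))) * (2 * (z j - x j) / s) := by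
    intro j
    have h1 := pd_comp (f := fun z : Euc n => 1 + ‖z - x‖ ^ 2 / s) j hder hn'
    have h2 : pd j (fun z : Euc n => 1 + ‖z - x‖ ^ 2 / s) z = 2 * (z j - x j) / s := by
      have h3 : (fun z : Euc n => 1 + ‖z - x‖ ^ 2 / s) = fun z => 1 + s⁻¹ * ‖z - x‖ ^ 2 := by
        funext y; rw [div_eq_inv_mul]
      rw [h3, pd_add j (differentiableAt_const _) (hn.const_mul _), pd_const, pd_const_mul j _ hn,
        pd_norm_sq]
      field_simp; ring
    rw [← h2]; exact h1
  have hw : wt x s z = Real.exp √q := rfl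
  have hsq : √q ^ 2 = q := Real.sq_sqrt hq.le
  have hsqp : 0 < √q := Real.sqrt_pos.2 hq
  have h1 : gs (fun z => c * wt x s z) z = c ^ 2 * wt x s z ^ 2 / s * (‖z - x‖ ^ 2 / s / q) := by
    unfold gs
    simp only [hpd, hw]
    rw [← hsq, ← sum_coord_sq, Finset.sum_div, Finset.sum_div, Finset.mul_sum]
    refine Finset.sum_congr rfl fun j _ => ?_
    simp only [Real.sqrt_sq hsqp.le]
    field_simp
  rw [h1]
  refine mul_le_of_le_one_right (by positivity) ?_
  rw [div_le_one hq]; linarith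

set_option maxHeartbeats 1000000 in
/-- At a balanced point `∫ (u - v) G = 0` the frequency is nearly one: away from the interface the
pair is nearly segregated, so a signed truncation of it is an admissible, almost mean-free function
in the Gaussian Poincaré inequality. -/
lemma Sol.balanced (n : ℕ) : ∃ δ C : ℝ, 0 < δ ∧ δ ≤ 1 ∧ 0 < C ∧ ∀ (u v : Euc n → ℝ), Sol u v →
    ∀ x s, 0 < s → gi u x s = gi v x s → 1 ≤ s * HH u v x s →
      1 - C * (s * HH u v x s) ^ (-δ) ≤ NN u v x s := by
  obtain ⟨δ, hδ0, hδ1, hδ⟩ := Sol.interface_small n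
  have hE : 1 ≤ EE n 2 := EE_one_le (by norm_num)
  refine ⟨δ / 2, 5 + 20 * (Real.exp 2 * EE n 2), by positivity, by linarith, by positivity, ?_⟩
  intro u v S x s hs hm hκ
  set E := Real.exp 2 * EE n 2 with hEd
  have hE0 : 0 < E := by positivity
  have hH := S.H_pos x hs
  set H := HH u v x s with hHd
  set κ := s * H with hκd
  have hκ0 : 0 < κ := by positivity
  set τ := κ ^ (-(δ / 2)) with hτd
  have hτ0 : 0 < τ := by positivity
  have hτ1 : τ ≤ 1 := by
    rw [hτd]; exact Real.rpow_le_one_of_one_le_of_nonpos hκ (by linarith)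
  have hτ2 : τ ^ 2 = κ ^ (-δ) := by
    rw [hτd, ← Real.rpow_natCast, ← Real.rpow_mul hκ0.le]; congr 1; push_cast; ring
  -- smallness on the interface
  set ε₀ := √H * τ with hε₀d
  have hε₀ : 0 < ε₀ := by positivity
  have hε₀2 : ε₀ ^ 2 = H * τ ^ 2 := by rw [hε₀d, mul_pow, Real.sq_sqrt hH.le]
  set ε := fun z => ε₀ * wt x s z with hεd
  have hεs : ContDiff ℝ (⊤ : ℕ∞) ε := contDiff_const.mul (wt_smooth x hs)
  have hlt : ∀ z, u z = v z → u z < ε z := by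
    intro z hz
    have h1 := hδ u v S z hz s hs
    have hHz := S.H_pos z hs
    have h2 := S.H_lip x z hs
    set e := Real.exp (‖z - x‖ / √s) with hed
    have hexp : Real.exp (2 * (‖z - x‖ / √s)) = e ^ 2 := by
      rw [hed, ← Real.exp_nat_mul]; push_cast; rfl
    rw [hexp, ← hHd] at h2
    have he1 : 1 ≤ e := Real.one_le_exp (by positivity)
    -- `y ↦ y (s y) ^ (-δ)` is monotone
    have hmono : HH u v z s * (s * HH u v z s) ^ (-δ) ≤ (H * e ^ 2) * (s * (H * e ^ 2)) ^ (-δ) := by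
      have key : ∀ y : ℝ, 0 < y → y * (s * y) ^ (-δ) = s ^ (-δ) * y ^ (1 - δ) := by
        intro y hy
        rw [Real.mul_rpow hs.le hy.le, sub_eq_add_neg, Real.rpow_add hy, Real.rpow_one]; ring
      rw [key _ hHz, key _ (by positivity)]
      exact mul_le_mul_of_nonneg_left (Real.rpow_le_rpow hHz.le h2 (by linarith)) (by positivity)
    have h3 : (s * (H * e ^ 2)) ^ (-δ) ≤ τ ^ 2 := by
      rw [hτ2]
      refine Real.rpow_le_rpow_of_nonpos hκ0 ?_ (by linarith)
      rw [hκd]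
      have : H ≤ H * e ^ 2 := le_mul_of_one_le_right hH.le (one_le_pow₀ he1)
      nlinarith
    have hw := le_wt x hs z
    have h4 : 2 * u z ^ 2 ≤ ε z ^ 2 := by
      calc 2 * u z ^ 2 ≤ (H * e ^ 2) * τ ^ 2 := h1.trans (hmono.trans
            (mul_le_mul_of_nonneg_left h3 (by positivity)))
        _ = ε₀ ^ 2 * e ^ 2 := by rw [hε₀2]; ring
        _ ≤ ε₀ ^ 2 * wt x s z ^ 2 := by gcongr
        _ = _ := by rw [hεd]; ring
    have hεz : 0 < ε z := mul_pos hε₀ (Real.exp_pos _)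
    have hu := S.pu z
    by_contra hcon
    push Not at hcon
    nlinarith
  obtain ⟨φ, hφs, hφ0, hφn, hφle, hφge, hφd⟩ := exists_trunc hε₀
  set h := glue u v ε φ with hhd
  have hhs : ContDiff ℝ (⊤ : ℕ∞) h := glue_smooth S.hu S.hv hεs hφs hφ0 hlt
  have hεpos : ∀ z, 0 < ε z := fun z => mul_pos hε₀ (Real.exp_pos _)
  have hε₀le : ∀ z, ε₀ ≤ ε z := fun z => le_mul_of_one_le_right hε₀.le (one_le_wt x s z)
  have hεSG : SG ε := (SG_wt x hs).const_mul ε₀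
  -- `φ(w - ε)` lies between `w - 2ε` and `w`
  have hφb : ∀ z w, 0 < w → φ (w - ε z) ≤ w ∧ w - 2 * ε z ≤ φ (w - ε z) := by
    intro z w hw
    refine ⟨?_, by linarith [hφge (w - ε z), hε₀le z]⟩
    rcases le_total (w - ε z) 0 with h1 | h1
    · rw [hφ0 _ h1]; exact hw.le
    · linarith [hφle _ h1, hεpos z]
  have hcase : ∀ z, (v z < u z ∧ h z = φ (u z - ε z)) ∨ (u z ≤ v z ∧ h z = - φ (v z - ε z)) := by
    intro z
    rcases lt_or_ge (v z) (u z) with h1 | h1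
    · left; exact ⟨h1, if_pos h1⟩
    · right; exact ⟨h1, if_neg (not_lt.2 h1)⟩
  have habs : ∀ z, |h z| ≤ u z + v z := by
    intro z
    have hu := S.pu z
    have hv := S.pv z
    rcases hcase z with ⟨-, h2⟩ | ⟨-, h2⟩
    · rw [h2, abs_of_nonneg (hφn _)]; linarith [(hφb z _ hu).1]
    · rw [h2, abs_neg, abs_of_nonneg (hφn _)]; linarith [(hφb z _ hv).1]
  have hhSG : SG h := (S.SGu.add S.SGv).mono hhs.continuous fun z => by
    rw [abs_of_pos (add_pos (S.pu z) (S.pv z))]; exact habs z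
  -- the gradient term
  have hgsε : ∀ z, gs ε z ≤ ε₀ ^ 2 / s * wt x s z ^ 2 := fun z =>
    (gs_wt_le x hs ε₀ z).trans (le_of_eq (by ring))
  have hgsh : ∀ z, gs h z ≤ (1 + τ) * ed u v z + (1 + 1 / τ) * (ε₀ ^ 2 / s) * wt x s z ^ 2 := by
    intro z
    refine (gs_glue_le S.hu S.hv hεs hφd hφ0 hlt z hτ0).trans ?_
    have h1 : gs u z + gs v z ≤ ed u v z := by unfold ed; nlinarith [sq_nonneg (u z * v z)]
    have h2 : (1 + 1 / τ) * gs ε z ≤ (1 + 1 / τ) * (ε₀ ^ 2 / s * wt x s z ^ 2) :=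
      mul_le_mul_of_nonneg_left (hgsε z) (by positivity)
    have h3 := mul_le_mul_of_nonneg_left h1 (show 0 ≤ 1 + τ by positivity)
    linarith
  have hGIr : GI (fun z => (1 + τ) * ed u v z + (1 + 1 / τ) * (ε₀ ^ 2 / s) * wt x s z ^ 2) :=
    (S.GIed.const_mul _).add (((SG_wt x hs).pow 2).const_mul _).gi
  have hGIg : GI (gs h) := hGIr.mono (gs_continuous (smooth_one hhs)) fun z => by
    rw [abs_of_nonneg (gs_nonneg _ _)]; exact hgsh z
  have hwt := gi_wt_sq_le x hs
  rw [← hEd] at hwt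
  set N := NN u v x s with hNd
  have hND : N * H = 2 * s * DD u v x s := by rw [hNd]; unfold NN; field_simp; rw [← hHd]; field_simp
  have hN1 := S.N_le_one x hs
  rw [← hNd] at hN1
  have hgrad : 2 * s * gi (gs h) x s ≤ (1 + τ) * (N * H) + 4 * τ * H * E := by
    have h1 := gi_mono hGIg hGIr x hs hgsh
    rw [gi_add (S.GIed.const_mul _) (((SG_wt x hs).pow 2).const_mul _).gi x hs, gi_const_mul,
      gi_const_mul] at h1
    have h2 : gi (ed u v) x s = DD u v x s := rfl
    rw [h2] at h1
    have h3 := mul_le_mul_of_nonneg_left h1 (show 0 ≤ 2 * s by positivity)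
    refine h3.trans ?_
    have h4 : 2 * s * ((1 + τ) * DD u v x s + (1 + 1 / τ) * (ε₀ ^ 2 / s) * gi (fun z => wt x s z ^ 2) x s)
        = (1 + τ) * (N * H) + 2 * (τ + 1) * τ * H * gi (fun z => wt x s z ^ 2) x s := by
      rw [hND, hε₀2]; field_simp
    rw [h4]
    have h5 : 2 * (τ + 1) * τ * H ≤ 4 * τ * H := by nlinarith [mul_pos hτ0 hH]
    have h6 : 2 * (τ + 1) * τ * H * gi (fun z => wt x s z ^ 2) x s ≤ 4 * τ * H * E :=
      mul_le_mul h5 hwt (gi_nonneg x hs fun z => sq_nonneg _) (by positivity)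
    linarith
  -- the mean of `u v`
  have hGIuv : GI (fun z => u z * v z) := (S.SGu.mul S.SGv).gi
  have huv : gi (fun z => u z * v z) x s ≤ τ * H := by
    refine abs_le_of_sq_le_sq' ?_ (by positivity) |>.2
    have h1 := (S.uv_sq_le x hs).trans (S.P_le_D x hs)
    have h2 : κ ^ (-δ) * κ ≥ 1 := by
      rw [← Real.rpow_add_one hκ0.ne']
      exact Real.one_le_rpow hκ (by linarith)
    have h3 : DD u v x s ≤ τ ^ 2 * H ^ 2 := by
      rw [hτ2]
      have h4 : 2 * s * DD u v x s ≤ H := S.D_le x hs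
      have h5 : H ≤ κ ^ (-δ) * κ * H := le_mul_of_one_le_left hH.le h2
      have hD0 : 0 ≤ DD u v x s := (S.P_nonneg x hs).trans (S.P_le_D x hs)
      have h6 : s * DD u v x s ≤ s * (κ ^ (-δ) * H ^ 2) := by
        calc s * DD u v x s ≤ H := by nlinarith
          _ ≤ _ := h5
          _ = _ := by rw [hκd]; ring
      exact le_of_mul_le_mul_left h6 hs
    rw [mul_pow]; linarith
  -- the mean of the truncation
  have hgiε : gi (fun z => ε z ^ 2) x s ≤ τ ^ 2 * H * E := by
    have : gi (fun z => ε z ^ 2) x s = ε₀ ^ 2 * gi (fun z => wt x s z ^ 2) x s := by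
      rw [← gi_const_mul]; exact gi_congr x s fun z => by rw [hεd]; ring
    rw [this, hε₀2]
    calc _ ≤ H * τ ^ 2 * E := mul_le_mul_of_nonneg_left hwt (by positivity)
      _ = _ := by ring
  have hτsq : τ ^ 2 ≤ τ := by nlinarith
  have hgiε' : gi (fun z => ε z ^ 2) x s ≤ τ * H * E :=
    hgiε.trans (by gcongr)
  have hmean : gi h x s ^ 2 ≤ 8 * (τ * H * E) + 2 * (τ * H) := by
    have hd : SG (fun z => h z - (u z - v z)) := hhSG.sub (S.SGu.sub S.SGv)
    have h1 : gi h x s = gi (fun z => h z - (u z - v z)) x s := by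
      rw [gi_sub hhSG.gi (S.SGu.sub S.SGv).gi x hs, gi_sub S.SGu.gi S.SGv.gi x hs, hm]; ring
    rw [h1]
    refine (gi_sq_le hd.continuous (hd.pow 2).gi x hs).trans ?_
    have h2 : ∀ z, (h z - (u z - v z)) ^ 2 ≤ 8 * ε z ^ 2 + 2 * (u z * v z) := by
      intro z
      have hu := S.pu z
      have hv := S.pv z
      have hε := hεpos z
      rcases hcase z with ⟨h3, h4⟩ | ⟨h3, h4⟩
      · obtain ⟨h5, h6⟩ := hφb z _ hu
        rw [h4]
        set p := u z - φ (u z - ε z) with hp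
        have hp0 : 0 ≤ p := by linarith
        have hp1 : p ≤ 2 * ε z := by linarith
        have e : φ (u z - ε z) - (u z - v z) = v z - p := by rw [hp]; ring
        rw [e]
        nlinarith
      · obtain ⟨h5, h6⟩ := hφb z _ hv
        rw [h4]
        set p := v z - φ (v z - ε z) with hp
        have hp0 : 0 ≤ p := by linarith
        have hp1 : p ≤ 2 * ε z := by linarith
        have e : - φ (v z - ε z) - (u z - v z) = p - u z := by rw [hp]; ring
        rw [e]
        nlinarith
    refine (gi_mono (hd.pow 2).gi (((hεSG.pow 2).const_mul 8).add ((S.SGu.mul S.SGv).const_mul 2)).gi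
      x hs h2).trans ?_
    rw [gi_add ((hεSG.pow 2).const_mul 8).gi ((S.SGu.mul S.SGv).const_mul 2).gi x hs, gi_const_mul,
      gi_const_mul]
    linarith
  -- the second moment of the truncation
  have hsec : H - τ * H - 8 * (τ * H * E) ≤ (1 + τ) * gi (fun z => h z ^ 2) x s := by
    have h2 : ∀ z, u z ^ 2 + v z ^ 2 ≤
        (1 + τ) * h z ^ 2 + ((1 + 1 / τ) * 4 * ε z ^ 2 + u z * v z) := by
      intro z
      have hu := S.pu z
      have hv := S.pv z
      have hε := hεpos z
      have hmain : ∀ a b, 0 < a → 0 < b → b ≤ a → a ^ 2 + b ^ 2 ≤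
          (1 + τ) * φ (a - ε z) ^ 2 + ((1 + 1 / τ) * 4 * ε z ^ 2 + a * b) := by
        intro a b ha hb hba
        obtain ⟨-, h6⟩ := hφb z _ ha
        have h7 : a ^ 2 ≤ (φ (a - ε z) + 2 * ε z) ^ 2 :=
          pow_le_pow_left₀ ha.le (by linarith) 2
        have h8 := sq_add_le (φ (a - ε z)) (2 * ε z) hτ0
        have h9 : b ^ 2 ≤ a * b := by rw [sq]; exact mul_le_mul_of_nonneg_right hba hb.le
        have h10 : (1 + 1 / τ) * (2 * ε z) ^ 2 = (1 + 1 / τ) * 4 * ε z ^ 2 := by ring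
        linarith
      rcases hcase z with ⟨h3, h4⟩ | ⟨h3, h4⟩
      · rw [h4]; exact hmain _ _ hu hv h3.le
      · rw [h4, neg_sq]
        have := hmain _ _ hv hu h3
        linarith
    have hr1 : GI (fun z => (1 + τ) * h z ^ 2) := ((hhSG.pow 2).const_mul _).gi
    have hr2 : GI (fun z => (1 + 1 / τ) * 4 * ε z ^ 2) := ((hεSG.pow 2).const_mul _).gi
    have h3 := gi_mono S.SGH.gi (hr1.add (hr2.add hGIuv)) x hs h2
    rw [gi_add hr1 (hr2.add hGIuv) x hs, gi_add hr2 hGIuv x hs, gi_const_mul, gi_const_mul] at h3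
    have h4 : (1 + 1 / τ) * 4 * gi (fun z => ε z ^ 2) x s ≤ 8 * (τ * H * E) := by
      calc (1 + 1 / τ) * 4 * gi (fun z => ε z ^ 2) x s
          ≤ (1 + 1 / τ) * 4 * (τ ^ 2 * H * E) := mul_le_mul_of_nonneg_left hgiε (by positivity)
        _ = 4 * (τ + 1) * (τ * H * E) := by field_simp
        _ ≤ 4 * (1 + 1) * (τ * H * E) := by gcongr
        _ = _ := by ring
    have h5 : gi (fun z => u z ^ 2 + v z ^ 2) x s = H := rfl
    rw [h5] at h3
    linarith
  have hP := poincare hhs (hhSG.pow 2).gi hGIg x hs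
  have hI : gi (fun z => h z ^ 2) x s ≤
      (1 + τ) * (N * H) + 4 * τ * H * E + (8 * (τ * H * E) + 2 * (τ * H)) := by linarith
  have hNH : (1 + τ) * (N * H) ≤ N * H + τ * H := by
    have : N * H ≤ 1 * H := mul_le_mul_of_nonneg_right hN1 hH.le
    nlinarith
  have h2 : (1 - τ) * (H - τ * H - 8 * (τ * H * E)) ≤ gi (fun z => h z ^ 2) x s := by
    have h3 := mul_le_mul_of_nonneg_left hsec (show 0 ≤ 1 - τ by linarith)
    have h4 : 0 ≤ gi (fun z => h z ^ 2) x s := gi_nonneg x hs fun z => sq_nonneg _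
    have h5 : (1 - τ) * ((1 + τ) * gi (fun z => h z ^ 2) x s) ≤ gi (fun z => h z ^ 2) x s := by
      nlinarith [mul_nonneg (sq_nonneg τ) h4]
    linarith
  have h3 : H - 2 * (τ * H) - 8 * (τ * H * E) ≤ (1 - τ) * (H - τ * H - 8 * (τ * H * E)) := by
    have : 0 ≤ τ * (τ * H + 8 * (τ * H * E)) := by positivity
    nlinarith
  have h4 : (1 - (5 + 20 * E) * τ) * H ≤ N * H := by nlinarith
  exact le_of_mul_le_mul_right h4 hH

end Balanced

/-! ### Weighted maxima and balanced points near the interface -/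

section Weighted

variable {n : ℕ}

lemma EE_le_lin {l : ℝ} (hl : 0 ≤ l) (hl1 : l ≤ 1) : EE n l ≤ 1 + l * EE n 2 := by
  have e : (1 : ℝ) + l * EE n 2 = gi (fun w : Euc n => 1 + l * Real.exp (2 * ‖w‖)) 0 1 := by
    have h := (SG_exp (n := n) 2 0 1).gi
    simp only [Real.sqrt_one, div_one, sub_zero] at h
    rw [gi_add (SG.const 1).gi (h.const_mul l) 0 one_pos, gi_const one_pos, gi_const_mul]; rfl
  rw [e]
  have h1 := (SG_exp (n := n) l 0 1).gi
  have h2 := (SG_exp (n := n) 2 0 1).gi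
  simp only [Real.sqrt_one, div_one, sub_zero] at h1 h2
  refine gi_mono h1 ((SG.const 1).gi.add (h2.const_mul l)) 0 one_pos fun w => ?_
  have hr : 0 ≤ ‖w‖ := norm_nonneg w
  set r := ‖w‖
  -- `e^{lr} (1 - lr) ≤ 1` and `l r e^{lr} ≤ l e^{2r}`
  have h3 : Real.exp (l * r) * (1 - l * r) ≤ 1 := by
    have := Real.add_one_le_exp (-(l * r))
    calc Real.exp (l * r) * (1 - l * r) ≤ Real.exp (l * r) * Real.exp (-(l * r)) := by
          gcongr; linarith
      _ = 1 := by rw [← Real.exp_add]; simp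
  have h4 : r * Real.exp (l * r) ≤ Real.exp (2 * r) := by
    have h5 : r ≤ Real.exp r := by linarith [Real.add_one_le_exp r]
    have h6 : Real.exp (l * r) ≤ Real.exp r := Real.exp_le_exp.2 (by nlinarith)
    calc r * Real.exp (l * r) ≤ Real.exp r * Real.exp r := by gcongr
      _ = _ := by rw [← Real.exp_add]; congr 1; ring
  nlinarith [mul_le_mul_of_nonneg_left h4 hl]

namespace Sol

variable {u v : Euc n → ℝ}

/-- The heat kernels at times `3s/4`, `s`, `3s/2` are in geometric progression up to constants. -/
lemma gk_geom {s : ℝ} (hs : 0 < s) (y : Euc n) :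
    gk s y ^ 2 ≤ (3 / 2 : ℝ) ^ ((n : ℝ) / 2) * (gk (3 / 4 * s) y * gk (3 / 2 * s) y) := by
  have h1 := gk_mul_exp (show 0 < 3 / 4 * s by positivity) hs y
  have h2 := gk_mul_exp hs (show 0 < 3 / 2 * s by positivity) y
  have e1 : ‖y‖ ^ 2 / (4 * (3 / 4 * s)) - ‖y‖ ^ 2 / (4 * s) = ‖y‖ ^ 2 / (12 * s) := by
    field_simp; ring
  have e2 : ‖y‖ ^ 2 / (4 * s) - ‖y‖ ^ 2 / (4 * (3 / 2 * s)) = ‖y‖ ^ 2 / (12 * s) := by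
    field_simp; ring
  have e3 : 3 / 2 * s / s = 3 / 2 := by field_simp
  have e4 : s / (3 / 4 * s) = 4 / 3 := by field_simp
  rw [e1, e4] at h1
  rw [e2, e3] at h2
  have hq : (1 : ℝ) ≤ (4 / 3 : ℝ) ^ ((n : ℝ) / 2) := Real.one_le_rpow (by norm_num) (by positivity)
  have p1 := gk_pos hs y
  calc gk s y ^ 2 ≤ (4 / 3 : ℝ) ^ ((n : ℝ) / 2) * gk s y ^ 2 := le_mul_of_one_le_left (by positivity) hq
    _ = ((4 / 3 : ℝ) ^ ((n : ℝ) / 2) * gk s y) * gk s y := by ring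
    _ = gk (3 / 4 * s) y * (gk s y * Real.exp (‖y‖ ^ 2 / (12 * s))) := by rw [← h1]; ring
    _ = _ := by rw [h2]; ring

lemma A_le_F (S : Sol u v) (x : Euc n) {s θ : ℝ} (hs : 0 < s) (hθ : 0 < θ) :
    2 * gi u x s ≤ θ * gi (fun z => u z ^ 2) x (3 / 4 * s) + (3 / 2 : ℝ) ^ ((n : ℝ) / 2) / θ := by
  set q := (3 / 2 : ℝ) ^ ((n : ℝ) / 2) with hq
  have hq0 : 0 < q := by positivity
  have hs1 : 0 < 3 / 4 * s := by positivity
  have hs2 : 0 < 3 / 2 * s := by positivity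
  have e2 : q / θ = gi (fun _ => q / θ) x (3 / 2 * s) := (gi_const hs2 x _).symm
  rw [e2, ← gi_const_mul θ, ← gi_const_mul 2]
  unfold gi
  have i1 := (S.SGu.const_mul 2).gi.integrable hs x
  have i2 := ((S.SGu.pow 2).const_mul θ).gi.integrable hs1 x
  have i3 := (SG.const (n := n) (q / θ)).gi.integrable hs2 x
  rw [← integral_add i2 i3]
  refine integral_mono i1 (i2.add i3) fun z => ?_
  have hu := S.pu z
  have hg := gk_geom hs (z - x)
  have p1 := gk_pos hs1 (z - x)
  have p2 := gk_pos hs2 (z - x)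
  have p0 := gk_pos hs (z - x)
  rw [← hq] at hg
  simp only [Pi.add_apply]
  refine abs_le_of_sq_le_sq' ?_ (by positivity) |>.2
  set a := gk (3 / 4 * s) (z - x)
  set b := gk (3 / 2 * s) (z - x)
  set g := gk s (z - x)
  calc (2 * u z * g) ^ 2 = 4 * u z ^ 2 * g ^ 2 := by ring
    _ ≤ 4 * u z ^ 2 * (q * (a * b)) := mul_le_mul_of_nonneg_left hg (by positivity)
    _ = 4 * (θ * u z ^ 2 * a) * (q / θ * b) := by field_simp
    _ ≤ (θ * u z ^ 2 * a + q / θ * b) ^ 2 := by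
        nlinarith [sq_nonneg (θ * u z ^ 2 * a - q / θ * b)]

/-- If `v` does not exceed its value at `x` by more than a slowly growing exponential, then `v`
dominates `u` in mean around `x`. -/
lemma weighted (n : ℕ) : ∃ l : ℝ, 0 < l ∧ l ≤ 1 ∧ ∀ (u v : Euc n → ℝ), Sol u v → ∀ x s, 0 < s →
    1 ≤ s * HH u v x s → (∀ z, v z ≤ v x * Real.exp (l * (‖z - x‖ / √s))) →
    gi u x s < gi v x s := by
  have hE2 : 1 ≤ EE n 2 := EE_one_le (by norm_num)
  have hE3 : 1 ≤ EE n 3 := EE_one_le (by norm_num)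
  set q := (4 / 3 : ℝ) ^ ((n : ℝ) / 2) with hq
  set q2 := (3 / 2 : ℝ) ^ ((n : ℝ) / 2) with hq2
  have hq1 : 1 ≤ q := Real.one_le_rpow (by norm_num) (by positivity)
  have hq21 : 1 ≤ q2 := Real.one_le_rpow (by norm_num) (by positivity)
  set C := q * EE n 2 * (Real.exp 12 + 4) with hC
  have hC1 : 1 ≤ C := by
    rw [hC]
    have : 1 ≤ Real.exp 12 + 4 := by linarith [Real.exp_pos 12]
    exact one_le_mul_of_one_le_of_one_le (one_le_mul_of_one_le_of_one_le hq1 hE2) this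
  set l := 1 / (512 * EE n 3 ^ 2 * q2 * C) with hl
  have hD1 : 1 ≤ 512 * EE n 3 ^ 2 * q2 * C :=
    one_le_mul_of_one_le_of_one_le (one_le_mul_of_one_le_of_one_le
      (one_le_mul_of_one_le_of_one_le (by norm_num) (one_le_pow₀ hE3)) hq21) hC1
  have hl0 : 0 < l := by positivity
  have hl1 : l ≤ 1 := by rw [hl, div_le_one (by positivity)]; exact hD1
  refine ⟨l, hl0, hl1, ?_⟩
  intro u v S x s hs hκ hv
  by_contra hcon
  push Not at hcon
  have hH := S.H_pos x hs
  set H := HH u v x s with hHd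
  set V := v x with hV
  have hV0 : 0 < V := S.pv x
  set s' := 3 / 4 * s with hs'
  have hs'0 : 0 < s' := by positivity
  have hs's : s' ≤ s := by rw [hs']; linarith
  have hw : SG (fun z : Euc n => V * Real.exp (l * (‖z - x‖ / √s))) := (SG_exp l x s).const_mul V
  have hB1 : gi v x s ≤ V * (1 + l * EE n 2) :=
    (gi_le_exp S.SGv.gi x hs V l hv).trans
      (mul_le_mul_of_nonneg_left (EE_le_lin hl0.le hl1) hV0.le)
  have hB0 : V ≤ gi v x s' := S.symm.u_le_A x hs'0
  have hB0' : V ≤ gi v x s := S.symm.u_le_A x hs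
  set J := gi (fun z => v z * u z ^ 2) x s' with hJ
  -- the interaction at time `s'` is small
  have hJs : s * J ≤ 4 * q * (V * (l * EE n 2)) := by
    have hm := mono_Icc (f := fun r => q * gi v x r - J * r) hs's fun r hr => by
      have hr0 := hs'0.trans_le hr.1
      refine ⟨_, ((S.symm.A_deriv x hr0).const_mul q).fun_sub ((hasDerivAt_id r).const_mul J), ?_⟩
      have : J ≤ q * gi (fun z => v z * u z ^ 2) x r := by
        rw [hJ, ← gi_const_mul]
        unfold gi
        refine integral_mono (S.SG_inter'.gi.integrable hs'0 x)
          ((S.SG_inter'.const_mul q).gi.integrable hr0 x) fun z => ?_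
        have h1 := gk_le_gk hs'0 hr.1 (z - x)
        have h2 : (r / s') ^ ((n : ℝ) / 2) ≤ q := by
          refine Real.rpow_le_rpow (by positivity) ?_ (by positivity)
          rw [div_le_iff₀ hs'0, hs']; linarith [hr.2]
        have h3 : gk s' (z - x) ≤ q * gk r (z - x) :=
          h1.trans (mul_le_mul_of_nonneg_right h2 (gk_pos hr0 _).le)
        have hu := S.pu z
        have hvz := S.pv z
        calc v z * u z ^ 2 * gk s' (z - x) ≤ v z * u z ^ 2 * (q * gk r (z - x)) :=
              mul_le_mul_of_nonneg_left h3 (by positivity)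
          _ = _ := by ring
      linarith
    have h1 : J * s - J * s' = s * J / 4 := by rw [hs']; ring
    have h2 : q * gi v x s - q * gi v x s' ≤ q * (V * (l * EE n 2)) := by
      rw [← mul_sub]
      exact mul_le_mul_of_nonneg_left (by linarith) (by positivity)
    linarith
  -- the `L²` mass of `u` at time `s'` is small
  set F := gi (fun z => u z ^ 2) x s' with hF
  have hFs : V * F ≤ Real.exp 12 * q * H * (V * (l * EE n 2)) + J := by
    have hd : SG (fun z => V * Real.exp (l * (‖z - x‖ / √s)) - v z) := hw.sub S.SGv
    have h1 : gi (fun z => u z ^ 2 * (V * Real.exp (l * (‖z - x‖ / √s)) - v z)) x s' ≤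
        Real.exp 12 * q * H * gi (fun z => V * Real.exp (l * (‖z - x‖ / √s)) - v z) x s := by
      rw [← gi_const_mul]
      unfold gi
      refine integral_mono (((S.SGu.pow 2).mul hd).gi.integrable hs'0 x)
        ((hd.const_mul _).gi.integrable hs x) fun z => ?_
      have hd0 : 0 ≤ V * Real.exp (l * (‖z - x‖ / √s)) - v z := sub_nonneg.2 (hv z)
      have hu2 : u z ^ 2 * gk s' (z - x) ≤ Real.exp 12 * q * H * gk s (z - x) := by
        have h2 := S.u_le_H x z hs
        set ρ := ‖z - x‖ / √s with hρ
        have hρ0 : 0 ≤ ρ := by positivity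
        have h3 : u z ^ 2 ≤ H * Real.exp (2 * ρ) := by
          calc u z ^ 2 ≤ (√H * Real.exp ρ) ^ 2 := pow_le_pow_left₀ (S.pu z).le h2 2
            _ = _ := by rw [mul_pow, Real.sq_sqrt hH.le, ← Real.exp_nat_mul]; norm_num
        have h4 := gk_mul_exp hs'0 hs (z - x)
        have e1 : ‖z - x‖ ^ 2 / (4 * s') - ‖z - x‖ ^ 2 / (4 * s) = ρ ^ 2 / 12 := by
          rw [hρ, div_pow, Real.sq_sqrt hs.le, hs']; field_simp; ring
        have e2 : s / s' = 4 / 3 := by rw [hs']; field_simp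
        rw [e1, e2, ← hq] at h4
        have h5 : Real.exp (2 * ρ) ≤ Real.exp 12 * Real.exp (ρ ^ 2 / 12) := by
          rw [← Real.exp_add]; exact Real.exp_le_exp.2 (by nlinarith [sq_nonneg (ρ - 12)])
        have p := gk_pos hs'0 (z - x)
        calc u z ^ 2 * gk s' (z - x)
            ≤ (H * (Real.exp 12 * Real.exp (ρ ^ 2 / 12))) * gk s' (z - x) := by
              refine mul_le_mul_of_nonneg_right (h3.trans ?_) p.le
              exact mul_le_mul_of_nonneg_left h5 hH.le
          _ = Real.exp 12 * H * (gk s' (z - x) * Real.exp (ρ ^ 2 / 12)) := by ring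
          _ = _ := by rw [h4]; ring
      simp only
      nlinarith [mul_le_mul_of_nonneg_left hu2 hd0]
    have h2 : gi (fun z => V * Real.exp (l * (‖z - x‖ / √s)) - v z) x s ≤ V * (l * EE n 2) := by
      rw [gi_sub hw.gi S.SGv.gi x hs, gi_const_mul, gi_exp l x hs]
      have := mul_le_mul_of_nonneg_left (EE_le_lin (n := n) hl0.le hl1) hV0.le
      linarith
    have h3 : V * F ≤ gi (fun z => u z ^ 2 * (V * Real.exp (l * (‖z - x‖ / √s)) - v z)) x s' + J := by
      rw [hF, hJ, ← gi_const_mul, ← gi_add ((S.SGu.pow 2).mul hd).gi S.SG_inter'.gi x hs'0]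
      refine gi_mono ((S.SGu.pow 2).const_mul V).gi
        (((S.SGu.pow 2).mul hd).gi.add S.SG_inter'.gi) x hs'0 fun z => ?_
      have h4 : 1 ≤ Real.exp (l * (‖z - x‖ / √s)) := Real.one_le_exp (by positivity)
      have h5 : V ≤ V * Real.exp (l * (‖z - x‖ / √s)) := le_mul_of_one_le_right hV0.le h4
      nlinarith [mul_le_mul_of_nonneg_left h5 (sq_nonneg (u z))]
    have h4 : Real.exp 12 * q * H * gi (fun z => V * Real.exp (l * (‖z - x‖ / √s)) - v z) x s ≤
        Real.exp 12 * q * H * (V * (l * EE n 2)) := mul_le_mul_of_nonneg_left h2 (by positivity)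
    linarith
  have hJH : J ≤ H * (4 * q * (V * (l * EE n 2))) := by
    have hJ0 : 0 ≤ J := gi_nonneg x hs'0 fun z => by have := S.pv z; positivity
    calc J ≤ (s * H) * J := le_mul_of_one_le_left hJ0 hκ
      _ = H * (s * J) := by ring
      _ ≤ _ := mul_le_mul_of_nonneg_left hJs hH.le
  have hFH : F ≤ l * C * H := by
    refine le_of_mul_le_mul_left ?_ hV0
    calc V * F ≤ Real.exp 12 * q * H * (V * (l * EE n 2)) + H * (4 * q * (V * (l * EE n 2))) := by
          linarith
      _ = _ := by rw [hC]; ring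
  -- but the mean of `u` is comparable with `√H`
  have hsH : 0 < √H := Real.sqrt_pos.2 hH
  have hA := S.sqrtH_le x hs
  rw [← hHd] at hA
  have hA2 : √H ≤ 16 * EE n 3 * gi u x s := by
    calc √H ≤ 8 * EE n 3 * (gi u x s + gi v x s) := hA
      _ ≤ 8 * EE n 3 * (gi u x s + gi u x s) :=
          mul_le_mul_of_nonneg_left (by linarith) (by positivity)
      _ = _ := by ring
  have hAF := S.A_le_F x hs (show 0 < 16 * EE n 3 * q2 / √H by positivity)
  rw [← hq2, ← hF] at hAF
  have e1 : q2 / (16 * EE n 3 * q2 / √H) = √H / (16 * EE n 3) := by field_simp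
  rw [e1] at hAF
  have h1 : 16 * EE n 3 * q2 / √H * F ≤ √H / (32 * EE n 3) := by
    have h2 : 16 * EE n 3 * q2 / √H * F ≤ 16 * EE n 3 * q2 / √H * (l * C * H) :=
      mul_le_mul_of_nonneg_left hFH (by positivity)
    refine h2.trans (le_of_eq ?_)
    have h3 : H = √H ^ 2 := (Real.sq_sqrt hH.le).symm
    rw [hl]
    conv_lhs => rw [h3]
    simp only [Real.sqrt_sq hsH.le]
    field_simp
    norm_num
  have h2 : √H / (16 * EE n 3) ≤ gi u x s := by
    rw [div_le_iff₀ (by positivity)]; linarith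
  have h3 : √H / (32 * EE n 3) = √H / (16 * EE n 3) / 2 := by field_simp; norm_num
  have h4 : 0 < √H / (16 * EE n 3) := by positivity
  linarith

/-- A point where `v` is maximal against an exponential weight centred at `x`. -/
lemma exists_wmax (S : Sol u v) (x : Euc n) {t : ℝ} (ht : 0 < t) :
    ∃ y, (∀ z, v z ≤ v y * Real.exp (5 * (‖z - y‖ / √t))) ∧
      v x * Real.exp (5 * (‖y - x‖ / √t)) ≤ v y := by
  have hH := S.H_pos x ht
  have hst : 0 < √t := Real.sqrt_pos.2 ht
  set g := fun z => v z * Real.exp (-(5 * (‖z - x‖ / √t))) with hg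
  have hgc : Continuous g := S.hv.continuous.mul (by fun_prop)
  have hgx : g x = v x := by simp [hg]
  have hvx := S.pv x
  have hev : ∀ᶠ z in Filter.cocompact (Euc n), g z ≤ g x := by
    set h := √(HH u v x t) with hh
    have hh0 : 0 < h := Real.sqrt_pos.2 hH
    filter_upwards [(isCompact_closedBall x (√t * (h / v x))).compl_mem_cocompact] with z hz
    rw [mem_compl_iff, mem_closedBall, not_le, dist_eq_norm] at hz
    set ρ := ‖z - x‖ / √t with hρ
    have hρ1 : h / v x ≤ ρ := by rw [hρ, le_div_iff₀ hst]; linarith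
    have hρ0 : 0 ≤ ρ := by positivity
    rw [hgx]
    have h1 : v z ≤ h * Real.exp ρ := S.v_le_H x z ht
    calc g z ≤ h * Real.exp ρ * Real.exp (-(5 * ρ)) :=
          mul_le_mul_of_nonneg_right h1 (Real.exp_pos _).le
      _ = h * Real.exp (-(4 * ρ)) := by rw [mul_assoc, ← Real.exp_add]; congr 2; ring
      _ ≤ v x := by
          rw [Real.exp_neg, ← div_eq_mul_inv, div_le_iff₀ (Real.exp_pos _)]
          have h2 : ρ ≤ Real.exp (4 * ρ) := by linarith [Real.add_one_le_exp (4 * ρ)]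
          rw [div_le_iff₀ hvx] at hρ1
          nlinarith
  obtain ⟨y, hy⟩ := hgc.exists_forall_ge' x hev
  refine ⟨y, fun z => ?_, ?_⟩
  · have h1 := hy z
    simp only [hg] at h1
    rw [Real.exp_neg, Real.exp_neg, ← div_eq_mul_inv, ← div_eq_mul_inv, div_le_div_iff₀
      (Real.exp_pos _) (Real.exp_pos _)] at h1
    have h2 : ‖z - x‖ ≤ ‖z - y‖ + ‖y - x‖ := norm_sub_le_norm_sub_add_norm_sub z y x
    have h3 : Real.exp (5 * (‖z - x‖ / √t)) ≤
        Real.exp (5 * (‖z - y‖ / √t)) * Real.exp (5 * (‖y - x‖ / √t)) := by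
      rw [← Real.exp_add]
      refine Real.exp_le_exp.2 ?_
      have := div_le_div_of_nonneg_right h2 hst.le
      rw [add_div] at this
      linarith
    refine le_of_mul_le_mul_right ?_ (Real.exp_pos (5 * (‖y - x‖ / √t)))
    calc _ ≤ _ := h1
      _ ≤ v y * (Real.exp (5 * (‖z - y‖ / √t)) * Real.exp (5 * (‖y - x‖ / √t))) :=
          mul_le_mul_of_nonneg_left h3 (S.pv y).le
      _ = _ := by ring
  · have h1 := hy x
    rw [hgx] at h1
    simp only [hg] at h1
    rw [Real.exp_neg, ← div_eq_mul_inv, le_div_iff₀ (Real.exp_pos _)] at h1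
    exact h1

/-- Lower bound for `s H_y(s)` at smaller scales and nearby points. -/
lemma kappa_lower (S : Sol u v) (x y : Euc n) {t η : ℝ} (ht : 0 < t) (hη : 0 < η) (hη1 : η ≤ 1) :
    η ^ 2 / 4 * (t * HH u v x t) ≤
      η * t * HH u v y (η * t) * Real.exp (2 * (‖y - x‖ / √t)) := by
  have hs : 0 < η * t := by positivity
  have h1 := S.H_doubling y hs (show η * t ≤ t by nlinarith)
  have h2 := S.H_lip y x ht
  rw [norm_sub_rev] at h2
  have e1 : t / (η * t) = 1 / η := by field_simp
  rw [e1] at h1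
  have he : Real.exp 1 ≤ 4 := by linarith [Real.exp_one_lt_d9]
  have hy := S.H_pos y hs
  have h3 : HH u v y t ≤ 4 * (1 / η) * HH u v y (η * t) :=
    h1.trans (by gcongr)
  have h4 : HH u v x t ≤ 4 * (1 / η) * HH u v y (η * t) * Real.exp (2 * (‖y - x‖ / √t)) :=
    h2.trans (mul_le_mul_of_nonneg_right h3 (Real.exp_pos _).le)
  calc η ^ 2 / 4 * (t * HH u v x t)
      ≤ η ^ 2 / 4 * (t * (4 * (1 / η) * HH u v y (η * t) * Real.exp (2 * (‖y - x‖ / √t)))) := by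
        gcongr
    _ = _ := by field_simp

/-- Near an interface point, at a slightly larger distance than the natural scale, there is a
balanced point. -/
lemma exists_balanced (n : ℕ) : ∃ η C M₁ : ℝ, 0 < η ∧ η ≤ 1 ∧ 1 ≤ C ∧ 1 ≤ M₁ ∧
    ∀ (u v : Euc n → ℝ), Sol u v → ∀ x₀, u x₀ = v x₀ → ∀ t, 0 < t → M₁ ≤ t * HH u v x₀ t →
    ∃ x, Real.exp (2 * (‖x - x₀‖ / √t)) ≤ C * √(t * HH u v x₀ t) ∧
      gi u x (η * t) = gi v x (η * t) ∧ 1 ≤ η * t * HH u v x (η * t) ∧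
      √(t * HH u v x₀ t) ≤ C * (η * t * HH u v x (η * t)) := by
  obtain ⟨l, hl0, hl1, hl⟩ := weighted n
  have hE3 : 1 ≤ EE n 3 := EE_one_le (by norm_num)
  set η := (l / 5) ^ 2 with hη
  have hη0 : 0 < η := by positivity
  have hη1 : η ≤ 1 := by rw [hη]; exact pow_le_one₀ (by positivity) (by linarith)
  set K := 2 * (4096 * EE n 3 ^ 3) with hK
  have hK1 : 1 ≤ K := by
    have : 1 ≤ EE n 3 ^ 3 := one_le_pow₀ hE3
    linarith
  set C := 4 * K / η ^ 2 with hC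
  have hC0 : 0 < C := by positivity
  have hCK : K ≤ C := by
    rw [hC, le_div_iff₀ (by positivity)]
    have : η ^ 2 ≤ 1 := pow_le_one₀ hη0.le hη1
    nlinarith
  refine ⟨η, C, C ^ 2, hη0, hη1, hK1.trans hCK, one_le_pow₀ (hK1.trans hCK), ?_⟩
  -- the weighted maximum is close to the interface point, and `v` dominates there
  have main : ∀ (u v : Euc n → ℝ), Sol u v → ∀ x₀, u x₀ = v x₀ → ∀ t, 0 < t →
      C ^ 2 ≤ t * HH u v x₀ t → ∃ y, Real.exp (2 * (‖y - x₀‖ / √t)) ≤ K * √(t * HH u v x₀ t) ∧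
      gi u y (η * t) < gi v y (η * t) := by
    intro u v S x₀ hx₀ t ht hM
    have hH := S.H_pos x₀ ht
    have hst : 0 < √t := Real.sqrt_pos.2 ht
    set M := t * HH u v x₀ t with hMd
    have hM1 : 1 ≤ M := (one_le_pow₀ (hK1.trans hCK)).trans hM
    have hsM : 0 < √M := Real.sqrt_pos.2 (by linarith)
    obtain ⟨y, hy1, hy2⟩ := S.exists_wmax x₀ ht
    set ρ := ‖y - x₀‖ / √t with hρ
    have hρ0 : 0 ≤ ρ := by positivity
    have h1 := S.v_le_H x₀ y ht
    have h2 := S.H_le_val x₀ hx₀ ht hM1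
    rw [← hMd] at h2
    have hu0 := S.pu x₀
    have h3 : √(HH u v x₀ t) ≤ K * √M * u x₀ := by
      refine Real.sqrt_le_left (by positivity) |>.2 ?_
      rw [mul_pow, mul_pow, Real.sq_sqrt (by linarith)]
      refine h2.trans (le_of_eq ?_)
      rw [hK]; ring
    have hexp : Real.exp (2 * ρ) ≤ K * √M := by
      rw [← hρ] at h1
      have h4 : u x₀ * Real.exp (5 * ρ) ≤ (K * √M * u x₀) * Real.exp ρ := by
        rw [hx₀] at h3 ⊢
        exact hy2.trans (h1.trans (mul_le_mul_of_nonneg_right h3 (Real.exp_pos _).le))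
      have h5 : Real.exp (5 * ρ) = Real.exp (4 * ρ) * Real.exp ρ := by
        rw [← Real.exp_add]; congr 1; ring
      rw [h5] at h4
      have h6 : Real.exp (4 * ρ) ≤ K * √M := by
        refine le_of_mul_le_mul_left ?_ (mul_pos hu0 (Real.exp_pos ρ))
        linarith
      exact (Real.exp_le_exp.2 (by linarith)).trans h6
    refine ⟨y, hexp, ?_⟩
    have hs : 0 < η * t := by positivity
    have hsη : √(η * t) = l / 5 * √t := by
      rw [Real.sqrt_mul hη0.le, hη, Real.sqrt_sq (by positivity)]
    refine hl u v S y (η * t) hs ?_ fun z => ?_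
    · have h4 := S.kappa_lower x₀ y ht hη0 hη1
      rw [← hMd, ← hρ] at h4
      have hκ : 0 < η * t * HH u v y (η * t) := by have := S.H_pos y hs; positivity
      have h5 : η ^ 2 / 4 * M ≤ η * t * HH u v y (η * t) * (K * √M) :=
        h4.trans (mul_le_mul_of_nonneg_left hexp hκ.le)
      have h6 : C ≤ √M := Real.le_sqrt_of_sq_le hM
      have h7 : √M * √M = M := Real.mul_self_sqrt (by linarith)
      have h8 : √M ≤ C * (η * t * HH u v y (η * t)) := by
        have : η ^ 2 / 4 * √M ≤ η * t * HH u v y (η * t) * K := by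
          refine le_of_mul_le_mul_right ?_ hsM
          calc η ^ 2 / 4 * √M * √M = η ^ 2 / 4 * M := by rw [mul_assoc, h7]
            _ ≤ _ := h5
            _ = _ := by ring
        calc √M = (4 / η ^ 2) * (η ^ 2 / 4 * √M) := by field_simp
          _ ≤ (4 / η ^ 2) * (η * t * HH u v y (η * t) * K) := by gcongr
          _ = _ := by rw [hC]; field_simp
      by_contra hcon
      push Not at hcon
      nlinarith
    · refine (hy1 z).trans (le_of_eq ?_)
      rw [hsη]
      congr 2
      field_simp
  intro u v S x₀ hx₀ t ht hM
  obtain ⟨y, hy1, hy2⟩ := main u v S x₀ hx₀ t ht hM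
  obtain ⟨w, hw1, hw2⟩ := main v u S.symm x₀ hx₀.symm t ht (by rwa [HH_symm])
  rw [HH_symm] at hw1
  set M := t * HH u v x₀ t with hMd
  have hH := S.H_pos x₀ ht
  have hM1 : 1 ≤ M := (one_le_pow₀ (hK1.trans hCK)).trans hM
  have hsM : 0 < √M := Real.sqrt_pos.2 (by linarith)
  have hs : 0 < η * t := by positivity
  have hst : 0 < √t := Real.sqrt_pos.2 ht
  -- intermediate value theorem on the segment
  set f := fun r : ℝ => gi u (y + r • (w - y)) (η * t) - gi v (y + r • (w - y)) (η * t) with hf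
  have hfc : Continuous f := by
    refine continuous_iff_continuousAt.2 fun r => ?_
    exact ((gi_line_hasDerivAt S.SGu.gi S.hu.continuous y (w - y) hs r).continuousAt).sub
      ((gi_line_hasDerivAt S.SGv.gi S.hv.continuous y (w - y) hs r).continuousAt)
  have hf0 : f 0 ≤ 0 := by simp only [hf, zero_smul, add_zero]; linarith
  have hf1 : 0 ≤ f 1 := by simp only [hf, one_smul, add_sub_cancel]; linarith
  obtain ⟨r, hr, hr0⟩ := intermediate_value_Icc zero_le_one hfc.continuousOn ⟨hf0, hf1⟩
  set x := y + r • (w - y) with hx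
  have hexp : Real.exp (2 * (‖x - x₀‖ / √t)) ≤ K * √M := by
    have h1 : ‖x - x₀‖ ≤ max ‖y - x₀‖ ‖w - x₀‖ := by
      have e : x - x₀ = (1 - r) • (y - x₀) + r • (w - x₀) := by
        rw [hx]; module
      rw [e]
      refine (norm_add_le _ _).trans ?_
      rw [norm_smul, norm_smul, Real.norm_of_nonneg (by linarith [hr.2]), Real.norm_of_nonneg hr.1]
      have a1 := le_max_left ‖y - x₀‖ ‖w - x₀‖
      have a2 := le_max_right ‖y - x₀‖ ‖w - x₀‖
      nlinarith [mul_le_mul_of_nonneg_left a1 (show 0 ≤ 1 - r by linarith [hr.2]),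
        mul_le_mul_of_nonneg_left a2 hr.1]
    rcases max_choice ‖y - x₀‖ ‖w - x₀‖ with h2 | h2
    · rw [h2] at h1
      exact (Real.exp_le_exp.2 (by gcongr)).trans hy1
    · rw [h2] at h1
      exact (Real.exp_le_exp.2 (by gcongr)).trans hw1
  have h4 := S.kappa_lower x₀ x ht hη0 hη1
  rw [← hMd] at h4
  have hκ : 0 < η * t * HH u v x (η * t) := by have := S.H_pos x hs; positivity
  have h5 : η ^ 2 / 4 * M ≤ η * t * HH u v x (η * t) * (K * √M) :=
    h4.trans (mul_le_mul_of_nonneg_left hexp hκ.le)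
  have h6 : C ≤ √M := Real.le_sqrt_of_sq_le hM
  have h7 : √M * √M = M := Real.mul_self_sqrt (by linarith)
  have h8 : √M ≤ C * (η * t * HH u v x (η * t)) := by
    have : η ^ 2 / 4 * √M ≤ η * t * HH u v x (η * t) * K := by
      refine le_of_mul_le_mul_right ?_ hsM
      calc η ^ 2 / 4 * √M * √M = η ^ 2 / 4 * M := by rw [mul_assoc, h7]
        _ ≤ _ := h5
        _ = _ := by ring
    calc √M = (4 / η ^ 2) * (η ^ 2 / 4 * √M) := by field_simp
      _ ≤ (4 / η ^ 2) * (η * t * HH u v x (η * t) * K) := by gcongr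
      _ = _ := by rw [hC]; field_simp
  refine ⟨x, hexp.trans (mul_le_mul_of_nonneg_right hCK hsM.le), sub_eq_zero.1 hr0, ?_, h8⟩
  by_contra hcon
  push Not at hcon
  nlinarith

end Sol

end Weighted

/-! ### Linear growth at interface points, uniformly in the base point -/

section Growth

variable {n : ℕ}

namespace Sol

variable {u v : Euc n → ℝ}

/-- A scale `t ≤ T` with `T = t · (t H(t))`. -/
lemma exists_mid (S : Sol u v) (x : Euc n) {T : ℝ} (hT : 0 < T) (h : 1 ≤ T * HH u v x T) :
    ∃ t, 0 < t ∧ t ≤ T ∧ t * (t * HH u v x t) = T := by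
  have hH := S.H_pos x hT
  set κ := T * HH u v x T with hκ
  have hκ0 : 0 < κ := by positivity
  have ha : 0 < T / κ := by positivity
  have hat : T / κ ≤ T := div_le_self hT.le h
  have hc : ContinuousOn (fun s => s * (s * HH u v x s)) (Icc (T / κ) T) := fun s hs =>
    (continuousAt_id.mul
      (continuousAt_id.mul (S.H_cont x (ha.trans_le hs.1)))).continuousWithinAt
  have hle : T / κ * (T / κ * HH u v x (T / κ)) ≤ T := by
    calc T / κ * (T / κ * HH u v x (T / κ)) ≤ T / κ * (T * HH u v x T) := by
          refine mul_le_mul_of_nonneg_left ?_ ha.le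
          exact mul_le_mul hat (S.H_mono x ha hat) (S.H_pos x ha).le hT.le
      _ = T := by rw [← hκ]; field_simp
  have hge : T ≤ T * (T * HH u v x T) := le_mul_of_one_le_right hT.le h
  obtain ⟨s, hs, hs1⟩ := intermediate_value_Icc hat hc ⟨hle, hge⟩
  exact ⟨s, ha.trans_le hs.1, hs.2, hs1⟩

/-- At an interface point `H(t) / t` almost increases from `T` to `4 T`, with an error which is a
negative power of `T H(T)`. -/
lemma ratio_step (n : ℕ) : ∃ δ C M : ℝ, 0 < δ ∧ 0 < C ∧ 1 ≤ M ∧ ∀ (u v : Euc n → ℝ), Sol u v →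
    ∀ x₀, u x₀ = v x₀ → ∀ T, 0 < T → M ≤ T * HH u v x₀ T →
    Real.log (HH u v x₀ T) + Real.log 4 ≤
      Real.log (HH u v x₀ (4 * T)) + C * (T * HH u v x₀ T) ^ (-δ) := by
  obtain ⟨η, C, M₁, hη, hη1, hC, hM₁, hb⟩ := exists_balanced n
  obtain ⟨δ, C2, hδ, hδ1, hC2, hbal⟩ := Sol.balanced n
  have hC0 : 0 < C := by linarith
  have hl4 : 0 < Real.log 4 := Real.log_pos (by norm_num)
  refine ⟨δ / 12, (4 * √C + C2 * C ^ δ * Real.log 4) * Real.exp 1, Real.exp 1 * M₁ ^ 3,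
    by positivity, by positivity,
    one_le_mul_of_one_le_of_one_le (Real.one_le_exp zero_le_one) (one_le_pow₀ hM₁), ?_⟩
  intro u v S x₀ hx₀ T hT hM
  have he1 : 1 ≤ Real.exp 1 := Real.one_le_exp zero_le_one
  have hκ1 : 1 ≤ T * HH u v x₀ T :=
    (one_le_mul_of_one_le_of_one_le he1 (one_le_pow₀ hM₁)).trans hM
  obtain ⟨t, ht, htT, htM⟩ := S.exists_mid x₀ hT hκ1
  set M := t * HH u v x₀ t with hMd
  set κ := T * HH u v x₀ T with hκd
  have hκ0 : 0 < κ := by linarith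
  have hM0 : 0 < M := mul_pos ht (S.H_pos x₀ ht)
  have hκM : κ ≤ Real.exp 1 * M ^ 3 := by
    have h := mul_le_mul_of_nonneg_left (S.H_doubling x₀ ht htT) hT.le
    calc κ ≤ T * (Real.exp 1 * (T / t) * HH u v x₀ t) := h
      _ = Real.exp 1 * M ^ 3 := by
        rw [← htM, mul_div_cancel_left₀ _ ht.ne']
        have : M ^ 3 = M * M * (t * HH u v x₀ t) := by rw [← hMd]; ring
        rw [this]; ring
  have hMM : M₁ ≤ M := by
    have h := le_of_mul_le_mul_left (hM.trans hκM) (Real.exp_pos 1)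
    exact le_of_pow_le_pow_left₀ (by norm_num) hM0.le h
  have hM1 : 1 ≤ M := hM₁.trans hMM
  obtain ⟨x, hx1, hx2, hx3, hx4⟩ := hb u v S x₀ hx₀ t ht hMM
  rw [← hMd] at hx1 hx4
  have hηt : 0 < η * t := by positivity
  have hN := hbal u v S x (η * t) hηt hx2 hx3
  set κ' := η * t * HH u v x (η * t) with hκ'
  have hκ'0 : 0 < κ' := by linarith
  set ν := 1 - C2 * κ' ^ (-δ) with hν
  have hηtT : η * t ≤ T := (mul_le_of_le_one_left ht.le hη1).trans htT
  have hνT := hN.trans (S.N_mono x hηt hηtT)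
  have hG := S.H_growth x hT (show T ≤ 4 * T by linarith) hνT
  rw [Real.log_mul (by norm_num) hT.ne', add_sub_cancel_right] at hG
  have h4T : 0 < 4 * T := by positivity
  have hHx := S.H_pos x hT
  have hHx4 := S.H_pos x h4T
  have hH0 := S.H_pos x₀ hT
  have hH04 := S.H_pos x₀ h4T
  have l1 := Real.log_le_log hH0 (S.H_lip x x₀ hT)
  have l2 := Real.log_le_log hHx4 (S.H_lip x₀ x h4T)
  rw [Real.log_mul hHx.ne' (Real.exp_ne_zero _), Real.log_exp] at l1
  rw [Real.log_mul hH04.ne' (Real.exp_ne_zero _), Real.log_exp] at l2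
  rw [norm_sub_rev] at l1
  have l3 : ‖x - x₀‖ / √(4 * T) ≤ ‖x - x₀‖ / √T :=
    div_le_div_of_nonneg_left (norm_nonneg _) (Real.sqrt_pos.2 hT)
      (Real.sqrt_le_sqrt (by linarith))
  -- the displacement is negligible at scale `T`
  have hsM : 0 < √M := Real.sqrt_pos.2 hM0
  have hd : ‖x - x₀‖ / √T ≤ √C * M ^ (-(1 / 4 : ℝ)) := by
    set ρ := ‖x - x₀‖ / √t with hρ
    have hρ0 : 0 ≤ ρ := by positivity
    have e1 : ‖x - x₀‖ / √T = ρ / √M := by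
      rw [hρ, ← htM, Real.sqrt_mul ht.le, div_div]
    have h1 : ρ ^ 2 ≤ C * √M := by
      have := Real.quadratic_le_exp_of_nonneg (x := 2 * ρ) (by positivity)
      nlinarith
    have h2 : ρ ≤ √C * √(√M) := by
      rw [← Real.sqrt_mul hC0.le]; exact Real.le_sqrt_of_sq_le h1
    rw [e1, div_le_iff₀ hsM]
    refine h2.trans (le_of_eq ?_)
    rw [Real.sqrt_eq_rpow, Real.sqrt_eq_rpow, Real.sqrt_eq_rpow, mul_assoc, ← Real.rpow_mul hM0.le,
      ← Real.rpow_add hM0]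
    norm_num
  have hMδ : M ^ (-(1 / 4 : ℝ)) ≤ M ^ (-(δ / 4)) :=
    Real.rpow_le_rpow_of_exponent_le hM1 (by linarith)
  have hκδ : κ' ^ (-δ) ≤ C ^ δ * M ^ (-(δ / 4)) := by
    have h1 : √M / C ≤ κ' := by rw [div_le_iff₀ hC0]; linarith
    have h2 : κ' ^ (-δ) ≤ (√M / C) ^ (-δ) :=
      Real.rpow_le_rpow_of_nonpos (by positivity) h1 (by linarith)
    refine h2.trans ?_
    rw [Real.div_rpow hsM.le hC0.le, Real.rpow_neg hC0.le, div_inv_eq_mul, mul_comm,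
      Real.sqrt_eq_rpow, ← Real.rpow_mul hM0.le]
    refine mul_le_mul_of_nonneg_left ?_ (by positivity)
    exact Real.rpow_le_rpow_of_exponent_le hM1 (by linarith)
  have hMκ : M ^ (-(δ / 4)) ≤ Real.exp 1 * κ ^ (-(δ / 12)) := by
    have h1 : κ / Real.exp 1 ≤ M ^ 3 := by rw [div_le_iff₀ (Real.exp_pos 1)]; linarith
    have h2 : (M ^ 3) ^ (-(δ / 12)) ≤ (κ / Real.exp 1) ^ (-(δ / 12)) :=
      Real.rpow_le_rpow_of_nonpos (by positivity) h1 (by linarith)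
    have h3 : (M ^ 3) ^ (-(δ / 12)) = M ^ (-(δ / 4)) := by
      rw [← Real.rpow_natCast, ← Real.rpow_mul hM0.le]; congr 1; push_cast; ring
    rw [h3, Real.div_rpow hκ0.le (Real.exp_pos 1).le, Real.rpow_neg (Real.exp_pos 1).le,
      div_inv_eq_mul, mul_comm] at h2
    refine h2.trans (mul_le_mul_of_nonneg_right ?_ (by positivity))
    calc Real.exp 1 ^ (δ / 12) ≤ Real.exp 1 ^ (1 : ℝ) :=
          Real.rpow_le_rpow_of_exponent_le he1 (by linarith)
      _ = _ := Real.rpow_one _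
  have hfin : 4 * (‖x - x₀‖ / √T) + C2 * κ' ^ (-δ) * Real.log 4 ≤
      (4 * √C + C2 * C ^ δ * Real.log 4) * Real.exp 1 * κ ^ (-(δ / 12)) := by
    calc 4 * (‖x - x₀‖ / √T) + C2 * κ' ^ (-δ) * Real.log 4
        ≤ 4 * (√C * M ^ (-(δ / 4))) + C2 * (C ^ δ * M ^ (-(δ / 4))) * Real.log 4 := by
          refine add_le_add ?_ ?_
          · refine mul_le_mul_of_nonneg_left (hd.trans ?_) (by norm_num)
            exact mul_le_mul_of_nonneg_left hMδ (Real.sqrt_nonneg _)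
          · refine mul_le_mul_of_nonneg_right ?_ hl4.le
            exact mul_le_mul_of_nonneg_left hκδ hC2.le
      _ = (4 * √C + C2 * C ^ δ * Real.log 4) * M ^ (-(δ / 4)) := by ring
      _ ≤ (4 * √C + C2 * C ^ δ * Real.log 4) * (Real.exp 1 * κ ^ (-(δ / 12))) :=
          mul_le_mul_of_nonneg_left hMκ (by positivity)
      _ = _ := by ring
  have e2 : ν * Real.log 4 = Real.log 4 - C2 * κ' ^ (-δ) * Real.log 4 := by rw [hν]; ring
  rw [e2] at hG
  linarith

/-- Telescoping `ratio_step`. -/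
lemma ratio_tele (n : ℕ) : ∃ K M : ℝ, 0 < K ∧ 1 ≤ M ∧ ∀ (u v : Euc n → ℝ), Sol u v →
    ∀ x₀, u x₀ = v x₀ → ∀ T, 0 < T → M ≤ T * HH u v x₀ T → ∀ j : ℕ,
    4 ^ j * HH u v x₀ T ≤ Real.exp K * HH u v x₀ (4 ^ j * T) := by
  obtain ⟨δ, C, M, hδ, hC, hM, hst⟩ := ratio_step n
  set r := (4 : ℝ) ^ (-δ) with hr
  have hr1 : r < 1 := Real.rpow_lt_one_of_one_lt_of_neg (by norm_num) (by linarith)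
  have hr0 : 0 < r := by positivity
  have h1r : 0 < 1 - r := by linarith
  set K := C / (1 - r) with hK
  have hK0 : 0 < K := by positivity
  have hKr : K * r + C = K := by rw [hK]; field_simp; ring
  refine ⟨K, M, hK0, hM, fun u v S x₀ hx₀ => ?_⟩
  have key : ∀ j : ℕ, ∀ T, 0 < T → M ≤ T * HH u v x₀ T →
      Real.log (HH u v x₀ T) + j * Real.log 4 ≤
        Real.log (HH u v x₀ (4 ^ j * T)) + K * (T * HH u v x₀ T) ^ (-δ) := by
    intro j
    induction j with
    | zero =>
      intro T hT hMT
      have hH := S.H_pos x₀ hT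
      have : 0 ≤ K * (T * HH u v x₀ T) ^ (-δ) := by positivity
      simpa using this
    | succ j ih =>
      intro T hT hMT
      have hH := S.H_pos x₀ hT
      have h4T : 0 < 4 * T := by positivity
      have h4 : 4 * (T * HH u v x₀ T) ≤ 4 * T * HH u v x₀ (4 * T) := by
        rw [← mul_assoc]
        exact mul_le_mul_of_nonneg_left (S.H_mono x₀ hT (by linarith)) h4T.le
      have h1 := hst u v S x₀ hx₀ T hT hMT
      have h2 := ih (4 * T) h4T (by linarith)
      have h3 : (4 * T * HH u v x₀ (4 * T)) ^ (-δ) ≤ r * (T * HH u v x₀ T) ^ (-δ) := by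
        rw [hr, ← Real.mul_rpow (by norm_num) (by positivity)]
        exact Real.rpow_le_rpow_of_nonpos (by positivity) h4 (by linarith)
      have h5 := mul_le_mul_of_nonneg_left h3 hK0.le
      have e : (4 : ℝ) ^ (j + 1) * T = 4 ^ j * (4 * T) := by ring
      rw [e]
      push_cast
      set q := (T * HH u v x₀ T) ^ (-δ)
      have h6 : K * (r * q) + C * q = K * q := by rw [← mul_assoc, ← add_mul, hKr]
      linarith
  intro T hT hMT j
  have h := key j T hT hMT
  have hH := S.H_pos x₀ hT
  have h4j : 0 < (4 : ℝ) ^ j * T := by positivity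
  have hH4 := S.H_pos x₀ h4j
  have hq : (T * HH u v x₀ T) ^ (-δ) ≤ 1 :=
    Real.rpow_le_one_of_one_le_of_nonpos (hM.trans hMT) (by linarith)
  have hq2 := mul_le_mul_of_nonneg_left hq hK0.le
  rw [← Real.log_le_log_iff (by positivity) (by positivity), Real.log_mul (by positivity) hH.ne',
    Real.log_mul (Real.exp_ne_zero _) hH4.ne', Real.log_exp, Real.log_pow]
  linarith

lemma exists_four_pow (a : ℝ) : ∃ j : ℕ, a ≤ 4 ^ j := by
  obtain ⟨j, hj⟩ := pow_unbounded_of_one_lt a (show (1 : ℝ) < 4 by norm_num)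
  exact ⟨j, hj.le⟩

/-- Uniform linear upper bound for `H` at interface points. -/
lemma H_le_lin (S : Sol u v) : ∃ C > (0 : ℝ), ∀ x₀, u x₀ = v x₀ → ∀ T, 1 ≤ T →
    HH u v x₀ T ≤ C * T := by
  obtain ⟨K, M, hK, hM, hte⟩ := ratio_tele n
  obtain ⟨C, hC, hup⟩ := S.H_upper
  refine ⟨M + Real.exp K * (2 * C), by positivity, fun x₀ hx₀ T hT => ?_⟩
  have hT0 : 0 < T := by linarith
  have hH := S.H_pos x₀ hT0
  have hX : 0 ≤ Real.exp K * (2 * C) * T := by positivity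
  have hMT : M ≤ M * T := le_mul_of_one_le_right (by linarith) hT
  rcases lt_or_ge (T * HH u v x₀ T) M with h | h
  · have : HH u v x₀ T ≤ T * HH u v x₀ T := le_mul_of_one_le_left hH.le hT
    linarith
  · obtain ⟨j, hj⟩ := exists_four_pow ((1 + ‖x₀‖) ^ 2)
    have h1 := hte u v S x₀ hx₀ T hT0 h j
    have h4 : 0 < (4 : ℝ) ^ j := by positivity
    have h2 := hup x₀ (4 ^ j * T) (by positivity)
    have h3 : (1 + ‖x₀‖) ^ 2 + 4 ^ j * T ≤ 4 ^ j * (2 * T) := by nlinarith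
    have h5 : (4 : ℝ) ^ j * HH u v x₀ T ≤ 4 ^ j * (Real.exp K * (2 * C) * T) := by
      calc (4 : ℝ) ^ j * HH u v x₀ T ≤ Real.exp K * HH u v x₀ (4 ^ j * T) := h1
        _ ≤ Real.exp K * (C * (4 ^ j * (2 * T))) :=
          mul_le_mul_of_nonneg_left (h2.trans (mul_le_mul_of_nonneg_left h3 hC.le))
            (Real.exp_pos _).le
        _ = _ := by ring
    have h6 := le_of_mul_le_mul_left h5 h4
    nlinarith

/-- Uniform linear lower bound for `H` at all points, provided the interface is nonempty. -/
lemma H_ge_lin (S : Sol u v) {x₀ : Euc n} (hx₀ : u x₀ = v x₀) : ∃ c > (0 : ℝ), ∀ x T, 0 < T →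
    c * T ≤ HH u v x T := by
  obtain ⟨K, M, hK, hM, hte⟩ := ratio_tele n
  have hH1 := S.H_pos x₀ one_pos
  set T₀ := 1 + M / HH u v x₀ 1 with hT₀
  have hT₀1 : 1 ≤ T₀ := by rw [hT₀]; have : 0 ≤ M / HH u v x₀ 1 := by positivity
                           linarith
  have hT₀0 : 0 < T₀ := by linarith
  have hMT : M ≤ T₀ * HH u v x₀ T₀ := by
    calc M ≤ T₀ * HH u v x₀ 1 := by
          rw [hT₀, add_mul, div_mul_cancel₀ _ hH1.ne']; linarith
      _ ≤ _ := mul_le_mul_of_nonneg_left (S.H_mono x₀ one_pos hT₀1) hT₀0.le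
  have hHT := S.H_pos x₀ hT₀0
  refine ⟨HH u v x₀ T₀ / (T₀ * Real.exp K * Real.exp 3), by positivity, fun x T hT => ?_⟩
  obtain ⟨j, hj⟩ := exists_four_pow (T + ‖x - x₀‖ ^ 2)
  set T' := 4 ^ j * T₀ with hT'
  have h4j : (4 : ℝ) ^ j ≤ T' := le_mul_of_one_le_right (by positivity) hT₀1
  have hT'0 : 0 < T' := by positivity
  have hTT' : T ≤ T' := by have := sq_nonneg ‖x - x₀‖; linarith
  have hd : ‖x₀ - x‖ / √T' ≤ 1 := by
    rw [div_le_one (Real.sqrt_pos.2 hT'0), norm_sub_rev]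
    exact Real.le_sqrt_of_sq_le (by linarith)
  have h1 := hte u v S x₀ hx₀ T₀ hT₀0 hMT j
  rw [← hT'] at h1
  have h2 := S.H_lip x x₀ hT'0
  have h3 := S.H_doubling x hT hTT'
  have hHx := S.H_pos x hT
  have hHx' := S.H_pos x hT'0
  have h4 : HH u v x₀ T' ≤ HH u v x T' * Real.exp 2 :=
    h2.trans (mul_le_mul_of_nonneg_left (Real.exp_le_exp.2 (by linarith)) hHx'.le)
  have h5 : (4 : ℝ) ^ j * HH u v x₀ T₀ ≤
      Real.exp K * (Real.exp 3 * (T' / T) * HH u v x T) := by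
    refine h1.trans (mul_le_mul_of_nonneg_left (h4.trans ?_) (Real.exp_pos K).le)
    calc HH u v x T' * Real.exp 2 ≤ Real.exp 1 * (T' / T) * HH u v x T * Real.exp 2 :=
          mul_le_mul_of_nonneg_right h3 (Real.exp_pos 2).le
      _ = _ := by
        have : Real.exp 3 = Real.exp 1 * Real.exp 2 := by rw [← Real.exp_add]; norm_num
        rw [this]; ring
  rw [div_mul_eq_mul_div, div_le_iff₀ (by positivity)]
  have e : Real.exp K * (Real.exp 3 * (T' / T) * HH u v x T) =
      4 ^ j * (HH u v x T * (T₀ * Real.exp K * Real.exp 3) / T) := by rw [hT']; ring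
  rw [e] at h5
  have h6 := le_of_mul_le_mul_left h5 (by positivity)
  rwa [le_div_iff₀ hT] at h6

end Sol

end Growth

/-! ### Exponential decay away from the interface -/

section Decay

variable {n : ℕ}

/-- The distance to the interface `{u = v}`. -/
noncomputable def dI (u v : Euc n → ℝ) (x : Euc n) : ℝ := infDist x {z | u z = v z}

lemma dI_symm (u v : Euc n → ℝ) (x : Euc n) : dI v u x = dI u v x := by
  unfold dI; congr 1; ext z; exact eq_comm

lemma dI_nonneg (u v : Euc n → ℝ) (x : Euc n) : 0 ≤ dI u v x := infDist_nonneg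

lemma dI_le_add (u v : Euc n → ℝ) (x z : Euc n) : dI u v x ≤ dI u v z + ‖z - x‖ := by
  rw [← dist_eq_norm, dist_comm]; exact infDist_le_infDist_add_dist

namespace Sol

variable {u v : Euc n → ℝ}

/-- If `v` dominates `u` in mean around `y` at time `s`, then `u ≤ v` somewhere within distance
`O(√s)` of `y`, as soon as `s H(s)` is large. -/
lemma near (n : ℕ) : ∃ M ρ₀ : ℝ, 1 ≤ M ∧ 0 < ρ₀ ∧ ∀ (u v : Euc n → ℝ), Sol u v → ∀ y s, 0 < s →
    M ≤ s * HH u v y s → gi u y s ≤ gi v y s → ∃ z, ‖z - y‖ ≤ ρ₀ * √s ∧ u z ≤ v z := by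
  have hE2 : 1 ≤ EE n 2 := EE_one_le (by norm_num)
  have hE3 : 1 ≤ EE n 3 := EE_one_le (by norm_num)
  set ε := 1 / (32 * EE n 3) with hε
  have hε0 : 0 < ε := by positivity
  have hε1 : ε ≤ 1 := by rw [hε, div_le_one (by positivity)]; linarith
  set ρ₀ := 4 * EE n 2 / ε with hρ₀
  have hρ₀0 : 0 < ρ₀ := by positivity
  refine ⟨1 / ε ^ 4, ρ₀, ?_, hρ₀0, ?_⟩
  · rw [le_div_iff₀ (by positivity), one_mul]; exact pow_le_one₀ hε0.le hε1
  intro u v S y s hs hM hAB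
  by_contra hcon
  push Not at hcon
  have hH := S.H_pos y hs
  set H := HH u v y s with hHd
  have hh : 0 < √H := Real.sqrt_pos.2 hH
  set h := √H with hhd
  have hh2 : h ^ 2 = H := Real.sq_sqrt hH.le
  have hss : 0 < √s := Real.sqrt_pos.2 hs
  -- lower bound for the mean of `v`
  have hB : 2 * ε * h ≤ gi v y s := by
    have h1 := S.sqrtH_le y hs
    rw [← hHd, ← hhd] at h1
    have h2 : h ≤ 16 * EE n 3 * gi v y s := by
      calc h ≤ 8 * EE n 3 * (gi u y s + gi v y s) := h1
        _ ≤ 8 * EE n 3 * (gi v y s + gi v y s) :=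
          mul_le_mul_of_nonneg_left (by linarith) (by positivity)
        _ = _ := by ring
    have h3 : 2 * ε * h = h / (16 * EE n 3) := by rw [hε]; field_simp; norm_num
    rw [h3, div_le_iff₀ (by positivity)]; linarith
  -- the interaction is small
  have hJ : gi (fun z => u z * v z) y s ≤ ε ^ 2 * H := by
    refine abs_le_of_sq_le_sq' ?_ (by positivity) |>.2
    have h1 := S.uv_sq_le y hs
    have h2 := S.P_le_D y hs
    have h3 := S.D_le y hs
    have hP := S.P_nonneg y hs
    rw [← hHd] at h3
    have h4 : 1 ≤ ε ^ 4 * (s * H) := by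
      rw [div_le_iff₀ (by positivity)] at hM; linarith
    have h5 : s * PP u v y s ≤ H := by nlinarith
    have h6 : PP u v y s ≤ ε ^ 4 * H ^ 2 := by
      calc PP u v y s ≤ (ε ^ 4 * (s * H)) * PP u v y s := le_mul_of_one_le_left hP h4
        _ = ε ^ 4 * H * (s * PP u v y s) := by ring
        _ ≤ ε ^ 4 * H * H := mul_le_mul_of_nonneg_left h5 (by positivity)
        _ = _ := by ring
    calc gi (fun z => u z * v z) y s ^ 2 ≤ PP u v y s := h1
      _ ≤ _ := h6
      _ = _ := by ring
  have he : Real.exp (-ρ₀) * EE n 2 ≤ ε / 4 := by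
    have h1 : ρ₀ ≤ Real.exp ρ₀ := by linarith [Real.add_one_le_exp ρ₀]
    rw [Real.exp_neg, inv_mul_le_iff₀ (Real.exp_pos _)]
    have h2 : EE n 2 = ρ₀ * (ε / 4) := by rw [hρ₀]; field_simp
    rw [h2]
    exact mul_le_mul_of_nonneg_right h1 (by positivity)
  set w : Euc n → ℝ := fun z => Real.exp (2 * (‖z - y‖ / √s)) with hw
  have hwS : SG w := SG_exp 2 y s
  have hwI : gi w y s = EE n 2 := gi_exp 2 y hs
  have hpt : ∀ z, 2 * ε * h * v z ≤
      ε ^ 2 * H + u z * v z + 2 * ε * H * Real.exp (-ρ₀) * w z := by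
    intro z
    have hu0 := S.pu z
    have hv0 := S.pv z
    have hw0 : 0 < w z := Real.exp_pos _
    have hX : 0 ≤ 2 * ε * H * Real.exp (-ρ₀) * w z := by positivity
    rcases le_or_gt ‖z - y‖ (ρ₀ * √s) with hz | hz
    · have h1 := (hcon z hz).le
      have h2 : v z ^ 2 ≤ u z * v z := by rw [sq]; exact mul_le_mul_of_nonneg_right h1 hv0.le
      have h3 := sq_nonneg (ε * h - v z)
      have h4 : (ε * h) ^ 2 = ε ^ 2 * H := by rw [mul_pow, hh2]
      nlinarith
    · have h1 := S.v_le_H y z hs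
      rw [← hHd, ← hhd] at h1
      have h2 : ρ₀ ≤ ‖z - y‖ / √s := by rw [le_div_iff₀ hss]; exact hz.le
      have h3 : v z ≤ h * (Real.exp (-ρ₀) * w z) := by
        refine h1.trans (mul_le_mul_of_nonneg_left ?_ hh.le)
        rw [hw, ← Real.exp_add]; exact Real.exp_le_exp.2 (by linarith)
      have h4 : 2 * ε * h * v z ≤ 2 * ε * h * (h * (Real.exp (-ρ₀) * w z)) :=
        mul_le_mul_of_nonneg_left h3 (by positivity)
      have h5 : 2 * ε * h * (h * (Real.exp (-ρ₀) * w z)) =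
          2 * ε * H * Real.exp (-ρ₀) * w z := by rw [← hh2]; ring
      have h6 : 0 ≤ ε ^ 2 * H + u z * v z := by positivity
      linarith
  have hint : 2 * ε * h * gi v y s ≤
      ε ^ 2 * H + gi (fun z => u z * v z) y s + 2 * ε * H * Real.exp (-ρ₀) * EE n 2 := by
    have g1 : SG (fun z => u z * v z) := S.SGu.mul S.SGv
    have g0 : SG (fun _ : Euc n => ε ^ 2 * H) := SG.const _
    rw [← hwI, ← gi_const_mul, ← gi_const_mul]
    conv_rhs => rw [← gi_const (n := n) hs y (ε ^ 2 * H)]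
    rw [← gi_add g0.gi g1.gi y hs, ← gi_add (g0.add g1).gi (hwS.const_mul _).gi y hs]
    exact gi_mono (S.SGv.const_mul _).gi ((g0.add g1).add (hwS.const_mul _)).gi y hs hpt
  have h1 : 2 * ε * h * (2 * ε * h) ≤ 2 * ε * h * gi v y s :=
    mul_le_mul_of_nonneg_left hB (by positivity)
  have h2 : 2 * ε * h * (2 * ε * h) = 4 * ε ^ 2 * H := by rw [← hh2]; ring
  have h3 : 2 * ε * H * Real.exp (-ρ₀) * EE n 2 ≤ ε ^ 2 * H / 2 := by
    calc 2 * ε * H * Real.exp (-ρ₀) * EE n 2 = 2 * ε * H * (Real.exp (-ρ₀) * EE n 2) := by ring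
      _ ≤ 2 * ε * H * (ε / 4) := mul_le_mul_of_nonneg_left he (by positivity)
      _ = _ := by ring
  have h4 : 0 < ε ^ 2 * H := by positivity
  linarith

/-- A segment from `{v ≤ u}` to `{u ≤ v}` meets the interface. -/
lemma dI_le_of_cross (S : Sol u v) {x z : Euc n} (hx : v x ≤ u x) (hz : u z ≤ v z) :
    dI u v x ≤ ‖z - x‖ := by
  have hc : ContinuousOn (fun r : ℝ => v (x + r • (z - x)) - u (x + r • (z - x))) (Icc 0 1) := by
    have h1 := S.hv.continuous
    have h2 := S.hu.continuous
    fun_prop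
  have h0 : (0 : ℝ) ∈ Icc (v (x + (0 : ℝ) • (z - x)) - u (x + (0 : ℝ) • (z - x)))
      (v (x + (1 : ℝ) • (z - x)) - u (x + (1 : ℝ) • (z - x))) := by
    constructor
    · simpa using hx
    · simpa using hz
  obtain ⟨r, hr, hr0⟩ := intermediate_value_Icc zero_le_one hc h0
  have hm : x + r • (z - x) ∈ {z | u z = v z} := by
    show u _ = v _
    simp only at hr0
    linarith
  refine (infDist_le_dist_of_mem hm).trans ?_
  rw [dist_eq_norm, sub_add_cancel_left, norm_neg, norm_smul, Real.norm_of_nonneg hr.1]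
  exact mul_le_of_le_one_left (norm_nonneg _) hr.2

lemma exists_nearest (S : Sol u v) {x₀ : Euc n} (hx₀ : u x₀ = v x₀) (x : Euc n) :
    ∃ y, u y = v y ∧ dI u v x = ‖x - y‖ := by
  have hcl : IsClosed {z | u z = v z} := isClosed_eq S.hu.continuous S.hv.continuous
  obtain ⟨y, hy, h⟩ := hcl.exists_infDist_eq_dist ⟨x₀, hx₀⟩ x
  exact ⟨y, hy, by rw [← dist_eq_norm]; exact h⟩

lemma H_le_dI (S : Sol u v) {x₀ : Euc n} (hx₀ : u x₀ = v x₀) {C t : ℝ} (ht : 0 < t)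
    (h : ∀ y, u y = v y → HH u v y t ≤ C) (x : Euc n) :
    HH u v x t ≤ C * Real.exp (2 * (dI u v x / √t)) := by
  obtain ⟨y, hy, hd⟩ := S.exists_nearest hx₀ x
  rw [hd]
  exact (S.H_lip y x ht).trans (mul_le_mul_of_nonneg_right (h y hy) (Real.exp_pos _).le)

/-- Decay of the smaller component, at a scale `t₁` which is fixed once and for all. -/
lemma decay (S : Sol u v) {x₀ : Euc n} (hx₀ : u x₀ = v x₀) : ∃ t₁ C : ℝ, 1 ≤ t₁ ∧ 0 < C ∧
    (∀ x, HH u v x t₁ ≤ C * Real.exp (2 * (dI u v x / √t₁))) ∧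
    (∀ x, v x ≤ u x → v x ≤ C * Real.exp (-3 * (dI u v x / √t₁))) ∧
    (∀ x, u x ≤ v x → u x ≤ C * Real.exp (-3 * (dI u v x / √t₁))) := by
  obtain ⟨l, hl0, hl1, hwt⟩ := weighted n
  obtain ⟨M, ρ₀, hM, hρ₀, hnear⟩ := near n
  obtain ⟨C, hC, hup⟩ := S.H_le_lin
  obtain ⟨c, hc, hlo⟩ := S.H_ge_lin hx₀
  set η := (l / 5) ^ 2 with hη
  have hη0 : 0 < η := by positivity
  have hη1 : η ≤ 1 := pow_le_one₀ (by positivity) (by linarith)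
  set s₀ := 1 + M / c with hs₀
  have hMc : 0 < M / c := by positivity
  have hs₀1 : 1 ≤ s₀ := by linarith
  have hs₀0 : 0 < s₀ := by linarith
  have hκ : ∀ y, M ≤ s₀ * HH u v y s₀ := by
    intro y
    have h1 : M ≤ c * s₀ := by
      rw [hs₀, mul_add, mul_div_cancel₀ _ hc.ne']; linarith
    have h2 : c * s₀ ≤ HH u v y s₀ := hlo y s₀ hs₀0
    have h3 := S.H_pos y hs₀0
    exact (h1.trans h2).trans (le_mul_of_one_le_left h3.le hs₀1)
  set t₁ := s₀ / η with ht₁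
  have hst : s₀ ≤ t₁ := by rw [ht₁, le_div_iff₀ hη0]; exact mul_le_of_le_one_right hs₀0.le hη1
  have ht₁1 : 1 ≤ t₁ := hs₀1.trans hst
  have ht0 : 0 < t₁ := by linarith
  have hsq : √s₀ = l / 5 * √t₁ := by
    have : s₀ = (l / 5) ^ 2 * t₁ := by rw [← hη, ht₁]; field_simp
    rw [this, Real.sqrt_mul (by positivity), Real.sqrt_sq (by positivity)]
  have hst' : √s₀ ≤ √t₁ := Real.sqrt_le_sqrt hst
  have hs0 : 0 < √s₀ := Real.sqrt_pos.2 hs₀0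
  have htp : 0 < √t₁ := Real.sqrt_pos.2 ht0
  set K := C * t₁ with hK
  have hK0 : 0 < K := by positivity
  have hH : ∀ x, HH u v x t₁ ≤ K * Real.exp (2 * (dI u v x / √t₁)) :=
    S.H_le_dI hx₀ ht0 fun y hy => hup y hy t₁ ht₁1
  have main : ∀ (u v : Euc n → ℝ), Sol u v → (∀ y, M ≤ s₀ * HH u v y s₀) →
      (∀ x, HH u v x t₁ ≤ K * Real.exp (2 * (dI u v x / √t₁))) → ∀ x, v x ≤ u x →
      v x ≤ √K * Real.exp (4 * ρ₀) * Real.exp (-3 * (dI u v x / √t₁)) := by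
    intro u v S hκ hH x hx
    obtain ⟨y, hy1, hy2⟩ := S.exists_wmax x ht0
    have hAB : gi u y s₀ < gi v y s₀ := by
      refine hwt u v S y s₀ hs₀0 (hM.trans (hκ y)) fun z => ?_
      have e : l * (‖z - y‖ / √s₀) = 5 * (‖z - y‖ / √t₁) := by rw [hsq]; field_simp
      rw [e]; exact hy1 z
    obtain ⟨z, hz1, hz2⟩ := hnear u v S y s₀ hs₀0 (hκ y) hAB.le
    have hd := S.dI_le_of_cross hx hz2
    have hzx : ‖z - x‖ ≤ ‖z - y‖ + ‖y - x‖ := norm_sub_le_norm_sub_add_norm_sub _ _ _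
    set D := dI u v x / √t₁ with hD
    set r := ‖y - x‖ / √t₁ with hr
    have hDr : D ≤ ρ₀ + r := by
      rw [hD, div_le_iff₀ htp, add_mul, hr, div_mul_cancel₀ _ htp.ne']
      have := mul_le_mul_of_nonneg_left hst' hρ₀.le
      linarith
    have hvy := S.v_le_H x y ht0
    rw [← hr] at hvy
    have hsH : √(HH u v x t₁) ≤ √K * Real.exp D := by
      refine Real.sqrt_le_iff.2 ⟨by positivity, ?_⟩
      rw [mul_pow, Real.sq_sqrt hK0.le, ← Real.exp_nat_mul]
      exact_mod_cast hH x
    have h1 : v x ≤ √(HH u v x t₁) * Real.exp (-4 * r) := by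
      have h2 : v x * Real.exp (5 * r) ≤ √(HH u v x t₁) * Real.exp (-4 * r) * Real.exp (5 * r) := by
        rw [mul_assoc, ← Real.exp_add]
        refine (hy2.trans hvy).trans (le_of_eq ?_)
        congr 2; ring
      exact le_of_mul_le_mul_right h2 (Real.exp_pos _)
    calc v x ≤ √(HH u v x t₁) * Real.exp (-4 * r) := h1
      _ ≤ √K * Real.exp D * Real.exp (-4 * r) :=
        mul_le_mul_of_nonneg_right hsH (Real.exp_pos _).le
      _ ≤ √K * (Real.exp (4 * ρ₀) * Real.exp (-3 * D)) := by
        rw [mul_assoc, ← Real.exp_add, ← Real.exp_add]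
        exact mul_le_mul_of_nonneg_left (Real.exp_le_exp.2 (by linarith)) (Real.sqrt_nonneg _)
      _ = _ := by ring
  have hA0 : 0 < √K * Real.exp (4 * ρ₀) := mul_pos (Real.sqrt_pos.2 hK0) (Real.exp_pos _)
  refine ⟨t₁, K + √K * Real.exp (4 * ρ₀), ht₁1, by positivity, ?_, ?_, ?_⟩
  · intro x
    exact (hH x).trans (mul_le_mul_of_nonneg_right (by linarith) (Real.exp_pos _).le)
  · intro x hx
    exact (main u v S hκ hH x hx).trans
      (mul_le_mul_of_nonneg_right (by linarith) (Real.exp_pos _).le)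
  · intro x hx
    have := main v u S.symm (fun y => by rw [HH_symm]; exact hκ y)
      (fun x => by rw [HH_symm, dI_symm]; exact hH x) x hx
    rw [dI_symm] at this
    exact this.trans (mul_le_mul_of_nonneg_right (by linarith) (Real.exp_pos _).le)

/-- Caccioppoli with the Gaussian weight. -/
lemma gi_gs_le (S : Sol u v) (x : Euc n) {t : ℝ} (ht : 0 < t) :
    gi (gs v) x t ≤ gi (fun z => v z ^ 2 * (‖z - x‖ ^ 2 / (8 * t ^ 2))) x t := by
  have hpd : ∀ j z, pd j (fun z => v z ^ 2) z = 2 * v z * pd j v z := fun j z =>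
    pd_sq j (smooth_diff S.hv z)
  have hl : lap (fun z => v z ^ 2) = fun z => 2 * gs v z + 2 * (u z ^ 2 * v z ^ 2) := by
    funext z
    rw [lap_eq]
    have h : ∀ j, pd j (pd j (fun z => v z ^ 2)) z
        = 2 * pd j v z ^ 2 + 2 * v z * pd j (pd j v) z := by
      intro j
      rw [show pd j (fun z => v z ^ 2) = fun z => 2 * v z * pd j v z from funext fun z => hpd j z]
      have dv := smooth_diff S.hv z
      have dpv := smooth_diff (pd_contDiff j S.hv) z
      rw [pd_mul j (dv.const_mul 2) dpv, pd_const_mul j 2 dv]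
      ring
    simp only [h, Finset.sum_add_distrib, ← Finset.mul_sum]
    rw [← lap_eq, S.ev]
    unfold gs
    ring
  have hp : ∀ j, GI (pd j (fun z => v z ^ 2)) := by
    intro j
    rw [show pd j (fun z => v z ^ 2) = fun z => 2 * v z * pd j v z from funext fun z => hpd j z]
    exact (S.GIpv j).SG_mul (S.SGv.const_mul 2)
  have hv2 : SG (fun z => v z ^ 2) := S.SGv.pow 2
  have h1 := gi_hasDerivAt_lap (S.hv.pow 2) hv2.gi hp
    (by rw [hl]; exact (S.GIgv.const_mul 2).add (S.SGP.gi.const_mul 2)) x ht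
  have h2 := gi_hasDerivAt hv2.gi hv2.continuous x ht
  have h3 := h1.unique h2
  rw [hl, gi_add (S.GIgv.const_mul 2) (S.SGP.gi.const_mul 2) x ht, gi_const_mul, gi_const_mul]
    at h3
  have h4 : 0 ≤ gi (fun z => u z ^ 2 * v z ^ 2) x t := gi_nonneg x ht fun z => by positivity
  have hn2 : SG (fun z : Euc n => ‖z - x‖ ^ 2) := (SG.norm_sub x).pow 2
  have hw : ∀ a b : ℝ, SG (fun z : Euc n => ‖z - x‖ ^ 2 / a - b) := by
    intro a b
    simpa only [div_eq_inv_mul] using (hn2.const_mul a⁻¹).sub (SG.const b)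
  have hw0 : SG (fun z : Euc n => ‖z - x‖ ^ 2 / (8 * t ^ 2)) := by
    simpa using hw (8 * t ^ 2) 0
  have h5 : gi (fun z => v z ^ 2 * (‖z - x‖ ^ 2 / (4 * t ^ 2) - n / (2 * t))) x t ≤
      gi (fun z => 2 * (v z ^ 2 * (‖z - x‖ ^ 2 / (8 * t ^ 2)))) x t := by
    refine gi_mono (hv2.mul (hw _ _)).gi ((hv2.mul hw0).const_mul 2).gi x ht fun z => ?_
    have e : 2 * (v z ^ 2 * (‖z - x‖ ^ 2 / (8 * t ^ 2))) =
        v z ^ 2 * (‖z - x‖ ^ 2 / (4 * t ^ 2)) := by field_simp; ring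
    rw [e]
    refine mul_le_mul_of_nonneg_left ?_ (sq_nonneg _)
    have : 0 ≤ (n : ℝ) / (2 * t) := by positivity
    linarith
  rw [gi_const_mul] at h5
  linarith

/-- The Gaussian mean of `|∇u||∇v|` at scale `t₁` decays exponentially away from the interface. -/
lemma grad_decay (S : Sol u v) {x₀ : Euc n} (hx₀ : u x₀ = v x₀) : ∃ t₁ C : ℝ, 1 ≤ t₁ ∧ 0 < C ∧
    ∀ x, gi (fun z => √(gs u z) * √(gs v z)) x t₁ ≤ C * Real.exp (-2 * (dI u v x / √t₁)) := by
  obtain ⟨t, C, ht1, hC, hH, hv, hu⟩ := S.decay hx₀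
  have ht : 0 < t := by linarith
  have htp : 0 < √t := Real.sqrt_pos.2 ht
  have hE : 1 ≤ EE n 12 := EE_one_le (by norm_num)
  set C' := C + √C with hC'
  have hC'0 : 0 < C' := by positivity
  have main : ∀ (u v : Euc n → ℝ), Sol u v →
      (∀ x, HH u v x t ≤ C * Real.exp (2 * (dI u v x / √t))) →
      (∀ x, v x ≤ u x → v x ≤ C * Real.exp (-3 * (dI u v x / √t))) → ∀ x, v x ≤ u x →
      gi (fun z => √(gs u z) * √(gs v z)) x t ≤
        (C + C' ^ 2 * EE n 12) * Real.exp (-2 * (dI u v x / √t)) := by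
    intro u v S hH hv x hx
    set D := dI u v x / √t with hD
    have hpt : ∀ z, v z ≤ C' * Real.exp (-3 * D) * Real.exp (5 * (‖z - x‖ / √t)) := by
      intro z
      set r := ‖z - x‖ / √t with hr
      have hr0 : 0 ≤ r := by positivity
      rw [mul_assoc, ← Real.exp_add]
      rcases le_or_gt (v z) (u z) with hz | hz
      · have h1 : D ≤ dI u v z / √t + r := by
          rw [hD, hr, ← add_div]
          exact div_le_div_of_nonneg_right (dI_le_add u v x z) htp.le
        calc v z ≤ C * Real.exp (-3 * (dI u v z / √t)) := hv z hz
          _ ≤ C' * Real.exp (-3 * D + 5 * r) :=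
            mul_le_mul (by rw [hC']; linarith [Real.sqrt_nonneg C])
              (Real.exp_le_exp.2 (by linarith)) (Real.exp_pos _).le hC'0.le
      · have h1 : D ≤ r := div_le_div_of_nonneg_right (S.dI_le_of_cross hx hz.le) htp.le
        have hsH : √(HH u v x t) ≤ √C * Real.exp D := by
          refine Real.sqrt_le_iff.2 ⟨by positivity, ?_⟩
          rw [mul_pow, Real.sq_sqrt hC.le, ← Real.exp_nat_mul]
          exact_mod_cast hH x
        calc v z ≤ √(HH u v x t) * Real.exp r := S.v_le_H x z ht
          _ ≤ √C * Real.exp D * Real.exp r := mul_le_mul_of_nonneg_right hsH (Real.exp_pos _).le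
          _ = √C * Real.exp (D + r) := by rw [mul_assoc, ← Real.exp_add]
          _ ≤ C' * Real.exp (-3 * D + 5 * r) :=
            mul_le_mul (by rw [hC']; linarith) (Real.exp_le_exp.2 (by linarith))
              (Real.exp_pos _).le hC'0.le
    have hgv : gi (gs v) x t ≤ C' ^ 2 * Real.exp (-6 * D) * EE n 12 := by
      refine (S.gi_gs_le x ht).trans ?_
      have hn2 : SG (fun z : Euc n => (8 * t ^ 2)⁻¹ * ‖z - x‖ ^ 2) :=
        ((SG.norm_sub x).pow 2).const_mul _
      have hSG : SG (fun z : Euc n => v z ^ 2 * (‖z - x‖ ^ 2 / (8 * t ^ 2))) := by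
        simpa only [div_eq_inv_mul] using (S.SGv.pow 2).mul hn2
      refine gi_le_exp hSG.gi x ht _ 12 fun z => ?_
      set r := ‖z - x‖ / √t with hr
      have hr0 : 0 ≤ r := by positivity
      have h1 : ‖z - x‖ ^ 2 / (8 * t ^ 2) ≤ Real.exp (2 * r) := by
        have e : ‖z - x‖ ^ 2 / (8 * t ^ 2) = r ^ 2 / (8 * t) := by
          rw [hr, div_pow, Real.sq_sqrt ht.le]; field_simp
        have h2 := Real.quadratic_le_exp_of_nonneg (x := 2 * r) (by positivity)
        have h3 : r ^ 2 / (8 * t) ≤ r ^ 2 := div_le_self (sq_nonneg r) (by linarith)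
        rw [e]; nlinarith
      have h2 : v z ^ 2 ≤ C' ^ 2 * Real.exp (-6 * D) * Real.exp (10 * r) := by
        calc v z ^ 2 ≤ (C' * Real.exp (-3 * D) * Real.exp (5 * r)) ^ 2 :=
              pow_le_pow_left₀ (S.pv z).le (hpt z) 2
          _ = _ := by
            have e1 : Real.exp (-6 * D) = Real.exp (-3 * D) ^ 2 := by
              rw [← Real.exp_nat_mul]; congr 1; push_cast; ring
            have e2 : Real.exp (10 * r) = Real.exp (5 * r) ^ 2 := by
              rw [← Real.exp_nat_mul]; congr 1; push_cast; ring
            rw [e1, e2]; ring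
      calc v z ^ 2 * (‖z - x‖ ^ 2 / (8 * t ^ 2))
          ≤ C' ^ 2 * Real.exp (-6 * D) * Real.exp (10 * r) * Real.exp (2 * r) :=
            mul_le_mul h2 h1 (by positivity) (by positivity)
        _ = _ := by rw [mul_assoc, ← Real.exp_add]; congr 2; ring
    have hgu : gi (gs u) x t ≤ C * Real.exp (2 * D) := by
      have h1 : gi (gs u) x t ≤ DD u v x t := gi_mono S.GIgu S.GIed x ht fun z => by
        have := gs_nonneg v z
        have : 0 ≤ u z ^ 2 * v z ^ 2 := by positivity
        unfold ed; linarith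
      have h0 : 0 ≤ gi (gs u) x t := gi_nonneg x ht (gs_nonneg u)
      have h2 := S.D_le x ht
      have h3 := hH x
      nlinarith
    have cu := gs_continuous (smooth_one S.hu)
    have cv := gs_continuous (smooth_one S.hv)
    set m := Real.exp (-4 * D) with hm
    have hG : GI (fun z => m * gs u z + m⁻¹ * gs v z) :=
      (S.GIgu.const_mul _).add (S.GIgv.const_mul _)
    have hle : ∀ z, √(gs u z) * √(gs v z) ≤ m * gs u z + m⁻¹ * gs v z := by
      intro z
      have a0 := Real.sqrt_nonneg (gs u z)
      have b0 := Real.sqrt_nonneg (gs v z)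
      have ha := Real.sq_sqrt (gs_nonneg u z)
      have hb := Real.sq_sqrt (gs_nonneg v z)
      have hm0 : 0 < m := Real.exp_pos _
      rw [← ha, ← hb, Real.sqrt_sq a0, Real.sqrt_sq b0]
      set a := √(gs u z)
      set b := √(gs v z)
      have h1 : 0 ≤ m⁻¹ * (m * a - b) ^ 2 := by positivity
      have h2 : m⁻¹ * (m * a - b) ^ 2 = m * a ^ 2 + m⁻¹ * b ^ 2 - 2 * (a * b) := by
        field_simp; ring
      have h3 : 0 ≤ a * b := by positivity
      linarith
    have hGI : GI (fun z => √(gs u z) * √(gs v z)) :=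
      hG.mono (by fun_prop) fun z => by rw [abs_of_nonneg (by positivity)]; exact hle z
    calc gi (fun z => √(gs u z) * √(gs v z)) x t
        ≤ gi (fun z => m * gs u z + m⁻¹ * gs v z) x t := gi_mono hGI hG x ht hle
      _ = m * gi (gs u) x t + m⁻¹ * gi (gs v) x t := by
        rw [gi_add (S.GIgu.const_mul _) (S.GIgv.const_mul _) x ht, gi_const_mul, gi_const_mul]
      _ ≤ m * (C * Real.exp (2 * D)) + m⁻¹ * (C' ^ 2 * Real.exp (-6 * D) * EE n 12) :=
        add_le_add (mul_le_mul_of_nonneg_left hgu (Real.exp_pos _).le)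
          (mul_le_mul_of_nonneg_left hgv (inv_nonneg.2 (Real.exp_pos _).le))
      _ = C * (m * Real.exp (2 * D)) + C' ^ 2 * EE n 12 * (m⁻¹ * Real.exp (-6 * D)) := by ring
      _ = _ := by
        rw [hm, ← Real.exp_neg, ← Real.exp_add, ← Real.exp_add, add_mul]
        congr 3 <;> · congr 1; ring
  refine ⟨t, C + C' ^ 2 * EE n 12, ht1, by positivity, fun x => ?_⟩
  rcases le_total (v x) (u x) with hx | hx
  · exact main u v S hH hv x hx
  · have h := main v u S.symm (fun x => by rw [HH_symm, dI_symm]; exact hH x)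
      (fun x hx => by rw [dI_symm]; exact hu x hx) x hx
    rw [dI_symm] at h
    simpa only [mul_comm] using h

end Sol

end Decay

/-! ### Integration over balls -/

section Final

variable {n : ℕ}

lemma tonelli {f W k : Euc n → ℝ} (hf : Continuous f) (hW : Continuous W) (hk : Continuous k) :
    ∫⁻ x, ENNReal.ofReal (W x) * ∫⁻ z, ENNReal.ofReal (f z) * ENNReal.ofReal (k (z - x)) =
      ∫⁻ z, ENNReal.ofReal (f z) * ∫⁻ x, ENNReal.ofReal (W x) * ENNReal.ofReal (k (z - x)) := by
  simp_rw [← lintegral_const_mul' _ _ ENNReal.ofReal_ne_top]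
  rw [lintegral_lintegral_swap]
  · refine lintegral_congr fun z => lintegral_congr fun x => ?_
    ring
  · refine Measurable.aemeasurable ?_
    have h1 : Measurable fun p : Euc n × Euc n => W p.1 := (hW.comp continuous_fst).measurable
    have h2 : Measurable fun p : Euc n × Euc n => f p.2 := (hf.comp continuous_snd).measurable
    have h3 : Measurable fun p : Euc n × Euc n => k (p.2 - p.1) :=
      (hk.comp (continuous_snd.sub continuous_fst)).measurable
    exact h1.ennreal_ofReal.mul (h2.ennreal_ofReal.mul h3.ennreal_ofReal)

lemma exp_norm_integrable {k : ℝ} (hk : 0 < k) :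
    Integrable (fun z : Euc n => Real.exp (-(k * ‖z‖))) := by
  have h1 : Integrable (fun z : Euc n => (1 + ‖z‖) ^ (-((n : ℝ) + 1))) := by
    refine integrable_one_add_norm ?_
    rw [finrank_euclideanSpace_fin]; linarith
  set F := ((n + 1).factorial : ℝ) with hF
  have hF0 : 0 < F := by positivity
  refine (h1.const_mul (F * Real.exp k / k ^ (n + 1))).mono' (by fun_prop) (ae_of_all _ fun z => ?_)
  have hy : 0 ≤ ‖z‖ := norm_nonneg z
  rw [Real.norm_of_nonneg (Real.exp_pos _).le]
  have h2 := Real.pow_div_factorial_le_exp (k * (1 + ‖z‖)) (by positivity) (n + 1)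
  rw [← hF, div_le_iff₀ hF0, mul_pow] at h2
  have e : (1 + ‖z‖) ^ (-((n : ℝ) + 1)) = ((1 + ‖z‖) ^ (n + 1))⁻¹ := by
    rw [Real.rpow_neg (by positivity), ← Real.rpow_natCast]; push_cast; rfl
  rw [e, Real.exp_neg, ← div_eq_mul_inv, div_div, le_div_iff₀ (by positivity),
    inv_mul_le_iff₀ (Real.exp_pos _)]
  have e2 : Real.exp (k * (1 + ‖z‖)) = Real.exp k * Real.exp (k * ‖z‖) := by
    rw [← Real.exp_add]; congr 1; ring
  rw [e2] at h2
  linarith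

lemma exp_norm_lintegral (n : ℕ) {k : ℝ} (hk : 0 < k) : ∃ C > (0 : ℝ), ∀ x : Euc n,
    ∫⁻ z, ENNReal.ofReal (Real.exp (-(k * ‖z - x‖))) ≤ ENNReal.ofReal C := by
  set I := ∫ z : Euc n, Real.exp (-(k * ‖z‖)) with hI
  have hI0 : 0 ≤ I := integral_nonneg fun z => (Real.exp_pos _).le
  refine ⟨I + 1, by linarith, fun x => ?_⟩
  rw [lintegral_sub_right_eq_self (fun z : Euc n => ENNReal.ofReal (Real.exp (-(k * ‖z‖)))) x,
    ← ofReal_integral_eq_lintegral_ofReal (exp_norm_integrable hk)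
      (ae_of_all _ fun z => (Real.exp_pos _).le)]
  exact ENNReal.ofReal_le_ofReal (by linarith)

/-- A weight equal to `1` on the ball `B_R(x₀)` and decaying exponentially at rate `b` outside. -/
noncomputable def bw (b R : ℝ) (x₀ x : Euc n) : ℝ := Real.exp (-(b * max (‖x - x₀‖ - R) 0))

lemma bw_continuous (b R : ℝ) (x₀ : Euc n) : Continuous (bw b R x₀) := by
  unfold bw; fun_prop

lemma bw_pos (b R : ℝ) (x₀ x : Euc n) : 0 < bw b R x₀ x := Real.exp_pos _

lemma bw_le {b : ℝ} (hb : 0 ≤ b) (R : ℝ) (x₀ x z : Euc n) :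
    bw b R x₀ x ≤ bw b R x₀ z * Real.exp (b * ‖z - x‖) := by
  unfold bw
  rw [← Real.exp_add]
  refine Real.exp_le_exp.2 ?_
  have h1 : ‖z - x₀‖ ≤ ‖z - x‖ + ‖x - x₀‖ := norm_sub_le_norm_sub_add_norm_sub _ _ _
  have h2 : max (‖z - x₀‖ - R) 0 ≤ max (‖x - x₀‖ - R) 0 + ‖z - x‖ := by
    refine max_le ?_ ?_
    · linarith [le_max_left (‖x - x₀‖ - R) 0]
    · have := le_max_right (‖x - x₀‖ - R) 0
      positivity
  have := mul_le_mul_of_nonneg_left h2 hb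
  linarith

lemma bw_eq_one (b R : ℝ) (x₀ : Euc n) {x : Euc n} (h : ‖x - x₀‖ ≤ R) : bw b R x₀ x = 1 := by
  unfold bw; rw [max_eq_right (by linarith)]; simp

lemma bw_le_sum {b R : ℝ} (hb : 0 ≤ b) (hR : 0 < R) (x₀ x : Euc n) :
    bw b R x₀ x ≤ Real.exp 1 * Real.exp (-(‖x - x₀‖ ^ 2 / (4 * R ^ 2))) +
      Real.exp (-(b / 2 * ‖x - x₀‖)) := by
  set r := ‖x - x₀‖ with hr
  have hr0 : 0 ≤ r := norm_nonneg _
  have p1 := Real.exp_pos (-(b / 2 * r))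
  rcases le_or_gt r (2 * R) with h | h
  · have h1 : bw b R x₀ x ≤ 1 := by
      unfold bw
      rw [Real.exp_le_one_iff, neg_nonpos]
      exact mul_nonneg hb (le_max_right _ _)
    have h2 : 1 ≤ Real.exp 1 * Real.exp (-(r ^ 2 / (4 * R ^ 2))) := by
      rw [← Real.exp_add]
      refine Real.one_le_exp ?_
      have : r ^ 2 / (4 * R ^ 2) ≤ 1 := by
        rw [div_le_one (by positivity)]; nlinarith
      linarith
    linarith
  · have h1 : bw b R x₀ x ≤ Real.exp (-(b / 2 * r)) := by
      unfold bw
      refine Real.exp_le_exp.2 (neg_le_neg ?_)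
      have h3 : r / 2 ≤ max (‖x - x₀‖ - R) 0 := by
        have := le_max_left (‖x - x₀‖ - R) 0
        rw [← hr] at this ⊢; linarith
      have := mul_le_mul_of_nonneg_left h3 hb
      linarith
    have h2 : 0 ≤ Real.exp 1 * Real.exp (-(r ^ 2 / (4 * R ^ 2))) := by positivity
    linarith

lemma bw_conv (n : ℕ) {b : ℝ} (hb : 0 < b) : ∃ C > (0 : ℝ), ∀ (R : ℝ) (x₀ z : Euc n),
    ∫⁻ x, ENNReal.ofReal (bw b R x₀ x) * ENNReal.ofReal (Real.exp (-(2 * b * ‖z - x‖))) ≤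
      ENNReal.ofReal C * ENNReal.ofReal (bw b R x₀ z) := by
  obtain ⟨C, hC, h⟩ := exp_norm_lintegral n hb
  refine ⟨C, hC, fun R x₀ z => ?_⟩
  calc ∫⁻ x, ENNReal.ofReal (bw b R x₀ x) * ENNReal.ofReal (Real.exp (-(2 * b * ‖z - x‖)))
      ≤ ∫⁻ x, ENNReal.ofReal (bw b R x₀ z) * ENNReal.ofReal (Real.exp (-(b * ‖x - z‖))) := by
        refine lintegral_mono fun x => ?_
        rw [← ENNReal.ofReal_mul (bw_pos _ _ _ _).le, ← ENNReal.ofReal_mul (bw_pos _ _ _ _).le]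
        refine ENNReal.ofReal_le_ofReal ?_
        calc bw b R x₀ x * Real.exp (-(2 * b * ‖z - x‖))
            ≤ bw b R x₀ z * Real.exp (b * ‖z - x‖) * Real.exp (-(2 * b * ‖z - x‖)) :=
              mul_le_mul_of_nonneg_right (bw_le hb.le R x₀ x z) (Real.exp_pos _).le
          _ = _ := by
            rw [mul_assoc, ← Real.exp_add, norm_sub_rev x z]; congr 2; ring
    _ = ENNReal.ofReal (bw b R x₀ z) * ∫⁻ x, ENNReal.ofReal (Real.exp (-(b * ‖x - z‖))) :=
        lintegral_const_mul' _ _ ENNReal.ofReal_ne_top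
    _ ≤ _ := by rw [mul_comm]; gcongr; exact h z

lemma bw_le_conv (n : ℕ) {b t : ℝ} (hb : 0 < b) (ht : 0 < t) :
    ∃ c > (0 : ℝ), ∀ (R : ℝ) (x₀ z : Euc n), ENNReal.ofReal c * ENNReal.ofReal (bw b R x₀ z) ≤
      ∫⁻ x, ENNReal.ofReal (bw b R x₀ x) * ENNReal.ofReal (gk t (z - x)) := by
  have hS : SG (fun z : Euc n => Real.exp (-b * ‖z - 0‖)) := SG.exp_norm_sub (-b) 0
  set c := gi (fun z : Euc n => Real.exp (-b * ‖z - 0‖)) 0 t with hc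
  have hc0 : 0 < c := gi_pos hS.gi hS.continuous 0 ht fun z => Real.exp_pos _
  refine ⟨c, hc0, fun R x₀ z => ?_⟩
  have e : ENNReal.ofReal c =
      ∫⁻ x, ENNReal.ofReal (Real.exp (-b * ‖(z - x) - 0‖) * gk t ((z - x) - 0)) := by
    rw [lintegral_sub_left_eq_self
      (fun y : Euc n => ENNReal.ofReal (Real.exp (-b * ‖y - 0‖) * gk t (y - 0))) z, hc]
    exact ofReal_integral_eq_lintegral_ofReal (hS.gi.integrable ht 0)
      (ae_of_all _ fun y => (mul_pos (Real.exp_pos _) (gk_pos ht _)).le)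
  rw [e, mul_comm, ← lintegral_const_mul' _ _ ENNReal.ofReal_ne_top]
  refine lintegral_mono fun x => ?_
  rw [← ENNReal.ofReal_mul (bw_pos _ _ _ _).le, ← ENNReal.ofReal_mul (bw_pos _ _ _ _).le]
  refine ENNReal.ofReal_le_ofReal ?_
  simp only [sub_zero]
  rw [← mul_assoc]
  refine mul_le_mul_of_nonneg_right ?_ (gk_pos ht _).le
  calc bw b R x₀ z * Real.exp (-b * ‖z - x‖)
      ≤ bw b R x₀ x * Real.exp (b * ‖x - z‖) * Real.exp (-b * ‖z - x‖) :=
        mul_le_mul_of_nonneg_right (bw_le hb.le R x₀ z x) (Real.exp_pos _).le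
    _ = _ := by rw [mul_assoc, ← Real.exp_add, norm_sub_rev x z]; simp

namespace Sol

variable {u v : Euc n → ℝ}

/-- The interaction density `Δ(u + v) = u v² + v u²`. -/
noncomputable def ia (u v : Euc n → ℝ) (z : Euc n) : ℝ := u z * v z ^ 2 + v z * u z ^ 2

lemma SG_ia (S : Sol u v) : SG (ia u v) := S.SG_inter.add S.SG_inter'

lemma ia_pos (S : Sol u v) (z : Euc n) : 0 < ia u v z := by
  have := S.pu z; have := S.pv z; unfold ia; positivity

lemma sum_deriv (S : Sol u v) (x : Euc n) {t : ℝ} (ht : 0 < t) :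
    HasDerivAt (fun t => gi u x t + gi v x t) (gi (ia u v) x t) t := by
  have h : gi (ia u v) x t = gi (fun z => u z * v z ^ 2) x t + gi (fun z => v z * u z ^ 2) x t :=
    gi_add S.SG_inter.gi S.SG_inter'.gi x ht
  rw [h]
  exact (S.A_deriv x ht).fun_add (S.symm.A_deriv x ht)

lemma A_le_sqrtH (S : Sol u v) (x : Euc n) {t : ℝ} (ht : 0 < t) : gi u x t ≤ √(HH u v x t) := by
  refine Real.le_sqrt_of_sq_le ((gi_sq_le S.SGu.continuous (S.SGu.pow 2).gi x ht).trans ?_)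
  rw [S.H_eq x ht]
  have : 0 ≤ gi (fun z => v z ^ 2) x t := gi_nonneg x ht fun z => sq_nonneg _
  linarith

/-- The interaction is bounded below, in an exponentially weighted sense, near the interface. -/
lemma ia_lower (S : Sol u v) {x₀ : Euc n} (hx₀ : u x₀ = v x₀) {a : ℝ} (ha : 0 < a) :
    ∃ C > (0 : ℝ), ∀ x, ENNReal.ofReal (Real.exp (-(a * dI u v x))) ≤
      ENNReal.ofReal C *
        ∫⁻ z, ENNReal.ofReal (ia u v z) * ENNReal.ofReal (Real.exp (-(a * ‖z - x‖))) := by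
  obtain ⟨K, hK, hup⟩ := S.H_le_lin
  obtain ⟨c, hc, hlo⟩ := S.H_ge_lin hx₀
  have hE : 1 ≤ EE n 3 := EE_one_le (by norm_num)
  -- a time at which the mean of `u + v` exceeds its value at time `1` by at least `1`
  set q := 8 * EE n 3 * (2 * √K + 1) with hq
  have hq0 : 0 < q := by positivity
  set t := 2 + q ^ 2 / c with ht
  have hqc : 0 < q ^ 2 / c := by positivity
  have ht1 : 1 < t := by linarith
  have ht0 : 0 < t := by linarith
  set E := Real.exp (a ^ 2 * t) with hEd
  have hE0 : 0 < E := Real.exp_pos _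
  refine ⟨(t - 1) * E, mul_pos (by linarith) hE0, fun x => ?_⟩
  obtain ⟨y, hy, hd⟩ := S.exists_nearest hx₀ x
  have hS : 1 ≤ gi u y t + gi v y t - (gi u y 1 + gi v y 1) := by
    have h1 := S.sqrtH_le y ht0
    have h2 : q ≤ √(HH u v y t) := by
      refine Real.le_sqrt_of_sq_le ((le_trans ?_ (hlo y t ht0)))
      rw [ht, mul_add, mul_div_cancel₀ _ hc.ne']; linarith
    have h3 : 2 * √K + 1 ≤ gi u y t + gi v y t :=
      le_of_mul_le_mul_left (h2.trans h1) (by positivity)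
    have h4 : √(HH u v y 1) ≤ √K := Real.sqrt_le_sqrt (by simpa using hup y hy 1 le_rfl)
    have h5 := S.A_le_sqrtH y one_pos
    have h6 := S.symm.A_le_sqrtH y one_pos
    rw [HH_symm] at h6
    linarith
  obtain ⟨r, hr, hre⟩ := exists_hasDerivAt_eq_slope (fun t => gi u y t + gi v y t)
    (fun t => gi (ia u v) y t) ht1
    (fun s hs => (S.sum_deriv y (by linarith [hs.1])).continuousAt.continuousWithinAt)
    (fun s hs => S.sum_deriv y (by linarith [hs.1]))
  have hr0 : 0 < r := by linarith [hr.1]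
  have hg : 1 ≤ (t - 1) * gi (ia u v) y r := by
    rw [hre, mul_div_cancel₀ _ (sub_pos.2 ht1).ne']
    exact hS
  have hk : ∀ z, gk r (z - y) ≤ E * Real.exp (a * ‖x - y‖) * Real.exp (-(a * ‖z - x‖)) := by
    intro z
    have h1 : (4 * Real.pi * r) ^ (-(n : ℝ) / 2) ≤ 1 := by
      refine Real.rpow_le_one_of_one_le_of_nonpos ?_ ?_
      · nlinarith [Real.pi_gt_three, hr.1]
      · have : (0 : ℝ) ≤ n := Nat.cast_nonneg n
        linarith
    unfold gk
    refine (mul_le_of_le_one_left (Real.exp_pos _).le h1).trans ?_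
    rw [hEd, ← Real.exp_add, ← Real.exp_add]
    refine Real.exp_le_exp.2 ?_
    have h2 : ‖z - x‖ ≤ ‖z - y‖ + ‖x - y‖ := by
      rw [norm_sub_rev x y]; exact norm_sub_le_norm_sub_add_norm_sub _ _ _
    have h3 : ‖z - y‖ ^ 2 / (4 * t) ≤ ‖z - y‖ ^ 2 / (4 * r) :=
      div_le_div_of_nonneg_left (sq_nonneg _) (by positivity) (by linarith [hr.2])
    have h4 : a * ‖z - y‖ ≤ ‖z - y‖ ^ 2 / (4 * t) + a ^ 2 * t := by
      have e : ‖z - y‖ ^ 2 / (4 * t) + a ^ 2 * t - a * ‖z - y‖ =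
          (‖z - y‖ - 2 * a * t) ^ 2 / (4 * t) := by field_simp; ring
      have : 0 ≤ (‖z - y‖ - 2 * a * t) ^ 2 / (4 * t) := by positivity
      linarith
    have h5 := mul_le_mul_of_nonneg_left h2 ha.le
    linarith
  have hgl : ENNReal.ofReal (gi (ia u v) y r) ≤
      ENNReal.ofReal (E * Real.exp (a * ‖x - y‖)) *
        ∫⁻ z, ENNReal.ofReal (ia u v z) * ENNReal.ofReal (Real.exp (-(a * ‖z - x‖))) := by
    rw [← lintegral_const_mul' _ _ ENNReal.ofReal_ne_top]
    unfold gi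
    rw [ofReal_integral_eq_lintegral_ofReal (S.SG_ia.gi.integrable hr0 y)
      (ae_of_all _ fun z => (mul_pos (S.ia_pos z) (gk_pos hr0 _)).le)]
    refine lintegral_mono fun z => ?_
    rw [← ENNReal.ofReal_mul (S.ia_pos z).le, ← ENNReal.ofReal_mul (by positivity)]
    refine ENNReal.ofReal_le_ofReal ?_
    calc ia u v z * gk r (z - y)
        ≤ ia u v z * (E * Real.exp (a * ‖x - y‖) * Real.exp (-(a * ‖z - x‖))) :=
          mul_le_mul_of_nonneg_left (hk z) (S.ia_pos z).le
      _ = _ := by ring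
  set J := ∫⁻ z, ENNReal.ofReal (ia u v z) * ENNReal.ofReal (Real.exp (-(a * ‖z - x‖)))
  rw [hd]
  have hgi0 : 0 ≤ gi (ia u v) y r := gi_nonneg y hr0 fun z => (S.ia_pos z).le
  have ht10 : 0 ≤ t - 1 := by linarith
  calc ENNReal.ofReal (Real.exp (-(a * ‖x - y‖)))
      ≤ ENNReal.ofReal (Real.exp (-(a * ‖x - y‖)) * (t - 1) * gi (ia u v) y r) := by
        refine ENNReal.ofReal_le_ofReal ?_
        rw [mul_assoc]; exact le_mul_of_one_le_right (Real.exp_pos _).le hg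
    _ = ENNReal.ofReal (Real.exp (-(a * ‖x - y‖)) * (t - 1)) *
          ENNReal.ofReal (gi (ia u v) y r) :=
        ENNReal.ofReal_mul (by positivity)
    _ ≤ ENNReal.ofReal (Real.exp (-(a * ‖x - y‖)) * (t - 1)) *
          (ENNReal.ofReal (E * Real.exp (a * ‖x - y‖)) * J) := by gcongr
    _ = _ := by
        rw [← mul_assoc, ← ENNReal.ofReal_mul (by positivity)]
        congr 2
        have : Real.exp (-(a * ‖x - y‖)) * Real.exp (a * ‖x - y‖) = 1 := by
          rw [← Real.exp_add]; simp
        calc _ = (Real.exp (-(a * ‖x - y‖)) * Real.exp (a * ‖x - y‖)) * ((t - 1) * E) := by ring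
          _ = _ := by rw [this, one_mul]

/-- The Gaussian mean of the interaction at time `R²` around an interface point is `O(1/R)`: it is the
time derivative of the nondecreasing mean of `u + v`, which is `O(R)`. -/
lemma gi_ia_le (S : Sol u v) : ∃ C > (0 : ℝ), ∀ x₀, u x₀ = v x₀ → ∀ R, 1 ≤ R →
    gi (ia u v) x₀ (R ^ 2) ≤ C / R := by
  obtain ⟨K, hK, hup⟩ := S.H_le_lin
  have hE : 1 ≤ EE n 3 := EE_one_le (by norm_num)
  refine ⟨√K * EE n 3, by positivity, fun x₀ hx₀ R hR => ?_⟩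
  have hR0 : 0 < R := by linarith
  have ht : 0 < R ^ 2 := by positivity
  have hsR : √(R ^ 2) = R := Real.sqrt_sq hR0.le
  have hSG : SG (fun z => u z + v z) := S.SGu.add S.SGv
  have h1 := S.sum_deriv x₀ ht
  have h2 := gi_hasDerivAt hSG.gi hSG.continuous x₀ ht
  have h2' : HasDerivAt (fun t => gi u x₀ t + gi v x₀ t)
      (gi (fun z => (u z + v z) * (‖z - x₀‖ ^ 2 / (4 * (R ^ 2) ^ 2) - n / (2 * R ^ 2))) x₀ (R ^ 2))
      (R ^ 2) := by
    refine h2.congr_of_eventuallyEq ?_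
    filter_upwards [lt_mem_nhds ht] with s hs
    exact (gi_add S.SGu.gi S.SGv.gi x₀ hs).symm
  rw [h1.unique h2']
  have hw : SG (fun z : Euc n => ‖z - x₀‖ ^ 2 / (4 * (R ^ 2) ^ 2) - n / (2 * R ^ 2)) := by
    simpa only [div_eq_inv_mul] using
      (((SG.norm_sub x₀).pow 2).const_mul (4 * (R ^ 2) ^ 2)⁻¹).sub (SG.const _)
  have hsH : √(HH u v x₀ (R ^ 2)) ≤ √K * R := by
    refine Real.sqrt_le_iff.2 ⟨by positivity, ?_⟩
    rw [mul_pow, Real.sq_sqrt hK.le]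
    exact hup x₀ hx₀ (R ^ 2) (one_le_pow₀ hR)
  have h3 := gi_le_exp (hSG.mul hw).gi x₀ ht (√K / R) 3 fun z => by
    set r := ‖z - x₀‖ / √(R ^ 2) with hr
    have hr0 : 0 ≤ r := by positivity
    have hu1 := S.u_le_H x₀ z ht
    have hv1 := S.v_le_H x₀ z ht
    rw [← hr] at hu1 hv1
    have hs : u z + v z ≤ 2 * (√K * R) * Real.exp r := by
      have := mul_le_mul_of_nonneg_right hsH (Real.exp_pos r).le
      linarith
    have e1 : ‖z - x₀‖ ^ 2 / (4 * (R ^ 2) ^ 2) = r ^ 2 / (4 * R ^ 2) := by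
      rw [hr, hsR]; field_simp
    have h4 : ‖z - x₀‖ ^ 2 / (4 * (R ^ 2) ^ 2) - n / (2 * R ^ 2) ≤
        Real.exp (2 * r) / (4 * R ^ 2) := by
      have h5 := Real.quadratic_le_exp_of_nonneg (x := 2 * r) (by positivity)
      have h6 : r ^ 2 / (4 * R ^ 2) ≤ Real.exp (2 * r) / (4 * R ^ 2) :=
        div_le_div_of_nonneg_right (by nlinarith) (by positivity)
      have h7 : 0 ≤ (n : ℝ) / (2 * R ^ 2) := by positivity
      rw [e1]; linarith
    have hu0 := S.pu z
    have hv0 := S.pv z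
    calc (u z + v z) * (‖z - x₀‖ ^ 2 / (4 * (R ^ 2) ^ 2) - n / (2 * R ^ 2))
        ≤ (u z + v z) * (Real.exp (2 * r) / (4 * R ^ 2)) :=
          mul_le_mul_of_nonneg_left h4 (by positivity)
      _ ≤ 2 * (√K * R) * Real.exp r * (Real.exp (2 * r) / (4 * R ^ 2)) :=
          mul_le_mul_of_nonneg_right hs (by positivity)
      _ = √K / R * (Real.exp r * Real.exp (2 * r)) / 2 := by field_simp; norm_num
      _ ≤ √K / R * (Real.exp r * Real.exp (2 * r)) := half_le_self (by positivity)
      _ = _ := by rw [← Real.exp_add]; congr 2; ring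
  refine h3.trans (le_of_eq ?_)
  ring

/-- The weighted interaction integral grows at most like `R^{n-1}`. -/
lemma ia_upper (S : Sol u v) (hn : 1 ≤ n) {b : ℝ} (hb : 0 < b) : ∃ C > (0 : ℝ),
    ∀ x₀, u x₀ = v x₀ → ∀ R, 1 ≤ R →
    ∫⁻ z, ENNReal.ofReal (ia u v z) * ENNReal.ofReal (bw b R x₀ z) ≤
      ENNReal.ofReal (C * (R ^ n / R)) := by
  obtain ⟨C1, hC1, h1⟩ := S.gi_ia_le
  obtain ⟨K, hK, hup⟩ := S.H_le_lin
  obtain ⟨C2, hC2, h2⟩ := exp_norm_lintegral n (show 0 < b / 4 by positivity)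
  set T := 1 + (12 / b) ^ 2 with hT
  have hT1 : 1 ≤ T := by rw [hT]; linarith [sq_nonneg (12 / b)]
  have hT0 : 0 < T := by linarith
  have hbT : 3 / √T ≤ b / 4 := by
    have h3 : 12 / b ≤ √T := Real.le_sqrt_of_sq_le (by rw [hT]; linarith)
    rw [div_le_iff₀ (Real.sqrt_pos.2 hT0)]
    have := mul_le_mul_of_nonneg_left h3 (show 0 ≤ b / 4 by positivity)
    have e : b / 4 * (12 / b) = 3 := by field_simp; norm_num
    linarith
  set Q := √(K * T) with hQ
  have hQ0 : 0 < Q := Real.sqrt_pos.2 (by positivity)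
  set P := (4 * Real.pi) ^ ((n : ℝ) / 2) with hP
  have hP0 : 0 < P := by positivity
  refine ⟨Real.exp 1 * P * C1 + 2 * Q ^ 3 * C2, by positivity, fun x₀ hx₀ R hR => ?_⟩
  have hR0 : 0 < R := by linarith
  have hR2 : 0 < R ^ 2 := by positivity
  have hRn : 1 ≤ R ^ n / R := by
    rw [le_div_iff₀ hR0, one_mul]; exact le_self_pow₀ hR (by omega)
  -- the Gaussian part
  have hgk : ∀ z : Euc n, Real.exp (-(‖z - x₀‖ ^ 2 / (4 * R ^ 2))) =
      P * R ^ n * gk (R ^ 2) (z - x₀) := by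
    intro z
    unfold gk
    have e : (4 * Real.pi * R ^ 2) ^ (-(n : ℝ) / 2) = (P * R ^ n)⁻¹ := by
      rw [neg_div, Real.rpow_neg (by positivity), Real.mul_rpow (by positivity) (by positivity),
        ← hP]
      congr 2
      rw [← Real.rpow_natCast R 2, ← Real.rpow_mul hR0.le, ← Real.rpow_natCast R n]
      congr 1; push_cast; ring
    rw [e, ← mul_assoc, mul_inv_cancel₀ (by positivity), one_mul]
  have g1 : ∫⁻ z, ENNReal.ofReal (ia u v z) *
      ENNReal.ofReal (Real.exp 1 * Real.exp (-(‖z - x₀‖ ^ 2 / (4 * R ^ 2)))) ≤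
      ENNReal.ofReal (Real.exp 1 * P * C1 * (R ^ n / R)) := by
    calc _ = ∫⁻ z, ENNReal.ofReal (Real.exp 1 * (P * R ^ n)) *
          ENNReal.ofReal (ia u v z * gk (R ^ 2) (z - x₀)) := by
          refine lintegral_congr fun z => ?_
          rw [← ENNReal.ofReal_mul (S.ia_pos z).le, ← ENNReal.ofReal_mul (by positivity), hgk]
          congr 1; ring
      _ = ENNReal.ofReal (Real.exp 1 * (P * R ^ n)) *
          ENNReal.ofReal (gi (ia u v) x₀ (R ^ 2)) := by
          rw [lintegral_const_mul' _ _ ENNReal.ofReal_ne_top]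
          unfold gi
          rw [ofReal_integral_eq_lintegral_ofReal (S.SG_ia.gi.integrable hR2 x₀)
            (ae_of_all _ fun z => (mul_pos (S.ia_pos z) (gk_pos hR2 _)).le)]
      _ ≤ _ := by
          rw [← ENNReal.ofReal_mul (by positivity)]
          refine ENNReal.ofReal_le_ofReal ?_
          calc _ ≤ Real.exp 1 * (P * R ^ n) * (C1 / R) :=
                mul_le_mul_of_nonneg_left (h1 x₀ hx₀ R hR) (by positivity)
            _ = _ := by ring
  -- the far part
  have hia : ∀ z, ia u v z ≤ 2 * Q ^ 3 * Real.exp (b / 4 * ‖z - x₀‖) := by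
    intro z
    have hsH : √(HH u v x₀ T) ≤ Q := Real.sqrt_le_sqrt (hup x₀ hx₀ T hT1)
    set e := Real.exp (‖z - x₀‖ / √T) with he
    have he0 : 0 < e := Real.exp_pos _
    have hu1 : u z ≤ Q * e :=
      (S.u_le_H x₀ z hT0).trans (mul_le_mul_of_nonneg_right hsH he0.le)
    have hv1 : v z ≤ Q * e :=
      (S.v_le_H x₀ z hT0).trans (mul_le_mul_of_nonneg_right hsH he0.le)
    have hu0 := S.pu z
    have hv0 := S.pv z
    have h3 : u z * v z ^ 2 ≤ Q * e * (Q * e) ^ 2 :=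
      mul_le_mul hu1 (pow_le_pow_left₀ hv0.le hv1 2) (by positivity) (by positivity)
    have h4 : v z * u z ^ 2 ≤ Q * e * (Q * e) ^ 2 :=
      mul_le_mul hv1 (pow_le_pow_left₀ hu0.le hu1 2) (by positivity) (by positivity)
    have h5 : e ^ 3 ≤ Real.exp (b / 4 * ‖z - x₀‖) := by
      rw [he, ← Real.exp_nat_mul]
      refine Real.exp_le_exp.2 ?_
      have := mul_le_mul_of_nonneg_right hbT (norm_nonneg (z - x₀))
      refine le_trans (le_of_eq ?_) this
      push_cast; ring
    calc ia u v z ≤ Q * e * (Q * e) ^ 2 + Q * e * (Q * e) ^ 2 := add_le_add h3 h4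
      _ = 2 * Q ^ 3 * e ^ 3 := by ring
      _ ≤ _ := mul_le_mul_of_nonneg_left h5 (by positivity)
  have g2 : ∫⁻ z, ENNReal.ofReal (ia u v z) *
      ENNReal.ofReal (Real.exp (-(b / 2 * ‖z - x₀‖))) ≤
      ENNReal.ofReal (2 * Q ^ 3 * C2 * (R ^ n / R)) := by
    calc _ ≤ ∫⁻ z, ENNReal.ofReal (2 * Q ^ 3) *
          ENNReal.ofReal (Real.exp (-(b / 4 * ‖z - x₀‖))) := by
          refine lintegral_mono fun z => ?_
          rw [← ENNReal.ofReal_mul (S.ia_pos z).le, ← ENNReal.ofReal_mul (by positivity)]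
          refine ENNReal.ofReal_le_ofReal ?_
          refine (mul_le_mul_of_nonneg_right (hia z) (Real.exp_pos _).le).trans (le_of_eq ?_)
          rw [mul_assoc, ← Real.exp_add]; congr 2; ring
      _ = ENNReal.ofReal (2 * Q ^ 3) * ∫⁻ z, ENNReal.ofReal (Real.exp (-(b / 4 * ‖z - x₀‖))) :=
          lintegral_const_mul' _ _ ENNReal.ofReal_ne_top
      _ ≤ ENNReal.ofReal (2 * Q ^ 3) * ENNReal.ofReal C2 := by gcongr; exact h2 x₀
      _ ≤ _ := by
          rw [← ENNReal.ofReal_mul (by positivity)]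
          exact ENNReal.ofReal_le_ofReal (le_mul_of_one_le_right (by positivity) hRn)
  calc _ ≤ ∫⁻ z, (ENNReal.ofReal (ia u v z) *
        ENNReal.ofReal (Real.exp 1 * Real.exp (-(‖z - x₀‖ ^ 2 / (4 * R ^ 2)))) +
        ENNReal.ofReal (ia u v z) * ENNReal.ofReal (Real.exp (-(b / 2 * ‖z - x₀‖)))) := by
        refine lintegral_mono fun z => ?_
        rw [← mul_add, ← ENNReal.ofReal_add (by positivity) (by positivity)]
        gcongr
        exact bw_le_sum hb.le hR0 x₀ z
    _ = _ := by
        refine lintegral_add_left ?_ _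
        refine (S.SG_ia.continuous.measurable.ennreal_ofReal).mul (Measurable.ennreal_ofReal ?_)
        fun_prop
    _ ≤ _ := add_le_add g1 g2
    _ = _ := by
        rw [← ENNReal.ofReal_add (by positivity) (by positivity)]; congr 1; ring

/-- The weighted integral of `|∇u||∇v|` grows at most like `R^{n-1}`. -/
lemma grad_upper (S : Sol u v) (hn : 1 ≤ n) {x₁ : Euc n} (hx₁ : u x₁ = v x₁) :
    ∃ b C : ℝ, 0 < C ∧ ∀ x₀, u x₀ = v x₀ → ∀ R, 1 ≤ R →
    ∫⁻ z, ENNReal.ofReal (√(gs u z) * √(gs v z)) * ENNReal.ofReal (bw b R x₀ z) ≤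
      ENNReal.ofReal (C * (R ^ n / R)) := by
  obtain ⟨t, C1, ht1, hC1, h1⟩ := S.grad_decay hx₁
  have ht : 0 < t := by linarith
  have htp : 0 < √t := Real.sqrt_pos.2 ht
  set b := 1 / √t with hb
  have hb0 : 0 < b := by positivity
  obtain ⟨c, hc, h2⟩ := bw_le_conv n hb0 ht
  obtain ⟨C3, hC3, h3⟩ := S.ia_lower hx₁ (show 0 < 2 * b by positivity)
  obtain ⟨C4, hC4, h4⟩ := bw_conv n hb0
  obtain ⟨C5, hC5, h5⟩ := S.ia_upper hn hb0
  refine ⟨b, c⁻¹ * (C1 * C3 * C4 * C5), by positivity, fun x₀ hx₀ R hR => ?_⟩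
  have hR0 : 0 < R := by linarith
  set φ : Euc n → ℝ := fun z => √(gs u z) * √(gs v z) with hφ
  have cu := gs_continuous (smooth_one S.hu)
  have cv := gs_continuous (smooth_one S.hv)
  have hφc : Continuous φ := by fun_prop
  have hφ0 : ∀ z, 0 ≤ φ z := fun z => by positivity
  have hφG : GI φ := by
    refine (S.GIgu.add S.GIgv).mono hφc fun z => ?_
    rw [abs_of_nonneg (hφ0 z)]
    have ha := Real.sq_sqrt (gs_nonneg u z)
    have hb := Real.sq_sqrt (gs_nonneg v z)
    have := sq_nonneg (√(gs u z) - √(gs v z))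
    have := hφ0 z
    simp only [hφ] at this ⊢
    nlinarith
  have hWc := bw_continuous b R x₀
  have hkc : Continuous (fun y : Euc n => Real.exp (-(2 * b * ‖y‖))) := by fun_prop
  set W := bw b R x₀ with hW
  have s1 : ENNReal.ofReal c * ∫⁻ z, ENNReal.ofReal (φ z) * ENNReal.ofReal (W z) ≤
      ∫⁻ x, ENNReal.ofReal (W x) * ∫⁻ z, ENNReal.ofReal (φ z) * ENNReal.ofReal (gk t (z - x)) := by
    rw [tonelli hφc hWc (gk_continuous t), ← lintegral_const_mul' _ _ ENNReal.ofReal_ne_top]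
    refine lintegral_mono fun z => ?_
    calc _ = ENNReal.ofReal (φ z) * (ENNReal.ofReal c * ENNReal.ofReal (W z)) := by ring
      _ ≤ _ := by gcongr; exact h2 R x₀ z
  have s2 : ∀ x, ∫⁻ z, ENNReal.ofReal (φ z) * ENNReal.ofReal (gk t (z - x)) ≤
      ENNReal.ofReal (C1 * C3) *
        ∫⁻ z, ENNReal.ofReal (ia u v z) * ENNReal.ofReal (Real.exp (-(2 * b * ‖z - x‖))) := by
    intro x
    calc _ = ENNReal.ofReal (gi φ x t) := by
          unfold gi
          rw [ofReal_integral_eq_lintegral_ofReal (hφG.integrable ht x)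
            (ae_of_all _ fun z => mul_nonneg (hφ0 z) (gk_pos ht _).le)]
          refine lintegral_congr fun z => ?_
          rw [ENNReal.ofReal_mul (hφ0 z)]
      _ ≤ ENNReal.ofReal (C1 * Real.exp (-(2 * b * dI u v x))) := by
          refine ENNReal.ofReal_le_ofReal ((h1 x).trans (le_of_eq ?_))
          congr 2; rw [hb]; ring
      _ = ENNReal.ofReal C1 * ENNReal.ofReal (Real.exp (-(2 * b * dI u v x))) :=
          ENNReal.ofReal_mul hC1.le
      _ ≤ ENNReal.ofReal C1 * (ENNReal.ofReal C3 * ∫⁻ z, ENNReal.ofReal (ia u v z) *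
            ENNReal.ofReal (Real.exp (-(2 * b * ‖z - x‖)))) :=
          mul_le_mul_right (h3 x) _
      _ = _ := by rw [ENNReal.ofReal_mul hC1.le, mul_assoc]
  have s3 : ∫⁻ x, ENNReal.ofReal (W x) *
      ∫⁻ z, ENNReal.ofReal (φ z) * ENNReal.ofReal (gk t (z - x)) ≤
      ENNReal.ofReal (C1 * C3) * ∫⁻ x, ENNReal.ofReal (W x) *
        ∫⁻ z, ENNReal.ofReal (ia u v z) * ENNReal.ofReal (Real.exp (-(2 * b * ‖z - x‖))) := by
    rw [← lintegral_const_mul' _ _ ENNReal.ofReal_ne_top]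
    refine lintegral_mono fun x => ?_
    rw [mul_left_comm]
    gcongr
    exact s2 x
  have s4 : ∫⁻ x, ENNReal.ofReal (W x) *
      ∫⁻ z, ENNReal.ofReal (ia u v z) * ENNReal.ofReal (Real.exp (-(2 * b * ‖z - x‖))) ≤
      ENNReal.ofReal C4 * ENNReal.ofReal (C5 * (R ^ n / R)) := by
    rw [tonelli (k := fun y : Euc n => Real.exp (-(2 * b * ‖y‖))) S.SG_ia.continuous hWc hkc]
    calc _ ≤ ∫⁻ z, ENNReal.ofReal C4 * (ENNReal.ofReal (ia u v z) * ENNReal.ofReal (W z)) := by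
          refine lintegral_mono fun z => ?_
          rw [mul_left_comm]
          gcongr
          exact h4 R x₀ z
      _ = ENNReal.ofReal C4 * ∫⁻ z, ENNReal.ofReal (ia u v z) * ENNReal.ofReal (W z) :=
          lintegral_const_mul' _ _ ENNReal.ofReal_ne_top
      _ ≤ _ := by gcongr; exact h5 x₀ hx₀ R hR
  have s5 : ENNReal.ofReal c * ∫⁻ z, ENNReal.ofReal (φ z) * ENNReal.ofReal (W z) ≤
      ENNReal.ofReal (C1 * C3 * C4 * C5 * (R ^ n / R)) := by
    refine (s1.trans s3).trans ((mul_le_mul_right s4 _).trans (le_of_eq ?_))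
    rw [← ENNReal.ofReal_mul hC4.le, ← ENNReal.ofReal_mul (by positivity)]
    congr 1; ring
  calc ∫⁻ z, ENNReal.ofReal (φ z) * ENNReal.ofReal (W z)
      = ENNReal.ofReal c⁻¹ *
          (ENNReal.ofReal c * ∫⁻ z, ENNReal.ofReal (φ z) * ENNReal.ofReal (W z)) := by
        rw [← mul_assoc, ← ENNReal.ofReal_mul (by positivity), inv_mul_cancel₀ hc.ne']
        simp
    _ ≤ ENNReal.ofReal c⁻¹ * ENNReal.ofReal (C1 * C3 * C4 * C5 * (R ^ n / R)) := by gcongr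
    _ = _ := by rw [← ENNReal.ofReal_mul (by positivity)]; congr 1; ring

end Sol

/-! ### Rescaling -/

lemma norm_gradient (f : Euc n → ℝ) (x : Euc n) : ‖gradient f x‖ = √(gs f x) := by
  rw [EuclideanSpace.norm_eq]
  congr 1
  refine Finset.sum_congr rfl fun j _ => ?_
  have h : gradient f x j = pd j f x := by
    have h1 : (InnerProductSpace.toDual ℝ (Euc n)) (gradient f x) = fderiv ℝ f x := toDual_gradient
    unfold pd
    rw [← h1, InnerProductSpace.toDual_apply_apply, EuclideanSpace.inner_single_right]
    simp
  rw [h, Real.norm_eq_abs, sq_abs]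

lemma gs_resc {f : Euc n → ℝ} (hf : ContDiff ℝ (⊤ : ℕ∞) f) (x₀ : Euc n) {R : ℝ} (hR : 0 < R)
    (x : Euc n) : gs (resc f x₀ R) x = gs f (x₀ + R • x) := by
  unfold gs
  refine Finset.sum_congr rfl fun j _ => ?_
  have e : resc f x₀ R = fun x => R⁻¹ * f (R • x + x₀) := by
    funext x; unfold resc; rw [add_comm]
  have hd : DifferentiableAt ℝ (fun x => f (R • x + x₀)) x :=
    (smooth_diff hf _).comp x (by fun_prop)
  rw [e, pd_const_mul j R⁻¹ hd, pd_affine j R x₀ x (smooth_diff hf _), ← mul_assoc,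
    inv_mul_cancel₀ hR.ne', one_mul, add_comm x₀]

end Final

theorem gradient_product_of_rescaling (n : ℕ) (hn : 2 ≤ n)
    (u v : Euc n → ℝ)
    (hu : ContDiff ℝ (⊤ : ℕ∞) u) (hv : ContDiff ℝ (⊤ : ℕ∞) v)
    (hupos : ∀ x, 0 < u x) (hvpos : ∀ x, 0 < v x)
    (hequ : ∀ x, lap u x = u x * v x ^ 2)
    (heqv : ∀ x, lap v x = v x * u x ^ 2)
    (C₀ : ℝ) (hC₀ : 0 < C₀)
    (hgrowth : ∀ x, u x + v x ≤ C₀ * (1 + ‖x‖)) :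
    ∃ C > (0 : ℝ), ∀ x₀ : Euc n, u x₀ = v x₀ → ∀ R ≥ (1 : ℝ),
      ∫ x in ball (0 : Euc n) 1,
          ‖gradient (resc u x₀ R) x‖ * ‖gradient (resc v x₀ R) x‖
        ≤ C * (R ^ 4 : ℝ) ^ (-(1 : ℝ) / 4) := by
  have S : Sol u v := ⟨hu, hv, hupos, hvpos, hequ, heqv, C₀, hC₀, hgrowth⟩
  by_cases hI : ∃ x₁, u x₁ = v x₁
  swap
  · exact ⟨1, one_pos, fun x₀ hx₀ => absurd ⟨x₀, hx₀⟩ hI⟩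
  obtain ⟨x₁, hx₁⟩ := hI
  obtain ⟨b, C, hC, h⟩ := S.grad_upper (by omega) hx₁
  refine ⟨C, hC, fun x₀ hx₀ R hR => ?_⟩
  have hR1 : 1 ≤ R := hR
  have hR0 : 0 < R := by linarith
  have hk := h x₀ hx₀ R hR1
  set φ : Euc n → ℝ := fun z => √(gs u z) * √(gs v z) with hφ
  have cu := gs_continuous (smooth_one hu)
  have cv := gs_continuous (smooth_one hv)
  have hφc : Continuous φ := by fun_prop
  have hφ0 : ∀ z, 0 ≤ φ z := fun z => by positivity
  have e1 : ∫ x in ball (0 : Euc n) 1,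
      ‖gradient (resc u x₀ R) x‖ * ‖gradient (resc v x₀ R) x‖ =
      ∫ x in ball (0 : Euc n) 1, φ (x₀ + R • x) := by
    refine integral_congr_ae (ae_of_all _ fun x => ?_)
    simp only [norm_gradient, gs_resc hu x₀ hR0, gs_resc hv x₀ hR0, hφ]
  rw [e1, Measure.setIntegral_comp_smul_of_pos volume (fun x => φ (x₀ + x)) _ hR0,
    smul_unitBall_of_pos hR0, finrank_euclideanSpace_fin]
  have e2 : (R ^ 4 : ℝ) ^ (-(1 : ℝ) / 4) = R⁻¹ := by
    rw [← Real.rpow_natCast, ← Real.rpow_mul hR0.le, ← Real.rpow_neg_one]; congr 1; norm_num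
  have h2 : ∫ x in ball (0 : Euc n) R, φ (x₀ + x) ≤ C * (R ^ n / R) := by
    rw [integral_eq_lintegral_of_nonneg_ae (ae_of_all _ fun x => hφ0 _)
      (by fun_prop)]
    refine ENNReal.toReal_le_of_le_ofReal (by positivity) (le_trans ?_ hk)
    calc ∫⁻ x in ball (0 : Euc n) R, ENNReal.ofReal (φ (x₀ + x))
        = ∫⁻ x in ball (0 : Euc n) R,
            ENNReal.ofReal (φ (x₀ + x)) * ENNReal.ofReal (bw b R x₀ (x₀ + x)) := by
          refine setLIntegral_congr_fun measurableSet_ball fun x hx => ?_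
          have hx' : ‖x₀ + x - x₀‖ ≤ R := by
            rw [add_sub_cancel_left]; exact (mem_ball_zero_iff.1 hx).le
          simp only [bw_eq_one b R x₀ hx', ENNReal.ofReal_one, mul_one]
      _ ≤ ∫⁻ x, ENNReal.ofReal (φ (x₀ + x)) * ENNReal.ofReal (bw b R x₀ (x₀ + x)) :=
          setLIntegral_le_lintegral _ _
      _ = _ := lintegral_add_left_eq_self
          (fun z => ENNReal.ofReal (φ z) * ENNReal.ofReal (bw b R x₀ z)) x₀
  rw [smul_eq_mul, e2]
  calc (R ^ n)⁻¹ * ∫ x in ball (0 : Euc n) R, φ (x₀ + x)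
      ≤ (R ^ n)⁻¹ * (C * (R ^ n / R)) := mul_le_mul_of_nonneg_left h2 (by positivity)
    _ = C * R⁻¹ := by field_simp
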